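/- Let (W,W',G) be a g-Stein coupling, i.e., E(G·f(W') − G·f(W)) = E(f(W)g(W)) for all absolutely continuous functions f for which both expectations exist, with |W'−W| ≤ δ, where g satisfies (A1)–(A4). Set K̂₁ = ∫_{|t|≤δ} G(I(0≤t≤W'−W)−I(W'−W≤t<0)) dt and assume K̂₁ ≥ 0. Assume there exist τ₁>0 and δ₁>0 with |E(K̂₁|W)−1| ≤ δ₁(|g(W)|^{τ₁}+1), and constants d₀≥1, d₁>0 with E(K̂₁|W) ≤ d₀ and δ|g(W)| ≤ d₁. Then there is a finite constant C, depending only on d₀, d₁, c₁, c₂, c₃, τ₁ and max(g(1),|g(−1)|), such that for every z ≥ 0 with δ·z·g(z)² + δ₁·z·g(z)^{τ₁+1} ≤ 1, |P(W>z)/P(Y>z) − 1| ≤ C·( δ(1+z·g(z)²) + δ₁(1+z·g(z)^{τ₁+1}) ). -/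

import Mathlib

open MeasureTheory Real

/-- Conditions (A1)–(A4) on the function `g`. -/
structure GCond (g : ℝ → ℝ) (c₂ c₃ : ℝ) : Prop where
  diff : Differentiable ℝ g
  mono : Monotone g
  zero : g 0 = 0
  sign : ∀ y : ℝ, y ≠ 0 → 0 < y * g y
  c₂pos : 0 < c₂
  subadd : ∀ x y : ℝ, |g (x + y)| ≤ c₂ * (|g x| + |g y| + 1)
  c₃ge : 1 ≤ c₃
  derivBound : ∀ y : ℝ, |deriv g y| ≤ c₃ * (1 + |g y|) / (1 + |y|)

/-- `G(y) = ∫₀^y g`. -/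
noncomputable def Gfun (g : ℝ → ℝ) (y : ℝ) : ℝ := ∫ t in (0:ℝ)..y, g t

/-- The density `p(y) = c₁ e^{-G(y)}`. -/
noncomputable def pfun (g : ℝ → ℝ) (c₁ y : ℝ) : ℝ := c₁ * Real.exp (-(Gfun g y))

/-- `(W, W', G)` is a `g`-Stein coupling:
`E(G f(W') - G f(W)) = E(f(W) g(W))` for all absolutely continuous `f`
for which both expectations exist. -/
def SteinCoupling {Ω : Type} [MeasurableSpace Ω] (μ : Measure Ω)
    (W W' Gv : Ω → ℝ) (g : ℝ → ℝ) : Prop :=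
  ∀ f : ℝ → ℝ, Differentiable ℝ f →
    Integrable (fun ω => Gv ω * f (W' ω) - Gv ω * f (W ω)) μ →
    Integrable (fun ω => f (W ω) * g (W ω)) μ →
    ∫ ω, (Gv ω * f (W' ω) - Gv ω * f (W ω)) ∂μ = ∫ ω, f (W ω) * g (W ω) ∂μ

/-- `K̂₁ = ∫_{|t|≤δ} G (I(0 ≤ t ≤ W'-W) - I(W'-W ≤ t < 0)) dt` for Stein couplings. -/
noncomputable def KhatOneSC {Ω : Type} (W W' Gv : Ω → ℝ) (δ : ℝ) (ω : Ω) : ℝ :=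
  ∫ t in (-δ)..δ,
    Gv ω * ((if 0 ≤ t ∧ t ≤ W' ω - W ω then (1:ℝ) else 0)
      - (if W' ω - W ω ≤ t ∧ t < 0 then (1:ℝ) else 0))

/-!
Write `r x = E(g(W); W > x)`. Applied to an antiderivative of a test function `φ`, the Stein
identity says `E(K̂₁ φ(W + U(W' - W))) = ∫ φ r` with `U` uniform on `[0, 1]`: weighting the law of
`W` by `E(K̂₁ | W) ≈ 1` and moving mass by at most `δ` produces the measure with density `r`. If
nothing were moved or reweighted, then `r' = -g r`, so that `r = r(0) e^{-G}`, and `P(W > z) =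
∫_z^∞ r = r(z) m(z)` with `m` the Mills ratio of `e^{-G}`.

The test functions `g e^G` on `(0, z]` and `1 - g m = -m'` on `(z, ∞)` turn these two heuristics
into bounds on the relative error, given moment bounds for the law of `W` with the weight `e^G`.
Those moment bounds start from an a priori bound on `r` with a slightly smaller weight `e^{lG}`,
`l < 1`, where the lowered exponent pays for moving and reweighting the mass. Finally `W` and `-W`
share the value `r(0)`, and their tails at `0` add up to `1`, which gives `r(0) ≈ c₁`.
-/

section Potential

variable {g : ℝ → ℝ}

lemma Gfun_zero (g : ℝ → ℝ) : Gfun g 0 = 0 := intervalIntegral.integral_same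

lemma hasDerivAt_Gfun (hg : Continuous g) (x : ℝ) : HasDerivAt (Gfun g) (g x) x :=
  intervalIntegral.integral_hasDerivAt_right (hg.intervalIntegrable _ _)
    (hg.stronglyMeasurableAtFilter _ _) hg.continuousAt

lemma continuous_Gfun (hg : Continuous g) : Continuous (Gfun g) :=
  continuous_iff_continuousAt.2 fun x => (hasDerivAt_Gfun hg x).continuousAt

lemma mul_sub_le_Gfun_sub (hg : Monotone g) (x y : ℝ) :
    g x * (y - x) ≤ Gfun g y - Gfun g x := by
  have hint : ∀ a b, IntervalIntegrable g volume a b := fun a b => hg.intervalIntegrable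
  rw [Gfun, Gfun, intervalIntegral.integral_interval_sub_left (hint 0 y) (hint 0 x)]
  rcases le_total x y with h | h
  · simpa [mul_comm] using intervalIntegral.integral_mono_on h
      (intervalIntegrable_const (c := g x)) (hint x y) fun t ht => hg ht.1
  · have := intervalIntegral.integral_mono_on h (hint y x)
      (intervalIntegrable_const (c := g x)) fun t ht => hg ht.2
    rw [intervalIntegral.integral_symm]
    simp only [intervalIntegral.integral_const, smul_eq_mul] at this
    linarith

lemma Gfun_neg_comp_neg (g : ℝ → ℝ) (x : ℝ) : Gfun (fun y => -g (-y)) x = Gfun g (-x) := by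
  simp only [Gfun, intervalIntegral.integral_neg, intervalIntegral.integral_comp_neg, neg_zero]
  rw [intervalIntegral.integral_symm, neg_neg]

end Potential

lemma integral_Ioc_exp_neg_sub_div_le {a b m : ℝ} (hab : a ≤ b) (hm : 0 < m) :
    ∫ x in Set.Ioc a b, exp (-(x - a) / m) ≤ m := by
  have hderiv : ∀ x ∈ Set.uIcc a b,
      HasDerivAt (fun x => -m * exp (-(x - a) / m)) (exp (-(x - a) / m)) x := fun x _ =>
    ((((hasDerivAt_id' x).sub_const a).neg.div_const m).exp.const_mul (-m)).congr_deriv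
      (by simp only [Pi.neg_apply]; field_simp)
  have hcont : Continuous fun x => exp (-(x - a) / m) := by fun_prop
  rw [← intervalIntegral.integral_of_le hab, intervalIntegral.integral_eq_sub_of_hasDerivAt hderiv
    (hcont.intervalIntegrable _ _), sub_self, neg_zero, zero_div, exp_zero]
  linarith [mul_pos hm (exp_pos (-(b - a) / m))]

lemma exists_one_add_rpow_le_mul_exp (a : ℝ) {l : ℝ} (ha : 0 ≤ a) (hl : 0 < l) :
    ∃ K, 0 < K ∧ ∀ s, 0 ≤ s → (1 + s) ^ a ≤ K * exp (s / l) := by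
  refine ⟨(1 + (a + 1) * l) ^ (a + 1), by positivity, fun s hs => ?_⟩
  have hlinear : 1 + s ≤ (1 + (a + 1) * l) * exp (s / ((a + 1) * l)) := by
    have h1 : 1 + s ≤ (1 + (a + 1) * l) * (s / ((a + 1) * l) + 1) := by
      have : 0 ≤ s / ((a + 1) * l) := by positivity
      have : (a + 1) * l * (s / ((a + 1) * l)) = s := by field_simp
      nlinarith
    exact h1.trans (by gcongr; exact add_one_le_exp _)
  calc (1 + s) ^ a ≤ (1 + s) ^ (a + 1) := rpow_le_rpow_of_exponent_le (by linarith) (by linarith)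
    _ ≤ ((1 + (a + 1) * l) * exp (s / ((a + 1) * l))) ^ (a + 1) := by gcongr
    _ = (1 + (a + 1) * l) ^ (a + 1) * exp (s / l) := by
        rw [mul_rpow (by positivity) (exp_pos _).le, ← exp_mul]
        congr 2
        field_simp

/-- A monotone drift `g` with `g 0 = 0` whose logarithmic derivative decays like `c₃ / |y|`:
conditions (A1) and (A4). -/
structure IsDrift (g : ℝ → ℝ) (c₃ : ℝ) : Prop where
  differentiable : Differentiable ℝ g
  monotone : Monotone g
  map_zero : g 0 = 0
  abs_deriv_le : ∀ y, |deriv g y| ≤ c₃ * (1 + |g y|) / (1 + |y|)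

namespace IsDrift

variable {g : ℝ → ℝ} {c₃ : ℝ}

lemma continuous (hg : IsDrift g c₃) : Continuous g := hg.differentiable.continuous

lemma nonneg (hg : IsDrift g c₃) {x : ℝ} (hx : 0 ≤ x) : 0 ≤ g x :=
  hg.map_zero ▸ hg.monotone hx

lemma nonpos (hg : IsDrift g c₃) {x : ℝ} (hx : x ≤ 0) : g x ≤ 0 :=
  hg.map_zero ▸ hg.monotone hx

lemma c₃_nonneg (hg : IsDrift g c₃) : 0 ≤ c₃ := by
  simpa [hg.map_zero] using (abs_nonneg _).trans (hg.abs_deriv_le 0)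

lemma neg_comp_neg (hg : IsDrift g c₃) : IsDrift (fun y => -g (-y)) c₃ where
  differentiable := (hg.differentiable.comp differentiable_neg).neg
  monotone _ _ h := neg_le_neg (hg.monotone (neg_le_neg h))
  map_zero := by simp [hg.map_zero]
  abs_deriv_le y := by
    have h : deriv (fun y => -g (-y)) y = deriv g (-y) := by
      rw [deriv.fun_neg, deriv_comp_neg, neg_neg]
    simpa [h] using hg.abs_deriv_le (-y)

lemma abs_deriv_le_of_nonneg (hg : IsDrift g c₃) {x : ℝ} (hx : 0 ≤ x) :
    |deriv g x| ≤ c₃ * (1 + g x) / (1 + x) := by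
  simpa only [abs_of_nonneg hx, abs_of_nonneg (hg.nonneg hx)] using hg.abs_deriv_le x

lemma abs_deriv_le_mul (hg : IsDrift g c₃) {x : ℝ} (hx : 0 ≤ x) :
    |deriv g x| ≤ c₃ * (1 + g x) :=
  (hg.abs_deriv_le_of_nonneg hx).trans <|
    div_le_self (mul_nonneg hg.c₃_nonneg (by linarith [hg.nonneg hx])) (by linarith)

lemma antitoneOn_one_add_mul_rpow (hg : IsDrift g c₃) :
    AntitoneOn (fun x => (1 + g x) * (1 + x) ^ (-c₃)) (Set.Ici 0) := by
  have hderiv : ∀ x, 0 ≤ x → HasDerivAt (fun x => (1 + g x) * (1 + x) ^ (-c₃))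
      (deriv g x * (1 + x) ^ (-c₃) + (1 + g x) * (1 * -c₃ * (1 + x) ^ (-c₃ - 1))) x := fun x hx =>
    ((hg.differentiable x).hasDerivAt.const_add 1).mul
      (((hasDerivAt_id' x).const_add 1).rpow_const (Or.inl (by linarith)))
  refine antitoneOn_of_deriv_nonpos (convex_Ici 0)
    (fun x hx => (hderiv x hx).continuousAt.continuousWithinAt)
    (fun x hx => (hderiv x (interior_subset hx)).differentiableAt.differentiableWithinAt)
    fun x hx => ?_
  have hx0 : 0 ≤ x := interior_subset hx
  rw [(hderiv x hx0).deriv, rpow_sub_one (by linarith)]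
  have hg' := mul_le_mul_of_nonneg_right
    ((le_abs_self _).trans (hg.abs_deriv_le_of_nonneg hx0))
    (rpow_nonneg (by linarith : 0 ≤ 1 + x) (-c₃))
  refine (add_le_add_left hg' _).trans (le_of_eq ?_)
  ring

lemma one_add_le_rpow_mul (hg : IsDrift g c₃) {x s : ℝ} (hx : 0 ≤ x) (hs : 0 ≤ s) :
    1 + g (x + s) ≤ (1 + s) ^ c₃ * (1 + g x) := by
  have hx1 : 0 < 1 + x := by linarith
  have hxs : 0 < 1 + (x + s) := by linarith
  have hgx := hg.nonneg hx
  have h := hg.antitoneOn_one_add_mul_rpow hx (add_nonneg hx hs : (0 : ℝ) ≤ x + s) (by linarith)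
  simp only [rpow_neg hx1.le, rpow_neg hxs.le, ← div_eq_mul_inv] at h
  rw [div_le_div_iff₀ (by positivity) (by positivity)] at h
  have hle : (1 + (x + s)) ^ c₃ ≤ (1 + s) ^ c₃ * (1 + x) ^ c₃ := by
    rw [← mul_rpow (by linarith) hx1.le]
    exact rpow_le_rpow hxs.le (by nlinarith) hg.c₃_nonneg
  refine le_of_mul_le_mul_right (h.trans ?_) (rpow_pos_of_pos hx1 c₃)
  nlinarith

lemma one_add_le_exp_mul (hg : IsDrift g c₃) {x y : ℝ} (hx : 0 ≤ x) (hxy : x ≤ y) :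
    1 + g y ≤ exp (c₃ * (y - x)) * (1 + g x) := by
  have hs : 0 ≤ y - x := sub_nonneg.2 hxy
  have hpow : (1 + (y - x)) ^ c₃ ≤ exp (c₃ * (y - x)) := by
    rw [mul_comm, exp_mul]
    exact rpow_le_rpow (by linarith) (by linarith [add_one_le_exp (y - x)]) hg.c₃_nonneg
  have := (hg.one_add_le_rpow_mul hx hs).trans
    (mul_le_mul_of_nonneg_right hpow (by linarith [hg.nonneg hx]))
  rwa [add_sub_cancel] at this

lemma one_add_le_exp (hg : IsDrift g c₃) {y : ℝ} (hy : 0 ≤ y) : 1 + g y ≤ exp (c₃ * y) := by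
  simpa [hg.map_zero] using hg.one_add_le_exp_mul le_rfl hy

lemma one_add_abs_le_exp (hg : IsDrift g c₃) (y : ℝ) : 1 + |g y| ≤ exp (c₃ * |y|) := by
  rcases le_total 0 y with hy | hy
  · simpa only [abs_of_nonneg hy, abs_of_nonneg (hg.nonneg hy)] using hg.one_add_le_exp hy
  · simpa only [neg_neg, abs_of_nonpos hy, abs_of_nonpos (hg.nonpos hy)]
      using hg.neg_comp_neg.one_add_le_exp (neg_nonneg.2 hy)

lemma one_add_abs_le_exp_mul (hg : IsDrift g c₃) {w z s : ℝ} (hz : 0 ≤ z) (hs : 0 ≤ s)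
    (hsw : -s ≤ w) (hwz : w ≤ z + s) : 1 + |g w| ≤ exp (c₃ * s) * (1 + g z) := by
  have hgz := hg.nonneg hz
  have hc₃ := hg.c₃_nonneg
  rcases le_total 0 w with hw | hw
  · rw [abs_of_nonneg (hg.nonneg hw)]
    have := hg.one_add_le_exp_mul hz (le_add_of_nonneg_right hs)
    rw [add_sub_cancel_left] at this
    linarith [hg.monotone hwz]
  · calc 1 + |g w| ≤ exp (c₃ * |w|) := hg.one_add_abs_le_exp w
      _ ≤ exp (c₃ * s) := by
        rw [abs_of_nonpos hw]
        gcongr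
        linarith
      _ ≤ exp (c₃ * s) * (1 + g z) := le_mul_of_one_le_right (exp_pos _).le (by linarith)

lemma Gfun_mono (hg : IsDrift g c₃) {x y : ℝ} (hx : 0 ≤ x) (hxy : x ≤ y) :
    Gfun g x ≤ Gfun g y := by
  have := mul_sub_le_Gfun_sub hg.monotone x y
  have := mul_nonneg (hg.nonneg hx) (sub_nonneg.2 hxy)
  linarith

lemma Gfun_nonneg (hg : IsDrift g c₃) (x : ℝ) : 0 ≤ Gfun g x := by
  simpa [Gfun_zero, hg.map_zero] using mul_sub_le_Gfun_sub hg.monotone 0 x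

lemma Gfun_le (hg : IsDrift g c₃) (x : ℝ) : Gfun g x ≤ x * g x := by
  have := mul_sub_le_Gfun_sub hg.monotone x 0
  rw [Gfun_zero] at this
  linarith

lemma Gfun_le_mul_exp (hg : IsDrift g c₃) {x y : ℝ} (hx : 0 ≤ x) (hxy : x ≤ y) :
    Gfun g x ≤ y * exp (c₃ * y) := by
  have hy := hx.trans hxy
  have := hg.one_add_le_exp hy
  calc Gfun g x ≤ Gfun g y := hg.Gfun_mono hx hxy
    _ ≤ y * g y := hg.Gfun_le y
    _ ≤ y * exp (c₃ * y) := by gcongr; linarith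

lemma Gfun_le_add (hg : IsDrift g c₃) {v x z t : ℝ} (hx : 0 ≤ x) (hxv : x ≤ v + t)
    (hxz : x ≤ z) (ht : 0 ≤ t) : Gfun g x ≤ Gfun g v + t * g z := by
  have hmul : (x - v) * g x ≤ t * g z :=
    mul_le_mul (by linarith) (hg.monotone hxz) (hg.nonneg hx) ht
  linarith [mul_sub_le_Gfun_sub hg.monotone x v]

end IsDrift

/-- A drift for which `pfun g c₁` is a probability density. -/
structure IsNormalizedDrift (g : ℝ → ℝ) (c₁ c₃ : ℝ) : Prop extends IsDrift g c₃ where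
  c₁_pos : 0 < c₁
  integral_pfun : ∫ y, pfun g c₁ y = 1

/-- A level beyond which every drift normalized by `c₁` is at least `1 / threshold c₁`. -/
noncomputable def threshold (c₁ : ℝ) : ℝ := exp 1 / c₁

/-- The Mills ratio of the density proportional to `exp (-Gfun g)`. -/
noncomputable def mills (g : ℝ → ℝ) (w : ℝ) : ℝ :=
  exp (Gfun g w) * ∫ y in Set.Ioi w, exp (-Gfun g y)

lemma threshold_pos {c₁ : ℝ} (hc₁ : 0 < c₁) : 0 < threshold c₁ := div_pos (exp_pos 1) hc₁

lemma mills_nonneg (g : ℝ → ℝ) (w : ℝ) : 0 ≤ mills g w :=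
  mul_nonneg (exp_pos _).le (integral_nonneg fun _ => (exp_pos _).le)

lemma setIntegral_pfun_Ioi (g : ℝ → ℝ) (c₁ w : ℝ) :
    ∫ y in Set.Ioi w, pfun g c₁ y = c₁ * exp (-Gfun g w) * mills g w := by
  simp only [pfun, mills, integral_const_mul]
  rw [mul_assoc, ← mul_assoc (exp _), ← exp_add, neg_add_cancel, exp_zero, one_mul]

namespace IsNormalizedDrift

variable {g : ℝ → ℝ} {c₁ c₃ : ℝ}

lemma neg_comp_neg (hg : IsNormalizedDrift g c₁ c₃) :
    IsNormalizedDrift (fun y => -g (-y)) c₁ c₃ where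
  toIsDrift := hg.toIsDrift.neg_comp_neg
  c₁_pos := hg.c₁_pos
  integral_pfun := by
    simp only [pfun, Gfun_neg_comp_neg]
    exact (integral_neg_eq_self (pfun g c₁) volume).trans hg.integral_pfun

lemma integrable_exp_neg_Gfun (hg : IsNormalizedDrift g c₁ c₃) :
    Integrable fun y => exp (-Gfun g y) := by
  by_contra hint
  simpa only [pfun, integral_const_mul, integral_undef hint, mul_zero, zero_ne_one]
    using hg.integral_pfun

lemma integral_exp_neg_Gfun (hg : IsNormalizedDrift g c₁ c₃) :
    ∫ y, exp (-Gfun g y) = 1 / c₁ := by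
  rw [eq_div_iff hg.c₁_pos.ne', mul_comm, ← integral_const_mul]
  exact hg.integral_pfun

lemma setIntegral_exp_neg_Gfun_le (hg : IsNormalizedDrift g c₁ c₃) (s : Set ℝ) :
    ∫ y in s, exp (-Gfun g y) ≤ 1 / c₁ :=
  hg.integral_exp_neg_Gfun ▸ setIntegral_le_integral hg.integrable_exp_neg_Gfun
    (.of_forall fun _ => (exp_pos _).le)

lemma mul_le_setIntegral_exp_neg_Gfun (hg : IsNormalizedDrift g c₁ c₃) {w ℓ m : ℝ} (hw : 0 ≤ w)
    (hℓ : 0 ≤ ℓ) (hm : Gfun g (w + ℓ) ≤ m) :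
    ℓ * exp (-m) ≤ ∫ y in Set.Ioi w, exp (-Gfun g y) := by
  have hint := hg.integrable_exp_neg_Gfun
  calc ℓ * exp (-m) = ∫ _ in Set.Ioc w (w + ℓ), exp (-m) := by simp [hℓ]
    _ ≤ ∫ y in Set.Ioc w (w + ℓ), exp (-Gfun g y) :=
      setIntegral_mono_on (integrableOn_const (by simp)) hint.integrableOn measurableSet_Ioc
        fun y hy => exp_le_exp.2 (neg_le_neg ((hg.Gfun_mono (hw.trans hy.1.le) hy.2).trans hm))
    _ ≤ _ := setIntegral_mono_set hint.integrableOn (.of_forall fun _ => (exp_pos _).le)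
        Set.Ioc_subset_Ioi_self.eventuallyLE

-- The interval `(0, threshold c₁]` has mass at most `1` under the density `pfun g c₁`, so the
-- potential has reached `1` at the threshold.
lemma one_le_threshold_mul (hg : IsNormalizedDrift g c₁ c₃) {x : ℝ} (hx : threshold c₁ ≤ x) :
    1 ≤ threshold c₁ * g x := by
  have hz₀ := threshold_pos hg.c₁_pos
  set z₀ := threshold c₁ with hdef
  have hmass : z₀ * exp (-Gfun g z₀) ≤ 1 / c₁ :=
    (hg.mul_le_setIntegral_exp_neg_Gfun le_rfl hz₀.le (by rw [zero_add])).trans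
      (hg.setIntegral_exp_neg_Gfun_le _)
  have hexp : exp (1 - Gfun g z₀) ≤ 1 := by
    rw [hdef, threshold, div_mul_eq_mul_div, ← exp_add, ← threshold, ← hdef] at hmass
    exact (div_le_div_iff_of_pos_right hg.c₁_pos).1 hmass
  calc 1 ≤ Gfun g z₀ := by linarith [exp_le_one_iff.1 hexp]
    _ ≤ z₀ * g z₀ := hg.Gfun_le z₀
    _ ≤ z₀ * g x := mul_le_mul_of_nonneg_left (hg.monotone hx) hz₀.le

lemma hasDerivAt_mills (hg : IsNormalizedDrift g c₁ c₃) (w : ℝ) :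
    HasDerivAt (mills g) (g w * mills g w - 1) w := by
  have hint := hg.integrable_exp_neg_Gfun
  have hcont : Continuous fun y => exp (-Gfun g y) := (continuous_Gfun hg.continuous).neg.rexp
  have htail : (fun w => ∫ y in Set.Ioi w, exp (-Gfun g y)) =
      fun w => (∫ y in Set.Ioi 0, exp (-Gfun g y)) - ∫ y in (0 : ℝ)..w, exp (-Gfun g y) := by
    funext w
    rw [← intervalIntegral.integral_Ioi_sub_Ioi' hint.integrableOn hint.integrableOn]
    ring
  have hderiv : HasDerivAt (fun w => ∫ y in Set.Ioi w, exp (-Gfun g y)) (-exp (-Gfun g w)) w := by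
    rw [htail]
    exact (intervalIntegral.integral_hasDerivAt_right (hcont.intervalIntegrable _ _)
      (hcont.stronglyMeasurableAtFilter _ _) hcont.continuousAt).const_sub _
  refine ((hasDerivAt_Gfun hg.continuous w).exp.mul hderiv).congr_deriv ?_
  rw [mul_neg, ← exp_add, add_neg_cancel, exp_zero, mills]
  ring

lemma mul_mills_le_one (hg : IsNormalizedDrift g c₁ c₃) {w : ℝ} (hw : 0 ≤ w) :
    g w * mills g w ≤ 1 := by
  rcases (hg.nonneg hw).eq_or_lt with hgw | hgw
  · simp [← hgw]
  have hexp : ∫ y in Set.Ioi w, exp (-Gfun g y) ≤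
      ∫ y in Set.Ioi w, exp (g w * w - Gfun g w) * exp (-g w * y) := by
    refine setIntegral_mono_on hg.integrable_exp_neg_Gfun.integrableOn
      ((exp_neg_integrableOn_Ioi w hgw).const_mul _) measurableSet_Ioi fun y _ => ?_
    rw [← exp_add, exp_le_exp]
    linarith [mul_sub_le_Gfun_sub hg.monotone w y]
  rw [integral_const_mul, integral_exp_mul_Ioi (neg_lt_zero.2 hgw)] at hexp
  calc g w * mills g w
      ≤ g w * (exp (Gfun g w) * (exp (g w * w - Gfun g w) * (-exp (-g w * w) / -g w))) := by
        unfold mills; gcongr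
    _ = exp (Gfun g w) * exp (g w * w - Gfun g w) * exp (-g w * w) := by field_simp
    _ = 1 := by rw [← exp_add, ← exp_add, exp_eq_one_iff]; ring

lemma exp_neg_exp_le_one_add_mul_mills (hg : IsNormalizedDrift g c₁ c₃) {w : ℝ} (hw : 0 ≤ w) :
    exp (-exp c₃) ≤ (1 + g w) * mills g w := by
  have hgw : 0 < 1 + g w := by linarith [hg.nonneg hw]
  have hc₃ := hg.c₃_nonneg
  obtain ⟨ℓ, hℓ⟩ : ∃ ℓ, ℓ = (1 + g w)⁻¹ := ⟨_, rfl⟩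
  have hℓ0 : 0 ≤ ℓ := hℓ ▸ inv_nonneg.2 hgw.le
  have hℓ1 : ℓ ≤ 1 := hℓ ▸ inv_le_one_of_one_le₀ (by linarith [hg.nonneg hw])
  have hG : Gfun g (w + ℓ) ≤ Gfun g w + exp c₃ := by
    have hsub := mul_sub_le_Gfun_sub hg.monotone (w + ℓ) w
    have hgrowth := hg.one_add_le_exp_mul hw (le_add_of_nonneg_right hℓ0)
    rw [add_sub_cancel_left] at hgrowth
    have : g (w + ℓ) * ℓ ≤ exp c₃ := by
      calc g (w + ℓ) * ℓ ≤ (exp (c₃ * 1) * (1 + g w)) * ℓ := by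
            refine mul_le_mul_of_nonneg_right ?_ hℓ0
            have : exp (c₃ * ℓ) * (1 + g w) ≤ exp (c₃ * 1) * (1 + g w) := by gcongr
            linarith
        _ = exp c₃ := by rw [hℓ, mul_one, mul_assoc, mul_inv_cancel₀ hgw.ne', mul_one]
    linarith
  calc exp (-exp c₃) = (1 + g w) * (exp (Gfun g w) * (ℓ * exp (-(Gfun g w + exp c₃)))) := by
        rw [hℓ, neg_add, exp_add, exp_neg (Gfun g w)]
        field_simp
    _ ≤ (1 + g w) * mills g w := by
        unfold mills
        gcongr
        exact hg.mul_le_setIntegral_exp_neg_Gfun hw hℓ0 hG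

lemma mills_pos (hg : IsNormalizedDrift g c₁ c₃) {w : ℝ} (hw : 0 ≤ w) : 0 < mills g w :=
  pos_of_mul_pos_right ((exp_pos _).trans_le (hg.exp_neg_exp_le_one_add_mul_mills hw))
    (by linarith [hg.nonneg hw])

lemma mills_zero_add_mills_neg_comp_neg (hg : IsNormalizedDrift g c₁ c₃) :
    mills g 0 + mills (fun y => -g (-y)) 0 = 1 / c₁ := by
  have hint := hg.integrable_exp_neg_Gfun
  simp only [mills, Gfun_neg_comp_neg, Gfun_zero, exp_zero, one_mul]
  rw [integral_comp_neg_Ioi (f := fun y => exp (-Gfun g y)), neg_zero,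
    ← hg.integral_exp_neg_Gfun, add_comm]
  exact intervalIntegral.integral_Iic_add_Ioi hint.integrableOn hint.integrableOn

lemma le_exp_mul (hg : IsNormalizedDrift g c₁ c₃) {v x t : ℝ} (hv : threshold c₁ ≤ v)
    (ht : 0 ≤ t) (hx : x ≤ v + t) : g x ≤ exp (c₃ * t * (1 + threshold c₁)) * g v := by
  have hz₀ := threshold_pos hg.c₁_pos
  have hc₃ := hg.c₃_nonneg
  have hgv := hg.nonneg (hz₀.le.trans hv)
  have hexp : 0 ≤ exp (c₃ * t) - 1 := sub_nonneg.2 (one_le_exp (by positivity))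
  have hbernoulli := one_add_mul_self_le_rpow_one_add (by linarith : -1 ≤ exp (c₃ * t) - 1)
    (by linarith : 1 ≤ 1 + threshold c₁)
  rw [add_sub_cancel, ← exp_mul] at hbernoulli
  calc g x ≤ g (v + t) := hg.monotone hx
    _ ≤ g v + (exp (c₃ * t) - 1) * (1 + g v) := by
        have := hg.one_add_le_exp_mul (hz₀.le.trans hv) (le_add_of_nonneg_right ht)
        rw [add_sub_cancel_left] at this
        linarith
    _ ≤ g v + (exp (c₃ * t) - 1) * (threshold c₁ * g v + g v) := by
        gcongr
        exact hg.one_le_threshold_mul hv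
    _ = (1 + (1 + threshold c₁) * (exp (c₃ * t) - 1)) * g v := by ring
    _ ≤ exp (c₃ * t * (1 + threshold c₁)) * g v := by gcongr

lemma continuous_one_sub_mul_mills (hg : IsNormalizedDrift g c₁ c₃) :
    Continuous fun w => 1 - g w * mills g w :=
  continuous_const.sub <| hg.continuous.mul <|
    continuous_iff_continuousAt.2 fun w => (hg.hasDerivAt_mills w).continuousAt

lemma abs_one_sub_mul_mills_le_one (hg : IsNormalizedDrift g c₁ c₃) {w : ℝ} (hw : 0 ≤ w) :
    |1 - g w * mills g w| ≤ 1 :=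
  abs_le.2 ⟨by linarith [hg.mul_mills_le_one hw],
    by linarith [mul_nonneg (hg.nonneg hw) (mills_nonneg g w)]⟩

lemma intervalIntegral_one_sub_mul_mills (hg : IsNormalizedDrift g c₁ c₃) (a b : ℝ) :
    ∫ w in a..b, (1 - g w * mills g w) = mills g a - mills g b := by
  rw [intervalIntegral.integral_eq_sub_of_hasDerivAt (f := fun w => -mills g w)
    (fun w _ => (hg.hasDerivAt_mills w).neg.congr_deriv (neg_sub _ _))
    (hg.continuous_one_sub_mul_mills.intervalIntegrable a b)]
  ring

lemma integrableOn_one_sub_mul_mills (hg : IsNormalizedDrift g c₁ c₃) {z : ℝ} (hz : 0 ≤ z) :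
    IntegrableOn (fun w => 1 - g w * mills g w) (Set.Ioi z) := by
  refine integrableOn_Ioi_of_intervalIntegral_norm_bounded (mills g z) z
    (fun b => hg.continuous_one_sub_mul_mills.integrableOn_Ioc) Filter.tendsto_id ?_
  filter_upwards [Filter.eventually_ge_atTop z] with b hb
  calc ∫ w in z..b, ‖1 - g w * mills g w‖ = ∫ w in z..b, (1 - g w * mills g w) :=
        intervalIntegral.integral_congr fun w hw => by
          rw [Set.uIcc_of_le hb] at hw
          exact norm_of_nonneg (by linarith [hg.mul_mills_le_one (hz.trans hw.1)])
    _ ≤ mills g z := by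
        rw [hg.intervalIntegral_one_sub_mul_mills]
        linarith [mills_nonneg g b]

section Constants

lemma exists_one_add_mul_mills_le (c₁ c₃ : ℝ) :
    ∃ C, 0 < C ∧ ∀ g, IsNormalizedDrift g c₁ c₃ → ∀ w, 0 ≤ w → (1 + g w) * mills g w ≤ C := by
  obtain ⟨z₀, hz₀⟩ : ∃ z₀, z₀ = threshold c₁ := ⟨_, rfl⟩
  refine ⟨1 + |z₀| + exp (z₀ * exp (c₃ * z₀)) / |c₁|, by positivity, fun g hg w hw => ?_⟩
  have hc₁ := hg.c₁_pos
  have hz₀0 : 0 < z₀ := hz₀ ▸ threshold_pos hc₁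
  have hgM := hg.mul_mills_le_one hw
  have hM := mills_nonneg g w
  rw [abs_of_pos hz₀0, abs_of_pos hc₁]
  suffices mills g w ≤ z₀ + exp (z₀ * exp (c₃ * z₀)) / c₁ by linarith
  rcases le_total z₀ w with h | h
  · have hgw := hg.one_le_threshold_mul (hz₀ ▸ h)
    have : 0 ≤ exp (z₀ * exp (c₃ * z₀)) / c₁ := by positivity
    calc mills g w = mills g w * 1 := (mul_one _).symm
      _ ≤ mills g w * (z₀ * g w) := by rw [hz₀]; gcongr
      _ = z₀ * (g w * mills g w) := by ring
      _ ≤ z₀ * 1 := by gcongr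
      _ ≤ z₀ + exp (z₀ * exp (c₃ * z₀)) / c₁ := by linarith
  · calc mills g w ≤ exp (z₀ * exp (c₃ * z₀)) * (1 / c₁) := by
          unfold mills
          gcongr
          exacts [hg.Gfun_le_mul_exp hw h, hg.setIntegral_exp_neg_Gfun_le _]
      _ ≤ z₀ + exp (z₀ * exp (c₃ * z₀)) / c₁ := by rw [mul_one_div]; linarith

lemma exists_abs_deriv_mul_mills_le (c₁ c₃ : ℝ) :
    ∃ C, 0 < C ∧ ∀ g, IsNormalizedDrift g c₁ c₃ → ∀ w, 0 ≤ w →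
      |deriv g w * mills g w + g w * (g w * mills g w - 1)| ≤ C * (1 + g w) := by
  obtain ⟨C, hC, hMle⟩ := exists_one_add_mul_mills_le c₁ c₃
  refine ⟨|c₃| * C + 1, by positivity, fun g hg w hw => ?_⟩
  have hgw := hg.nonneg hw
  have hM := mills_nonneg g w
  have hgM := hg.mul_mills_le_one hw
  have hgM0 := mul_nonneg hgw hM
  have hc₃ := hg.c₃_nonneg
  rw [abs_of_nonneg hc₃]
  have hfirst : |deriv g w * mills g w| ≤ c₃ * C * (1 + g w) := by
    rw [abs_mul, abs_of_nonneg hM]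
    calc |deriv g w| * mills g w ≤ c₃ * (1 + g w) * mills g w := by
          gcongr; exact hg.abs_deriv_le_mul hw
      _ = c₃ * ((1 + g w) * mills g w) := by ring
      _ ≤ c₃ * C := by gcongr; exact hMle g hg w hw
      _ ≤ c₃ * C * (1 + g w) := le_mul_of_one_le_right (by positivity) (by linarith)
  have hsecond : |g w * (g w * mills g w - 1)| ≤ 1 + g w := by
    rw [abs_mul, abs_of_nonneg hgw]
    have : |g w * mills g w - 1| ≤ 1 := abs_le.2 ⟨by linarith, by linarith⟩
    nlinarith
  linarith [abs_add_le (deriv g w * mills g w) (g w * (g w * mills g w - 1))]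

lemma exists_one_add_mul_one_add_rpow_le (c₁ c₃ : ℝ) {s : ℝ} (hs : 0 ≤ s) :
    ∃ C, 0 < C ∧ ∀ g, IsNormalizedDrift g c₁ c₃ → ∀ z, 0 ≤ z →
      (1 + z) * (1 + g z) ^ s ≤ C * (1 + z * g z ^ s) := by
  obtain ⟨z₀, hz₀⟩ : ∃ z₀, z₀ = threshold c₁ := ⟨_, rfl⟩
  refine ⟨(1 + |c₁|) * (1 + |z₀|) ^ s + (1 + |z₀|) * exp (c₃ * z₀) ^ s, by positivity,
    fun g hg z hz => ?_⟩
  have hc₁ := hg.c₁_pos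
  have hz₀0 : 0 < z₀ := hz₀ ▸ threshold_pos hc₁
  have hgz := hg.nonneg hz
  have hzg : 0 ≤ z * g z ^ s := mul_nonneg hz (rpow_nonneg hgz s)
  rw [abs_of_pos hz₀0, abs_of_pos hc₁]
  have hA : 0 ≤ (1 + c₁) * (1 + z₀) ^ s := by positivity
  have hB : 0 ≤ (1 + z₀) * exp (c₃ * z₀) ^ s := by positivity
  rcases le_total z₀ z with h | h
  · have hg1 : 1 + g z ≤ (1 + z₀) * g z := by linarith [hz₀ ▸ hg.one_le_threshold_mul (hz₀ ▸ h)]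
    have hz1 : 1 + z ≤ (1 + c₁) * z := by
      have : 1 ≤ c₁ * z := calc
        1 ≤ exp 1 := one_le_exp zero_le_one
        _ = c₁ * z₀ := by rw [hz₀, threshold, mul_div_cancel₀ _ hc₁.ne']
        _ ≤ c₁ * z := by gcongr
      linarith
    calc (1 + z) * (1 + g z) ^ s ≤ ((1 + c₁) * z) * ((1 + z₀) * g z) ^ s := by gcongr
      _ = ((1 + c₁) * (1 + z₀) ^ s) * (z * g z ^ s) := by
          rw [mul_rpow (by positivity) hgz]; ring
      _ ≤ _ := by nlinarith
  · have hgexp : 1 + g z ≤ exp (c₃ * z₀) :=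
      (hg.one_add_le_exp hz).trans
        (exp_le_exp.2 (mul_le_mul_of_nonneg_left h hg.c₃_nonneg))
    calc (1 + z) * (1 + g z) ^ s ≤ (1 + z₀) * exp (c₃ * z₀) ^ s := by gcongr
      _ ≤ _ := by nlinarith

lemma exists_abs_mul_mills_sub_le (c₁ c₃ : ℝ) :
    ∃ C, 0 < C ∧ ∀ g, IsNormalizedDrift g c₁ c₃ → ∀ w x, 0 ≤ w → 0 ≤ x → |x - w| ≤ 1 →
      |g x * mills g x - g w * mills g w| ≤ C * (1 + g w) * |x - w| := by
  obtain ⟨C, hC, hderiv⟩ := exists_abs_deriv_mul_mills_le c₁ c₃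
  refine ⟨C * exp c₃, by positivity, fun g hg w x hw hx hxw => ?_⟩
  refine (convex_uIcc w x).norm_image_sub_le_of_norm_hasDerivWithin_le
    (fun y _ => ((hg.differentiable y).hasDerivAt.mul (hg.hasDerivAt_mills y)).hasDerivWithinAt)
    (fun y hy => (hderiv g hg y ((le_min hw hx).trans hy.1)).trans ?_)
    Set.left_mem_uIcc Set.right_mem_uIcc
  have hyw : y ≤ w + 1 := hy.2.trans (max_le (by linarith) (by linarith [(abs_le.1 hxw).2]))
  have := hg.nonneg hw
  calc C * (1 + g y) ≤ C * (1 + g (w + 1)) := by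
        gcongr
        exact hg.monotone hyw
    _ ≤ C * (exp (c₃ * (w + 1 - w)) * (1 + g w)) := by
        gcongr
        exact hg.one_add_le_exp_mul hw (by linarith)
    _ = C * exp c₃ * (1 + g w) := by
        rw [add_sub_cancel_left, mul_one, mul_assoc]

lemma exists_inv_setIntegral_pfun_le (c₁ c₃ b : ℝ) :
    ∃ C, 0 < C ∧ ∀ g, IsNormalizedDrift g c₁ c₃ → ∀ z, 0 ≤ z → z ≤ b →
      (∫ y in Set.Ioi z, pfun g c₁ y)⁻¹ ≤ C := by
  rcases le_or_gt c₁ 0 with hc₁ | hc₁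
  · exact ⟨1, one_pos, fun g hg => (hc₁.not_gt hg.c₁_pos).elim⟩
  obtain ⟨t, ht⟩ : ∃ t, t = c₁ * exp (-(b * exp (c₃ * b))) * (exp (-exp c₃) / exp (c₃ * b)) :=
    ⟨_, rfl⟩
  have ht0 : 0 < t := ht ▸ by positivity
  refine ⟨t⁻¹, inv_pos.2 ht0, fun g hg z hz hzb => inv_anti₀ ht0 ?_⟩
  have hc₃ := hg.c₃_nonneg
  have hgz := hg.nonneg hz
  have hgrowth : 1 + g z ≤ exp (c₃ * b) := (hg.one_add_le_exp hz).trans (by gcongr)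
  have hG : Gfun g z ≤ b * exp (c₃ * b) := calc
    Gfun g z ≤ z * g z := hg.Gfun_le z
    _ ≤ b * exp (c₃ * b) := mul_le_mul hzb (by linarith) hgz (hz.trans hzb)
  have hmills : exp (-exp c₃) / exp (c₃ * b) ≤ mills g z := calc
    exp (-exp c₃) / exp (c₃ * b) ≤ exp (-exp c₃) / (1 + g z) := by gcongr
    _ ≤ mills g z := by
        rw [div_le_iff₀' (by linarith)]
        exact hg.exp_neg_exp_le_one_add_mul_mills hz
  rw [ht, setIntegral_pfun_Ioi]
  gcongr

lemma exists_abs_div_setIntegral_pfun_sub_one_le (c₁ c₃ : ℝ) {s ε : ℝ} (hs : 0 ≤ s) (hε : 0 < ε) :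
    ∃ C, 0 < C ∧ ∀ g, IsNormalizedDrift g c₁ c₃ → ∀ z η q, 0 ≤ z → ε ≤ η → η * z * g z ^ s ≤ 1 →
      0 ≤ q → q ≤ 1 → |q / (∫ y in Set.Ioi z, pfun g c₁ y) - 1| ≤ C * η := by
  obtain ⟨B, hB, hz_le⟩ := exists_one_add_mul_one_add_rpow_le c₁ c₃ hs
  obtain ⟨C, hC, hinv⟩ := exists_inv_setIntegral_pfun_le c₁ c₃ (B * (1 + ε⁻¹))
  refine ⟨(C + 1) / ε, by positivity, fun g hg z η q hz hη hηz hq0 hq1 => ?_⟩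
  have hgz := hg.nonneg hz
  have hbounded : z ≤ B * (1 + ε⁻¹) := calc
    z ≤ (1 + z) * (1 + g z) ^ s :=
        (by linarith : z ≤ 1 + z).trans <|
          le_mul_of_one_le_right (by linarith) (one_le_rpow (by linarith) hs)
    _ ≤ B * (1 + z * g z ^ s) := hz_le g hg z hz
    _ ≤ B * (1 + ε⁻¹) := by
        gcongr
        rw [← one_div, le_div_iff₀' hε]
        exact le_trans (by rw [mul_assoc]; gcongr) hηz
  have hTinv := hinv g hg z hz hbounded
  have hT : 0 ≤ (∫ y in Set.Ioi z, pfun g c₁ y)⁻¹ := by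
    have := hg.c₁_pos
    have := mills_nonneg g z
    rw [setIntegral_pfun_Ioi]
    positivity
  calc |q / (∫ y in Set.Ioi z, pfun g c₁ y) - 1|
      ≤ |q * (∫ y in Set.Ioi z, pfun g c₁ y)⁻¹| + |1| := abs_sub _ _
    _ ≤ 1 * C + 1 := by
        rw [abs_of_nonneg (by positivity), abs_one]
        gcongr
    _ = (C + 1) / ε * ε := by field_simp
    _ ≤ (C + 1) / ε * η := by gcongr

end Constants

end IsNormalizedDrift

lemma map_neg_withDensity {G : Type*} [InvolutiveNeg G] [MeasurableSpace G] [MeasurableNeg G]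
    {μ : Measure G} {f : G → ENNReal} (hf : Measurable f) :
    (μ.withDensity f).map Neg.neg = (μ.map Neg.neg).withDensity fun x => f (-x) := by
  ext s hs
  rw [Measure.map_apply measurable_neg hs, withDensity_apply _ (measurable_neg hs),
    withDensity_apply _ hs,
    setLIntegral_map (f := fun x => f (-x)) hs (hf.comp measurable_neg) measurable_neg]
  simp only [neg_neg]

lemma ae_map_neg {G : Type*} [InvolutiveNeg G] [MeasurableSpace G] [MeasurableNeg G]
    {μ : Measure G} {p : G → Prop} (h : ∀ᵐ x ∂μ, p x) : ∀ᵐ x ∂μ.map Neg.neg, p (-x) :=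
  (MeasurableEquiv.neg G).measurableEmbedding.ae_map_iff.2 (by simpa using h)

section TailIntegral

variable {P : Measure ℝ} {φ g : ℝ → ℝ}

lemma integral_mul_setIntegral_Ioi {Q : Measure ℝ} [SFinite P] [SFinite Q]
    (hφ : Integrable φ Q) (hg : Integrable g P) :
    ∫ x, φ x * ∫ w in Set.Ioi x, g w ∂P ∂Q = ∫ w, (∫ x in Set.Iio w, φ x ∂Q) * g w ∂P := by
  have hlt : MeasurableSet {p : ℝ × ℝ | p.1 < p.2} := measurableSet_lt measurable_fst measurable_snd
  have hswap := integral_integral_swap (μ := Q) (ν := P)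
    (f := fun x w => {p : ℝ × ℝ | p.1 < p.2}.indicator (fun p => φ p.1 * g p.2) (x, w))
    ((hφ.mul_prod hg).indicator hlt)
  calc ∫ x, φ x * ∫ w in Set.Ioi x, g w ∂P ∂Q
      = ∫ x, ∫ w, {p : ℝ × ℝ | p.1 < p.2}.indicator (fun p => φ p.1 * g p.2) (x, w) ∂P ∂Q :=
        integral_congr_ae <| .of_forall fun x => by
          dsimp only
          rw [← integral_const_mul, ← integral_indicator measurableSet_Ioi]
          rfl
    _ = ∫ w, ∫ x, {p : ℝ × ℝ | p.1 < p.2}.indicator (fun p => φ p.1 * g p.2) (x, w) ∂Q ∂P := hswap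
    _ = ∫ w, (∫ x in Set.Iio w, φ x ∂Q) * g w ∂P :=
        integral_congr_ae <| .of_forall fun w => by
          dsimp only
          rw [← integral_mul_const, ← integral_indicator measurableSet_Iio]
          rfl

lemma measurable_setIntegral_Ioi [SFinite P] (hg : Measurable g) :
    Measurable fun x => ∫ w in Set.Ioi x, g w ∂P := by
  have hlt : MeasurableSet {p : ℝ × ℝ | p.1 < p.2} := measurableSet_lt measurable_fst measurable_snd
  have hind : StronglyMeasurable ({p : ℝ × ℝ | p.1 < p.2}.indicator fun p => g p.2) :=
    ((hg.comp measurable_snd).indicator hlt).stronglyMeasurable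
  have htail : (fun x => ∫ w in Set.Ioi x, g w ∂P) =
      fun x => ∫ w, {p : ℝ × ℝ | p.1 < p.2}.indicator (fun p => g p.2) (x, w) ∂P :=
    funext fun x => (integral_indicator measurableSet_Ioi).symm
  exact htail ▸ (hind.integral_prod_right' (ν := P)).measurable

lemma IsDrift.setIntegral_Ioi_nonneg {c₃ : ℝ} (hdrift : IsDrift g c₃) (hg : Integrable g P)
    (hg0 : ∫ w, g w ∂P = 0) (x : ℝ) : 0 ≤ ∫ w in Set.Ioi x, g w ∂P := by
  rcases le_total 0 x with hx | hx
  · exact setIntegral_nonneg measurableSet_Ioi fun w hw => hdrift.nonneg (hx.trans (le_of_lt hw))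
  · have hsplit := intervalIntegral.integral_Iic_add_Ioi (b := x) hg.integrableOn hg.integrableOn
    have hle : ∫ w in Set.Iic x, g w ∂P ≤ 0 :=
      setIntegral_nonpos measurableSet_Iic fun w hw => hdrift.nonpos (le_trans hw hx)
    linarith

end TailIntegral

/-- The measure-theoretic content of a `g`-Stein coupling `(W, W', G)`: `P` is the law of `W`, `κ`
is `E(K̂₁ | W)`, and `plan` is the law of `(W, W + U (W' - W))` weighted by `K̂₁`, with `U` uniform
on `[0, 1]`. It moves the measure `κ P` by at most `δ` onto the measure with Lebesgue density
`x ↦ E(g(W); W > x)`. -/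
structure SteinTransport (c₁ c₃ d₀ τ : ℝ) where
  g : ℝ → ℝ
  P : Measure ℝ
  κ : ℝ → ℝ
  plan : Measure (ℝ × ℝ)
  δ : ℝ
  δ₁ : ℝ
  drift : IsNormalizedDrift g c₁ c₃
  τ_nonneg : 0 ≤ τ
  isProbabilityMeasure_P : IsProbabilityMeasure P
  integrable_g : Integrable g P
  integral_g : ∫ w, g w ∂P = 0
  measurable_κ : Measurable κ
  κ_nonneg : ∀ᵐ w ∂P, 0 ≤ κ w
  κ_le : ∀ᵐ w ∂P, κ w ≤ d₀
  abs_κ_sub_one_le : ∀ᵐ w ∂P, |κ w - 1| ≤ δ₁ * (|g w| ^ τ + 1)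
  δ_pos : 0 < δ
  δ_le : δ ≤ 1 / 4
  δ₁_pos : 0 < δ₁
  map_fst_plan : plan.map Prod.fst = P.withDensity fun w => ENNReal.ofReal (κ w)
  map_snd_plan :
    plan.map Prod.snd = volume.withDensity fun x => ENNReal.ofReal (∫ w in Set.Ioi x, g w ∂P)
  abs_snd_sub_fst_le : ∀ᵐ p ∂plan, |p.2 - p.1| ≤ δ

namespace SteinTransport

variable {c₁ c₃ d₀ τ : ℝ} (S : SteinTransport c₁ c₃ d₀ τ)

instance : IsProbabilityMeasure S.P := S.isProbabilityMeasure_P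

/-- The function `x ↦ E(g(W); W > x)`, the density of the second marginal of the plan. -/
noncomputable def tailDrift (x : ℝ) : ℝ :=
  ∫ w in Set.Ioi x, S.g w ∂S.P

lemma d₀_nonneg (S : SteinTransport c₁ c₃ d₀ τ) : 0 ≤ d₀ := by
  obtain ⟨w, h0, hd⟩ := (Filter.Eventually.and S.κ_nonneg S.κ_le).exists
  exact h0.trans hd

section Basic

lemma measurable_g : Measurable S.g := S.drift.monotone.measurable

lemma tailDrift_eq_neg (x : ℝ) : S.tailDrift x = -∫ w in Set.Iic x, S.g w ∂S.P := by
  have := intervalIntegral.integral_Iic_add_Ioi (b := x) S.integrable_g.integrableOn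
    S.integrable_g.integrableOn
  rw [S.integral_g] at this
  exact eq_neg_of_add_eq_zero_right this

lemma tailDrift_nonneg (x : ℝ) : 0 ≤ S.tailDrift x :=
  S.drift.setIntegral_Ioi_nonneg S.integrable_g S.integral_g x

lemma tailDrift_anti {x y : ℝ} (hx : 0 ≤ x) (hxy : x ≤ y) : S.tailDrift y ≤ S.tailDrift x :=
  setIntegral_mono_set S.integrable_g.integrableOn
    (ae_restrict_of_forall_mem measurableSet_Ioi fun _ hw =>
      S.drift.nonneg (hx.trans (le_of_lt hw)))
    (Set.Ioi_subset_Ioi hxy).eventuallyLE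

lemma setIntegral_add_tailDrift {x y : ℝ} (hxy : x ≤ y) :
    (∫ w in Set.Ioc x y, S.g w ∂S.P) + S.tailDrift y = S.tailDrift x := by
  rw [tailDrift, tailDrift, ← setIntegral_union (Set.Ioc_disjoint_Ioi le_rfl) measurableSet_Ioi
    S.integrable_g.integrableOn S.integrable_g.integrableOn, Set.Ioc_union_Ioi_eq_Ioi hxy]

lemma tailDrift_le_zero (x : ℝ) : S.tailDrift x ≤ S.tailDrift 0 := by
  rcases le_total 0 x with hx | hx
  · exact S.tailDrift_anti le_rfl hx
  · rw [← S.setIntegral_add_tailDrift hx, add_le_iff_nonpos_left]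
    exact setIntegral_nonpos measurableSet_Ioc fun w hw => S.drift.nonpos hw.2

lemma measurable_tailDrift : Measurable S.tailDrift := measurable_setIntegral_Ioi S.measurable_g

lemma lintegral_κ_le : ∫⁻ w, ENNReal.ofReal (S.κ w) ∂S.P ≤ ENNReal.ofReal d₀ := by
  calc ∫⁻ w, ENNReal.ofReal (S.κ w) ∂S.P ≤ ∫⁻ _, ENNReal.ofReal d₀ ∂S.P :=
        lintegral_mono_ae (S.κ_le.mono fun _ h => ENNReal.ofReal_le_ofReal h)
    _ = ENNReal.ofReal d₀ := by simp

lemma plan_univ_le : S.plan Set.univ ≤ ENNReal.ofReal d₀ := by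
  rw [← Set.preimage_univ (f := Prod.fst), ← Measure.map_apply measurable_fst .univ,
    S.map_fst_plan, withDensity_apply _ .univ, setLIntegral_univ]
  exact S.lintegral_κ_le

instance : IsFiniteMeasure S.plan := ⟨S.plan_univ_le.trans_lt ENNReal.ofReal_lt_top⟩

lemma integral_fst {Φ : ℝ → ℝ} (hΦ : Measurable Φ) :
    ∫ p, Φ p.1 ∂S.plan = ∫ w, S.κ w * Φ w ∂S.P := by
  rw [← integral_map measurable_fst.aemeasurable hΦ.aestronglyMeasurable, S.map_fst_plan,
    integral_withDensity_eq_integral_toReal_smul S.measurable_κ.ennreal_ofReal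
      (.of_forall fun _ => ENNReal.ofReal_lt_top)]
  refine integral_congr_ae (S.κ_nonneg.mono fun w hw => ?_)
  simp only [ENNReal.toReal_ofReal hw, smul_eq_mul]

lemma integrable_fst {Φ : ℝ → ℝ} (hΦ : Measurable Φ) (hint : Integrable Φ S.P) :
    Integrable (fun p => Φ p.1) S.plan := by
  rw [← Function.comp_def, ← integrable_map_measure hΦ.aestronglyMeasurable
    measurable_fst.aemeasurable, S.map_fst_plan,
    integrable_withDensity_iff_integrable_smul' S.measurable_κ.ennreal_ofReal
      (.of_forall fun _ => ENNReal.ofReal_lt_top)]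
  refine (hint.norm.const_mul d₀).mono'
    ((S.measurable_κ.ennreal_ofReal.ennreal_toReal.smul hΦ).aestronglyMeasurable) ?_
  filter_upwards [S.κ_nonneg, S.κ_le] with w h0 hd
  rw [ENNReal.toReal_ofReal h0, norm_smul, norm_of_nonneg h0]
  gcongr

lemma integral_snd {Φ : ℝ → ℝ} (hΦ : Measurable Φ) :
    ∫ p, Φ p.2 ∂S.plan = ∫ x, Φ x * S.tailDrift x := by
  rw [← integral_map measurable_snd.aemeasurable hΦ.aestronglyMeasurable, S.map_snd_plan]
  refine (integral_withDensity_eq_integral_toReal_smul S.measurable_tailDrift.ennreal_ofReal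
    (.of_forall fun _ => ENNReal.ofReal_lt_top) Φ).trans ?_
  simp only [ENNReal.toReal_ofReal (S.tailDrift_nonneg _), smul_eq_mul, mul_comm]

lemma integrable_mul_tailDrift {Φ : ℝ → ℝ} (hint : Integrable Φ) :
    Integrable fun x => Φ x * S.tailDrift x :=
  hint.mul_bdd (c := S.tailDrift 0) S.measurable_tailDrift.aestronglyMeasurable <|
    .of_forall fun x => by
      rw [norm_of_nonneg (S.tailDrift_nonneg x)]
      exact S.tailDrift_le_zero x

end Basic

section Identities

lemma integral_indicator_Ioi_snd {φ : ℝ → ℝ} {a : ℝ} (hmeas : Measurable φ)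
    (hφ : IntegrableOn φ (Set.Ioi a)) :
    ∫ p, (Set.Ioi a).indicator φ p.2 ∂S.plan =
      ∫ w in Set.Ioi a, (∫ x in a..w, φ x) * S.g w ∂S.P := by
  rw [S.integral_snd (hmeas.indicator measurableSet_Ioi)]
  refine (integral_mul_setIntegral_Ioi (hφ.integrable_indicator measurableSet_Ioi)
    S.integrable_g).trans ?_
  rw [← integral_indicator measurableSet_Ioi]
  refine integral_congr_ae (.of_forall fun w => ?_)
  dsimp only
  rw [setIntegral_indicator measurableSet_Ioi, Set.inter_comm, Set.Ioi_inter_Iio]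
  by_cases hw : a < w
  · rw [Set.indicator_of_mem (Set.mem_Ioi.2 hw), intervalIntegral.integral_of_le hw.le,
      integral_Ioc_eq_integral_Ioo]
  · rw [Set.indicator_of_notMem (by simpa using hw), Set.Ioo_eq_empty hw, setIntegral_empty,
      zero_mul]

lemma integral_indicator_Ioc_snd {φ F : ℝ → ℝ} {a b : ℝ} (hab : a ≤ b) (hφ : Continuous φ)
    (hF : ∀ x, HasDerivAt F (φ x) x) :
    ∫ p, (Set.Ioc a b).indicator φ p.2 ∂S.plan =
      ∫ w in Set.Ioi a, (F (min w b) - F a) * S.g w ∂S.P := by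
  have hind : (Set.Ioc a b).indicator φ = (Set.Ioi a).indicator ((Set.Iic b).indicator φ) := by
    rw [Set.indicator_indicator, Set.Ioi_inter_Iic]
  rw [hind, S.integral_indicator_Ioi_snd (hφ.measurable.indicator measurableSet_Iic)]
  · refine setIntegral_congr_fun measurableSet_Ioi fun w hw => ?_
    have hw' : a ≤ w := le_of_lt hw
    rw [intervalIntegral.integral_of_le hw', setIntegral_indicator measurableSet_Iic,
      Set.Ioc_inter_Iic, ← intervalIntegral.integral_of_le (le_min hw' hab),
      intervalIntegral.integral_eq_sub_of_hasDerivAt (fun x _ => hF x)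
        (hφ.intervalIntegrable _ _)]
  · rw [integrableOn_indicator_iff measurableSet_Iic, Set.Iic_inter_Ioi]
    exact hφ.integrableOn_Ioc

end Identities

section Comparison

lemma integral_snd_le_integral_fst {Φ Ψ : ℝ → ℝ} (hΦ : Integrable (fun p => Φ p.2) S.plan)
    (hΨm : Measurable Ψ) (hΨ : Integrable Ψ S.P)
    (hle : ∀ w x, |x - w| ≤ S.δ → Φ x ≤ Ψ w) :
    ∫ p, Φ p.2 ∂S.plan ≤ ∫ w, S.κ w * Ψ w ∂S.P := by
  rw [← S.integral_fst hΨm]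
  exact integral_mono_ae hΦ (S.integrable_fst hΨm hΨ)
    (S.abs_snd_sub_fst_le.mono fun p hp => hle _ _ hp)

lemma integrable_snd_of_bounded {Φ : ℝ → ℝ} {B : ℝ} (hΦ : Measurable Φ) (hB : ∀ x, |Φ x| ≤ B) :
    Integrable (fun p => Φ p.2) S.plan :=
  .of_bound (hΦ.comp measurable_snd).aestronglyMeasurable B (.of_forall fun p => hB p.2)

lemma integrable_of_bounded {Φ : ℝ → ℝ} {B : ℝ} (hΦ : Measurable Φ) (hB : ∀ x, |Φ x| ≤ B) :
    Integrable Φ S.P :=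
  .of_bound hΦ.aestronglyMeasurable B (.of_forall hB)

lemma integrable_κ_mul {b : ℝ → ℝ} (hb : Integrable b S.P) :
    Integrable (fun w => S.κ w * b w) S.P :=
  hb.bdd_mul (c := d₀) S.measurable_κ.aestronglyMeasurable <| by
    filter_upwards [S.κ_nonneg, S.κ_le] with w h0 hd
    rwa [norm_of_nonneg h0]

lemma integral_κ_mul_le {b : ℝ → ℝ} (hb : Integrable b S.P) (hb0 : ∀ w, 0 ≤ b w) :
    ∫ w, S.κ w * b w ∂S.P ≤ d₀ * ∫ w, b w ∂S.P := by
  rw [← integral_const_mul]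
  exact integral_mono_ae (S.integrable_κ_mul hb) (hb.const_mul d₀)
    (S.κ_le.mono fun w hw => mul_le_mul_of_nonneg_right hw (hb0 w))

lemma abs_integral_snd_sub_integral_le {Φ b : ℝ → ℝ} {B : ℝ} (hΦ : Measurable Φ)
    (hB : ∀ x, |Φ x| ≤ B) (hbm : Measurable b) (hb : Integrable b S.P) (hb0 : ∀ w, 0 ≤ b w)
    (hle : ∀ w x, |x - w| ≤ S.δ → |Φ x - Φ w| ≤ b w) :
    |(∫ p, Φ p.2 ∂S.plan) - ∫ w, Φ w ∂S.P| ≤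
      (∫ w, |S.κ w - 1| * |Φ w| ∂S.P) + d₀ * ∫ w, b w ∂S.P := by
  have hΦP := S.integrable_of_bounded hΦ hB
  have hmove : |(∫ p, Φ p.2 ∂S.plan) - ∫ w, S.κ w * Φ w ∂S.P| ≤ d₀ * ∫ w, b w ∂S.P := by
    rw [← S.integral_fst hΦ,
      ← integral_sub (S.integrable_snd_of_bounded hΦ hB) (S.integrable_fst hΦ hΦP)]
    calc |∫ p, (Φ p.2 - Φ p.1) ∂S.plan| ≤ ∫ p, b p.1 ∂S.plan := by
          rw [← norm_eq_abs]
          exact norm_integral_le_of_norm_le (S.integrable_fst hbm hb)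
            (S.abs_snd_sub_fst_le.mono fun p hp => hle _ _ hp)
      _ = ∫ w, S.κ w * b w ∂S.P := S.integral_fst hbm
      _ ≤ d₀ * ∫ w, b w ∂S.P := S.integral_κ_mul_le hb hb0
  have hreweight : |(∫ w, S.κ w * Φ w ∂S.P) - ∫ w, Φ w ∂S.P| ≤
      ∫ w, |S.κ w - 1| * |Φ w| ∂S.P := by
    rw [← integral_sub (S.integrable_κ_mul hΦP) hΦP]
    simp only [← abs_mul, sub_mul, one_mul]
    exact abs_integral_le_integral_abs
  linarith [abs_sub_le (∫ p, Φ p.2 ∂S.plan) (∫ w, S.κ w * Φ w ∂S.P) (∫ w, Φ w ∂S.P)]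

-- A lower bound on `κ` lets the plan bound `P` by the absolutely continuous second marginal.
lemma integral_le_two_mul_integral_snd {b b' : ℝ → ℝ} {B : ℝ} (hbm : Measurable b)
    (hb : Integrable b S.P) (hκ : ∀ᵐ w ∂S.P, b w ≤ 2 * (S.κ w * b w)) (hbm' : Measurable b')
    (hB : ∀ x, |b' x| ≤ B) (hle : ∀ w x, |x - w| ≤ S.δ → b w ≤ b' x) :
    ∫ w, b w ∂S.P ≤ 2 * ∫ x, b' x * S.tailDrift x := by
  calc ∫ w, b w ∂S.P ≤ ∫ w, 2 * (S.κ w * b w) ∂S.P :=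
        integral_mono_ae hb ((S.integrable_κ_mul hb).const_mul 2) hκ
    _ = 2 * ∫ p, b p.1 ∂S.plan := by rw [integral_const_mul, S.integral_fst hbm]
    _ ≤ 2 * ∫ p, b' p.2 ∂S.plan := by
        gcongr 2 * ?_
        exact integral_mono_ae (S.integrable_fst hbm hb) (S.integrable_snd_of_bounded hbm' hB)
          (S.abs_snd_sub_fst_le.mono fun p hp => hle _ _ hp)
    _ = 2 * ∫ x, b' x * S.tailDrift x := by rw [S.integral_snd hbm']

end Comparison

section Decay

/-- The distance over which the tail drift decays by a factor `exp 1`. -/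
noncomputable def decayLength (c₁ d₀ : ℝ) : ℝ := 1 + exp 1 * (d₀ + 1) * threshold c₁

lemma decayLength_pos (S : SteinTransport c₁ c₃ d₀ τ) : 0 < decayLength c₁ d₀ := by
  have := threshold_pos S.drift.c₁_pos
  have := S.d₀_nonneg
  unfold decayLength
  positivity

lemma sub_mul_tailDrift_le {a b : ℝ} (ha : 0 ≤ a) (hab : a ≤ b) :
    (b - a) * S.tailDrift b ≤ d₀ * S.P.real (Set.Ioi (a - S.δ)) := by
  have hmeas : ∀ s : Set ℝ, MeasurableSet s → Measurable (s.indicator (1 : ℝ → ℝ)) :=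
    fun s hs => measurable_one.indicator hs
  have hbound : ∀ (s : Set ℝ) x, |s.indicator (1 : ℝ → ℝ) x| ≤ 1 := fun s x => by
    by_cases hx : x ∈ s <;> simp [hx]
  have hIoi := S.integrable_of_bounded (hmeas _ measurableSet_Ioi) (hbound (Set.Ioi (a - S.δ)))
  have hint : Integrable ((Set.Ioc a b).indicator (1 : ℝ → ℝ)) :=
    (integrableOn_const (by simp)).integrable_indicator measurableSet_Ioc
  calc (b - a) * S.tailDrift b = ∫ x, (Set.Ioc a b).indicator 1 x * S.tailDrift b := by
        rw [integral_mul_const, integral_indicator_one measurableSet_Ioc, volume_real_Ioc_of_le hab]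
    _ ≤ ∫ x, (Set.Ioc a b).indicator 1 x * S.tailDrift x := by
        refine integral_mono (hint.mul_const _) (S.integrable_mul_tailDrift hint) fun x => ?_
        by_cases hx : x ∈ Set.Ioc a b
        · simpa [hx] using S.tailDrift_anti (ha.trans hx.1.le) hx.2
        · simp [hx]
    _ = ∫ p, (Set.Ioc a b).indicator (1 : ℝ → ℝ) p.2 ∂S.plan :=
        (S.integral_snd (hmeas _ measurableSet_Ioc)).symm
    _ ≤ ∫ w, S.κ w * (Set.Ioi (a - S.δ)).indicator 1 w ∂S.P := by
        refine S.integral_snd_le_integral_fst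
          (S.integrable_snd_of_bounded (hmeas _ measurableSet_Ioc) (hbound _))
          (hmeas _ measurableSet_Ioi) hIoi fun w x hxw => ?_
        by_cases hx : x ∈ Set.Ioc a b
        · have hw : w ∈ Set.Ioi (a - S.δ) := Set.mem_Ioi.2 (by linarith [(abs_le.1 hxw).2, hx.1])
          simp [hx, hw]
        · rw [Set.indicator_of_notMem hx]
          exact Set.indicator_nonneg (fun _ _ => zero_le_one) w
    _ ≤ d₀ * ∫ w, (Set.Ioi (a - S.δ)).indicator 1 w ∂S.P :=
        S.integral_κ_mul_le hIoi fun w => Set.indicator_nonneg (fun _ _ => zero_le_one) w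
    _ = d₀ * S.P.real (Set.Ioi (a - S.δ)) := by rw [integral_indicator_one measurableSet_Ioi]

lemma tailDrift_zero_le : S.tailDrift 0 ≤ exp c₃ + d₀ := by
  have hone : S.tailDrift 1 ≤ d₀ := by
    have := S.sub_mul_tailDrift_le le_rfl zero_le_one
    have := mul_le_of_le_one_right S.d₀_nonneg
      (measureReal_le_one (μ := S.P) (s := Set.Ioi (0 - S.δ)))
    linarith
  have hIoc : ∫ w in Set.Ioc 0 1, S.g w ∂S.P ≤ exp c₃ := by
    calc ∫ w in Set.Ioc 0 1, S.g w ∂S.P ≤ ∫ _ in Set.Ioc (0 : ℝ) 1, S.g 1 ∂S.P :=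
          setIntegral_mono_on S.integrable_g.integrableOn (integrableOn_const (by simp))
            measurableSet_Ioc fun w hw => S.drift.monotone hw.2
      _ = S.P.real (Set.Ioc 0 1) * S.g 1 := by simp
      _ ≤ S.g 1 := mul_le_of_le_one_left (S.drift.nonneg zero_le_one) measureReal_le_one
      _ ≤ exp c₃ := by
        have := S.drift.one_add_le_exp zero_le_one
        rw [mul_one] at this
        linarith
  linarith [S.setIntegral_add_tailDrift zero_le_one]

lemma measureReal_Ioi_le {x : ℝ} (hx : threshold c₁ ≤ x) :
    S.P.real (Set.Ioi x) ≤ threshold c₁ * S.tailDrift x := by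
  rw [tailDrift, ← integral_const_mul, ← setIntegral_one_eq_measureReal]
  exact setIntegral_mono_on (integrableOn_const (by simp))
    (S.integrable_g.const_mul _).integrableOn measurableSet_Ioi
    fun w hw => S.drift.one_le_threshold_mul (hx.trans (le_of_lt hw))

lemma tailDrift_add_decayLength_le {x : ℝ} (hx : threshold c₁ ≤ x) :
    S.tailDrift (x + decayLength c₁ d₀) ≤ exp (-1) * S.tailDrift x := by
  have hz₀ := threshold_pos S.drift.c₁_pos
  have hd₀ := S.d₀_nonneg
  have hδ := S.δ_pos
  have hδ' := S.δ_le
  have hs : 0 < exp 1 * (d₀ + 1) * threshold c₁ := by positivity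
  have hmul := S.sub_mul_tailDrift_le (a := x + S.δ) (b := x + decayLength c₁ d₀) (by linarith)
    (by unfold decayLength; linarith)
  rw [add_sub_cancel_right] at hmul
  have := S.tailDrift_nonneg x
  have := S.tailDrift_nonneg (x + decayLength c₁ d₀)
  have hscaled : exp 1 * (d₀ + 1) * threshold c₁ * S.tailDrift (x + decayLength c₁ d₀) ≤
      (d₀ + 1) * threshold c₁ * S.tailDrift x := by
    calc exp 1 * (d₀ + 1) * threshold c₁ * S.tailDrift (x + decayLength c₁ d₀)
        ≤ (x + decayLength c₁ d₀ - (x + S.δ)) * S.tailDrift (x + decayLength c₁ d₀) := by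
          gcongr
          unfold decayLength
          linarith
      _ ≤ d₀ * S.P.real (Set.Ioi x) := hmul
      _ ≤ (d₀ + 1) * (threshold c₁ * S.tailDrift x) := by
          gcongr
          exacts [by linarith, S.measureReal_Ioi_le hx]
      _ = (d₀ + 1) * threshold c₁ * S.tailDrift x := by ring
  have hexp : exp 1 * exp (-1) = 1 := by rw [← exp_add, add_neg_cancel, exp_zero]
  refine le_of_mul_le_mul_left (hscaled.trans (le_of_eq ?_)) hs
  linear_combination -(d₀ + 1) * threshold c₁ * S.tailDrift x * hexp

lemma tailDrift_add_nat_mul_le {x : ℝ} (hx : threshold c₁ ≤ x) (n : ℕ) :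
    S.tailDrift (x + n * decayLength c₁ d₀) ≤ exp (-n) * S.tailDrift x := by
  induction n with
  | zero => simp
  | succ n ih =>
    have hL := S.decayLength_pos
    have hstep := S.tailDrift_add_decayLength_le (x := x + n * decayLength c₁ d₀)
      (hx.trans (le_add_of_nonneg_right (by positivity)))
    calc S.tailDrift (x + (n + 1 : ℕ) * decayLength c₁ d₀)
        = S.tailDrift (x + n * decayLength c₁ d₀ + decayLength c₁ d₀) := by push_cast; ring_nf
      _ ≤ exp (-1) * (exp (-n) * S.tailDrift x) := hstep.trans (by gcongr)
      _ = exp (-(n + 1 : ℕ)) * S.tailDrift x := by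
          rw [← mul_assoc, ← exp_add]; push_cast; ring_nf

lemma tailDrift_add_le {x t : ℝ} (hx : threshold c₁ ≤ x) (ht : 0 ≤ t) :
    S.tailDrift (x + t) ≤ exp (1 - t / decayLength c₁ d₀) * S.tailDrift x := by
  have hL := S.decayLength_pos
  have hx0 := (threshold_pos S.drift.c₁_pos).le.trans hx
  obtain ⟨n, hn⟩ : ∃ n, n = ⌊t / decayLength c₁ d₀⌋₊ := ⟨_, rfl⟩
  have hn_le : n * decayLength c₁ d₀ ≤ t := by
    rw [← le_div_iff₀ hL, hn]
    exact Nat.floor_le (by positivity)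
  have hn_lt : t / decayLength c₁ d₀ < n + 1 := hn ▸ Nat.lt_floor_add_one _
  calc S.tailDrift (x + t) ≤ S.tailDrift (x + n * decayLength c₁ d₀) :=
        S.tailDrift_anti (by positivity) (by linarith)
    _ ≤ exp (-n) * S.tailDrift x := S.tailDrift_add_nat_mul_le hx n
    _ ≤ exp (1 - t / decayLength c₁ d₀) * S.tailDrift x := by
        gcongr
        exacts [S.tailDrift_nonneg x, by linarith]

end Decay

section ExponentialMoments

lemma integral_Ioc_exp_mul_tailDrift_le {z b : ℝ} (hz : threshold c₁ ≤ z) (hzb : z ≤ b) :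
    ∫ x in Set.Ioc z b, exp ((x - z) / (2 * decayLength c₁ d₀)) * S.tailDrift x ≤
      2 * decayLength c₁ d₀ * exp 1 * S.tailDrift z := by
  have hL := S.decayLength_pos
  obtain ⟨m, hm⟩ : ∃ m, m = 2 * decayLength c₁ d₀ := ⟨_, rfl⟩
  have hm0 : 0 < m := hm ▸ by positivity
  rw [← hm]
  have hr := S.tailDrift_nonneg z
  have hgrow : Continuous fun x => exp ((x - z) / m) := by fun_prop
  have hdecay : Continuous fun x => exp (-(x - z) / m) := by fun_prop
  have hle : ∀ x ∈ Set.Ioc z b, exp ((x - z) / m) * S.tailDrift x ≤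
      exp 1 * S.tailDrift z * exp (-(x - z) / m) := fun x hx => by
    calc exp ((x - z) / m) * S.tailDrift x
        ≤ exp ((x - z) / m) * (exp (1 - (x - z) / decayLength c₁ d₀) * S.tailDrift z) := by
          have := S.tailDrift_add_le hz (sub_nonneg.2 hx.1.le)
          rw [add_sub_cancel] at this
          gcongr
      _ = exp 1 * S.tailDrift z * exp (-(x - z) / m) := by
          rw [← mul_assoc, ← exp_add, mul_right_comm, ← exp_add, hm]
          congr 2
          field_simp
          ring
  have hint : IntegrableOn (fun x => exp ((x - z) / m) * S.tailDrift x) (Set.Ioc z b) := by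
    rw [← integrable_indicator_iff measurableSet_Ioc]
    have hind := S.integrable_mul_tailDrift
      ((hgrow.integrableOn_Ioc (a := z) (b := b)).integrable_indicator measurableSet_Ioc)
    refine hind.congr (.of_forall fun x => ?_)
    by_cases hx : x ∈ Set.Ioc z b <;> simp [hx]
  calc ∫ x in Set.Ioc z b, exp ((x - z) / m) * S.tailDrift x
      ≤ ∫ x in Set.Ioc z b, exp 1 * S.tailDrift z * exp (-(x - z) / m) :=
        setIntegral_mono_on hint (hdecay.const_mul _).integrableOn_Ioc measurableSet_Ioc hle
    _ ≤ exp 1 * S.tailDrift z * m := by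
        rw [integral_const_mul]
        gcongr
        exact integral_Ioc_exp_neg_sub_div_le hzb hm0
    _ = m * exp 1 * S.tailDrift z := by ring

lemma integral_Ioc_exp_mul_g_le {z b : ℝ} (hz : threshold c₁ ≤ z) (hzb : z ≤ b) :
    ∫ w in Set.Ioc z b, exp ((w - z) / (2 * decayLength c₁ d₀)) * S.g w ∂S.P ≤
      (1 + exp 1) * S.tailDrift z := by
  have hL := S.decayLength_pos
  have hz0 := (threshold_pos S.drift.c₁_pos).le.trans hz
  obtain ⟨m, hm⟩ : ∃ m, m = 2 * decayLength c₁ d₀ := ⟨_, rfl⟩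
  have hm0 : 0 < m := hm ▸ by positivity
  have hcont : Continuous fun x => exp ((x - z) / m) := by fun_prop
  have hF : ∀ x, HasDerivAt (fun x => exp ((x - z) / m)) (m⁻¹ * exp ((x - z) / m)) x := fun x =>
    (((hasDerivAt_id' x).sub_const z).div_const m).exp.congr_deriv (by ring)
  have hnonneg : ∀ w ∈ Set.Ioi z, 0 ≤ (exp ((min w b - z) / m) - exp ((z - z) / m)) * S.g w :=
    fun w hw => mul_nonneg
      (sub_nonneg.2 (by gcongr; exact le_min (le_of_lt hw) hzb))
      (S.drift.nonneg (hz0.trans (le_of_lt hw)))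
  have hint : IntegrableOn (fun w => (exp ((min w b - z) / m) - exp ((z - z) / m)) * S.g w)
      (Set.Ioi z) S.P := by
    refine (S.integrable_g.bdd_mul (c := exp ((b - z) / m) + exp ((z - z) / m))
      (by fun_prop) (.of_forall fun w => (norm_sub_le _ _).trans ?_)).integrableOn
    rw [norm_of_nonneg (exp_pos _).le, norm_of_nonneg (exp_pos _).le]
    gcongr
    exact min_le_right w b
  have hnu : ∫ w in Set.Ioi z, (exp ((min w b - z) / m) - exp ((z - z) / m)) * S.g w ∂S.P ≤
      exp 1 * S.tailDrift z := by
    rw [← S.integral_indicator_Ioc_snd hzb (hcont.const_mul _) hF,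
      S.integral_snd ((hcont.const_mul _).measurable.indicator measurableSet_Ioc)]
    simp only [← Set.indicator_mul_left]
    rw [integral_indicator measurableSet_Ioc]
    simp only [mul_assoc]
    rw [integral_const_mul, inv_mul_le_iff₀ hm0, ← mul_assoc, hm]
    exact S.integral_Ioc_exp_mul_tailDrift_le hz hzb
  have hsplit : ∫ w in Set.Ioc z b, exp ((w - z) / m) * S.g w ∂S.P =
      (∫ w in Set.Ioc z b, (exp ((min w b - z) / m) - exp ((z - z) / m)) * S.g w ∂S.P) +
        ∫ w in Set.Ioc z b, S.g w ∂S.P := by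
    rw [← integral_add (hint.mono_set Set.Ioc_subset_Ioi_self) S.integrable_g.integrableOn]
    refine setIntegral_congr_fun measurableSet_Ioc fun w hw => ?_
    simp only [min_eq_left hw.2, sub_self, zero_div, exp_zero]
    ring
  rw [← hm, hsplit]
  linarith [S.setIntegral_add_tailDrift hzb, S.tailDrift_nonneg b,
    setIntegral_mono_set hint (ae_restrict_of_forall_mem measurableSet_Ioi hnonneg)
      (Set.Ioc_subset_Ioi_self : Set.Ioc z b ⊆ Set.Ioi z).eventuallyLE]

lemma integrableOn_exp_mul_g {z : ℝ} (hz : threshold c₁ ≤ z) :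
    IntegrableOn (fun w => exp ((w - z) / (2 * decayLength c₁ d₀)) * S.g w) (Set.Ioi z) S.P ∧
      ∫ w in Set.Ioi z, exp ((w - z) / (2 * decayLength c₁ d₀)) * S.g w ∂S.P ≤
        (1 + exp 1) * S.tailDrift z := by
  obtain ⟨m, hm⟩ : ∃ m, m = 2 * decayLength c₁ d₀ := ⟨_, rfl⟩
  have hz0 := (threshold_pos S.drift.c₁_pos).le.trans hz
  have hcover : AECover (S.P.restrict (Set.Ioi z)) Filter.atTop fun b : ℝ => Set.Iic b :=
    aecover_Iic Filter.tendsto_id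
  have hIoc : ∀ b, (S.P.restrict (Set.Ioi z)).restrict (Set.Iic b) =
      S.P.restrict (Set.Ioc z b) := fun b => by
    rw [Measure.restrict_restrict measurableSet_Iic, Set.inter_comm, Set.Ioi_inter_Iic]
  have hbound : ∀ᶠ b in Filter.atTop, ∫ w in Set.Iic b,
      exp ((w - z) / m) * S.g w ∂S.P.restrict (Set.Ioi z) ≤ (1 + exp 1) * S.tailDrift z := by
    filter_upwards [Filter.eventually_ge_atTop z] with b hb
    rw [hIoc, hm]
    exact S.integral_Ioc_exp_mul_g_le hz hb
  have hint : IntegrableOn (fun w => exp ((w - z) / m) * S.g w) (Set.Ioi z) S.P := by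
    refine hcover.integrable_of_integral_bounded_of_nonneg_ae _ (fun b => ?_)
      (ae_restrict_of_forall_mem measurableSet_Ioi fun w hw =>
        mul_nonneg (exp_pos _).le (S.drift.nonneg (hz0.trans (le_of_lt hw)))) hbound
    rw [IntegrableOn, hIoc]
    have hcont : Continuous fun w => exp ((w - z) / m) * S.g w :=
      (by fun_prop : Continuous fun w => exp ((w - z) / m)).mul S.drift.continuous
    exact hcont.integrableOn_Icc.mono_set Set.Ioc_subset_Icc_self
  rw [← hm]
  exact ⟨hint, le_of_tendsto (hcover.integral_tendsto_of_countably_generated hint) hbound⟩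

end ExponentialMoments

section ModerateRange

variable {A x z : ℝ}

/-- An upper bound for `|κ w - 1|` that is uniform over `-2 ≤ w ≤ z + 2`. -/
noncomputable def deviation (S : SteinTransport c₁ c₃ d₀ τ) (z : ℝ) : ℝ :=
  2 * S.δ₁ * (exp (c₃ * 2) * (1 + S.g z)) ^ τ

/-- The range of moderate deviations: the points `z` at which both error terms are bounded by `A`
and `κ` is bounded away from `0`. -/
structure Regime (S : SteinTransport c₁ c₃ d₀ τ) (A z : ℝ) : Prop where
  nonneg : 0 ≤ z
  δ_mul_le : S.δ * ((1 + z) * (1 + S.g z) ^ 2) ≤ A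
  δ₁_mul_le : S.δ₁ * ((1 + z) * (1 + S.g z) ^ (τ + 1)) ≤ A
  deviation_le : S.deviation z ≤ 1 / 2

lemma deviation_nonneg (hz : 0 ≤ z) : 0 ≤ S.deviation z := by
  have := S.δ₁_pos
  have := S.drift.nonneg hz
  unfold deviation
  positivity

lemma abs_κ_sub_one_le_deviation (hz : 0 ≤ z) :
    ∀ᵐ w ∂S.P, -2 ≤ w → w ≤ z + 2 → |S.κ w - 1| ≤ S.deviation z := by
  filter_upwards [S.abs_κ_sub_one_le] with w hw hw₁ hw₂
  have hτ := S.τ_nonneg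
  have hδ₁ := S.δ₁_pos
  calc |S.κ w - 1| ≤ S.δ₁ * (|S.g w| ^ τ + 1) := hw
    _ ≤ S.δ₁ * ((1 + |S.g w|) ^ τ + (1 + |S.g w|) ^ τ) := by
        gcongr
        exacts [by linarith, one_le_rpow (by linarith [abs_nonneg (S.g w)]) hτ]
    _ = 2 * S.δ₁ * (1 + |S.g w|) ^ τ := by ring
    _ ≤ S.deviation z := by
        unfold deviation
        gcongr
        exact S.drift.one_add_abs_le_exp_mul hz zero_le_two hw₁ hw₂

namespace Regime

variable {S}

lemma mono (h : S.Regime A z) (hx : 0 ≤ x) (hxz : x ≤ z) : S.Regime A x := by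
  have hz := hx.trans hxz
  have hg := S.drift.monotone hxz
  have hgx := S.drift.nonneg hx
  have hδ := S.δ_pos
  have hδ₁ := S.δ₁_pos
  have hτ := S.τ_nonneg
  refine ⟨hx, le_trans ?_ h.δ_mul_le, le_trans ?_ h.δ₁_mul_le, le_trans ?_ h.deviation_le⟩
  · gcongr
  · gcongr
  · unfold deviation
    gcongr

lemma one_le (h : S.Regime A z) : 1 ≤ 1 + S.g z := by linarith [S.drift.nonneg h.nonneg]

lemma δ_mul_g_le (h : S.Regime A z) : S.δ * (1 + S.g z) ≤ A := by
  have hδ := S.δ_pos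
  refine le_trans ?_ h.δ_mul_le
  gcongr
  nlinarith [h.one_le, h.nonneg, mul_nonneg h.nonneg (sq_nonneg (1 + S.g z))]

lemma half_le_κ (h : S.Regime A z) : ∀ᵐ w ∂S.P, -2 ≤ w → w ≤ z + 2 → 1 ≤ 2 * S.κ w := by
  filter_upwards [S.abs_κ_sub_one_le_deviation h.nonneg] with w hw hw₁ hw₂
  linarith [(abs_le.1 (hw hw₁ hw₂)).1, h.deviation_le]

end Regime

end ModerateRange

section APriori

variable {A x z : ℝ}

/-- The exponent lost when a weight `g e^G` on `(0, z]` is moved by the plan: `1 - e^{-loss}` is the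
amount by which the exponent `G` has to be lowered to absorb the move. -/
noncomputable def loss (S : SteinTransport c₁ c₃ d₀ τ) (z : ℝ) : ℝ :=
  c₃ * S.δ * (1 + threshold c₁) + S.δ * (1 + S.g z) + S.deviation z

lemma loss_nonneg (hz : 0 ≤ z) : 0 ≤ S.loss z := by
  have := S.δ_pos
  have := S.drift.c₃_nonneg
  have := S.drift.nonneg hz
  have := S.deviation_nonneg hz
  have := threshold_pos S.drift.c₁_pos
  unfold loss
  positivity

/-- The weight `e^{l G}` with the exponent `l = e^{-loss}` that survives a move by the plan. -/
noncomputable def tiltedExp (S : SteinTransport c₁ c₃ d₀ τ) (z x : ℝ) : ℝ :=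
  exp (exp (-S.loss z) * Gfun S.g x)

/-- The derivative of `tiltedExp`. -/
noncomputable def tilt (S : SteinTransport c₁ c₃ d₀ τ) (z x : ℝ) : ℝ :=
  exp (-S.loss z) * S.g x * S.tiltedExp z x

/-- A bound for `g e^G` within distance `1` of `[0, threshold c₁]`. -/
noncomputable def coreBound (c₁ c₃ : ℝ) : ℝ :=
  exp (c₃ * (threshold c₁ + 1)) * exp ((threshold c₁ + 1) * exp (c₃ * (threshold c₁ + 1)))

/-- A bound for the values of `tilt` on `(0, z]` within distance `δ` of `w`. -/
noncomputable def tiltBound (S : SteinTransport c₁ c₃ d₀ τ) (z w : ℝ) : ℝ :=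
  coreBound c₁ c₃ + (Set.Ioc (threshold c₁) (z + S.δ)).indicator
    (fun w => exp (-S.deviation z) * (S.tiltedExp z (min w z) * S.g (min w z))) w

lemma continuous_tiltedExp : Continuous (S.tiltedExp z) :=
  ((continuous_Gfun S.drift.continuous).const_mul _).rexp

lemma continuous_tilt : Continuous (S.tilt z) :=
  (S.drift.continuous.const_mul _).mul S.continuous_tiltedExp

lemma hasDerivAt_tiltedExp : HasDerivAt (S.tiltedExp z) (S.tilt z x) x :=
  (((hasDerivAt_Gfun S.drift.continuous x).const_mul _).exp).congr_deriv
    (by unfold tilt tiltedExp; ring)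

lemma exp_neg_loss_le_one (hz : 0 ≤ z) : exp (-S.loss z) ≤ 1 :=
  exp_le_one_iff.2 (neg_nonpos.2 (S.loss_nonneg hz))

lemma tilt_le_coreBound (hx : 0 ≤ x) (hx' : x ≤ threshold c₁ + 1) (hz : 0 ≤ z) :
    S.tilt z x ≤ coreBound c₁ c₃ := by
  have hl := S.exp_neg_loss_le_one hz
  refine mul_le_mul ?_ (exp_le_exp.2 ?_) (exp_pos _).le (exp_pos _).le
  · calc exp (-S.loss z) * S.g x ≤ 1 + S.g x := by
          linarith [mul_le_of_le_one_left (S.drift.nonneg hx) hl]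
      _ ≤ exp (c₃ * x) := S.drift.one_add_le_exp hx
      _ ≤ _ := by
        have := S.drift.c₃_nonneg
        gcongr
  · exact (mul_le_of_le_one_left (S.drift.Gfun_nonneg x) hl).trans
      (S.drift.Gfun_le_mul_exp hx hx')

lemma tilt_le_of_threshold_le {w : ℝ} (hx : 0 ≤ x) (hxz : x ≤ z)
    (hw : threshold c₁ ≤ min w z) (hxw : x ≤ w + S.δ) :
    S.tilt z x ≤ exp (-S.deviation z) * (S.tiltedExp z (min w z) * S.g (min w z)) := by
  have hδ := S.δ_pos.le
  have hz := hx.trans hxz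
  have hv : x ≤ min w z + S.δ := by
    rcases min_choice w z with h | h <;> rw [h] <;> linarith
  have hgv := S.drift.nonneg ((threshold_pos S.drift.c₁_pos).le.trans hw)
  have hgz : 0 ≤ S.δ * S.g z := mul_nonneg hδ (S.drift.nonneg hz)
  have hG : exp (-S.loss z) * Gfun S.g x ≤
      exp (-S.loss z) * Gfun S.g (min w z) + S.δ * (1 + S.g z) := by
    have := mul_le_mul_of_nonneg_left (S.drift.Gfun_le_add hx hv hxz hδ) (exp_pos (-S.loss z)).le
    have := mul_le_of_le_one_left hgz (S.exp_neg_loss_le_one hz)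
    linarith
  calc S.tilt z x
      ≤ exp (-S.loss z) * (exp (c₃ * S.δ * (1 + threshold c₁)) * S.g (min w z)) *
          exp (exp (-S.loss z) * Gfun S.g (min w z) + S.δ * (1 + S.g z)) := by
        unfold tilt tiltedExp
        gcongr
        exact S.drift.le_exp_mul hw hδ hv
    _ = exp (-S.loss z + c₃ * S.δ * (1 + threshold c₁) + S.δ * (1 + S.g z)) *
          (S.tiltedExp z (min w z) * S.g (min w z)) := by
        simp only [tiltedExp, exp_add]
        ring
    _ = _ := by
        congr 2
        unfold loss
        ring

lemma coreBound_nonneg (c₁ c₃ : ℝ) : 0 ≤ coreBound c₁ c₃ := by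
  unfold coreBound
  positivity

lemma coreBound_le_tiltBound (hz : 0 ≤ z) (w : ℝ) : coreBound c₁ c₃ ≤ S.tiltBound z w := by
  refine le_add_of_nonneg_right (Set.indicator_nonneg (fun w hw => ?_) w)
  have := S.drift.nonneg (le_min ((threshold_pos S.drift.c₁_pos).trans hw.1).le hz)
  unfold tiltedExp
  positivity

lemma indicator_tilt_le_tiltBound (hz : 0 ≤ z) {w : ℝ} (hxw : |x - w| ≤ S.δ) :
    (Set.Ioc 0 z).indicator (S.tilt z) x ≤ S.tiltBound z w := by
  have hxw := abs_le.1 hxw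
  by_cases hx : x ∈ Set.Ioc 0 z
  · rw [Set.indicator_of_mem hx]
    rcases le_or_gt (min w z) (threshold c₁) with hw | hw
    · refine (S.tilt_le_coreBound hx.1.le ?_ hz).trans (S.coreBound_le_tiltBound hz w)
      rcases min_le_iff.1 hw with h | h <;> linarith [S.δ_le, hx.2]
    · have hmem : w ∈ Set.Ioc (threshold c₁) (z + S.δ) :=
        ⟨(lt_min_iff.1 hw).1, by linarith [hx.2]⟩
      rw [tiltBound, Set.indicator_of_mem hmem]
      exact (S.tilt_le_of_threshold_le hx.1.le hx.2 hw.le (by linarith)).trans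
        (le_add_of_nonneg_left (coreBound_nonneg c₁ c₃))
  · rw [Set.indicator_of_notMem hx]
    exact (coreBound_nonneg c₁ c₃).trans (S.coreBound_le_tiltBound hz w)

lemma κ_mul_tiltBound_le (hz : 0 ≤ z) :
    ∀ᵐ w ∂S.P, S.κ w * S.tiltBound z w ≤ d₀ * coreBound c₁ c₃ +
      (Set.Ioc 0 (z + S.δ)).indicator (fun w => S.tiltedExp z (min w z) * S.g w) w := by
  filter_upwards [S.κ_le, S.κ_nonneg, S.abs_κ_sub_one_le_deviation hz] with w hd _ hdev
  have hz₀ := threshold_pos S.drift.c₁_pos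
  rw [tiltBound, mul_add]
  refine add_le_add (mul_le_mul_of_nonneg_right hd (coreBound_nonneg c₁ c₃)) ?_
  by_cases hw : w ∈ Set.Ioc (threshold c₁) (z + S.δ)
  · have hw0 : w ∈ Set.Ioc 0 (z + S.δ) := ⟨hz₀.trans hw.1, hw.2⟩
    have hκ : S.κ w ≤ exp (S.deviation z) := by
      linarith [(abs_le.1 (hdev (by linarith [hw0.1]) (by linarith [hw.2, S.δ_le]))).2,
        add_one_le_exp (S.deviation z)]
    have hgw := S.drift.nonneg (le_min hw0.1.le hz)
    have hF : 0 < S.tiltedExp z (min w z) := exp_pos _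
    rw [Set.indicator_of_mem hw, Set.indicator_of_mem hw0]
    calc S.κ w * (exp (-S.deviation z) * (S.tiltedExp z (min w z) * S.g (min w z)))
        ≤ exp (S.deviation z) * (exp (-S.deviation z) *
            (S.tiltedExp z (min w z) * S.g w)) := by
          gcongr
          exact S.drift.monotone (min_le_left w z)
      _ = S.tiltedExp z (min w z) * S.g w := by
          rw [← mul_assoc, ← exp_add, add_neg_cancel, exp_zero, one_mul]
  · rw [Set.indicator_of_notMem hw, mul_zero]
    exact Set.indicator_nonneg
      (fun w hw => mul_nonneg (exp_pos _).le (S.drift.nonneg hw.1.le)) w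

lemma exists_abs_indicator_Ioc_le {φ : ℝ → ℝ} (hφ : Continuous φ) (a b : ℝ) :
    ∃ B, ∀ x, |(Set.Ioc a b).indicator φ x| ≤ B := by
  obtain ⟨B, hB⟩ := isCompact_Icc.exists_bound_of_continuousOn (s := Set.Icc a b) hφ.continuousOn
  refine ⟨max B 0, fun x => ?_⟩
  by_cases hx : x ∈ Set.Ioc a b
  · rw [Set.indicator_of_mem hx]
    exact (hB x (Set.Ioc_subset_Icc_self hx)).trans (le_max_left _ _)
  · simp [hx]

lemma integrable_indicator_Ioc {φ : ℝ → ℝ} (hφ : Continuous φ) (a b : ℝ) :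
    Integrable ((Set.Ioc a b).indicator φ) S.P :=
  (hφ.integrableOn_Icc.mono_set Set.Ioc_subset_Icc_self).integrable_indicator measurableSet_Ioc

lemma integral_tilt_snd_le (hz : 0 ≤ z) :
    ∫ p, (Set.Ioc 0 z).indicator (S.tilt z) p.2 ∂S.plan ≤ d₀ * coreBound c₁ c₃ +
      ∫ w in Set.Ioc 0 (z + S.δ), S.tiltedExp z (min w z) * S.g w ∂S.P := by
  have hg := S.drift.continuous
  have hF := S.continuous_tiltedExp (z := z)
  have hb : Continuous fun w =>
      exp (-S.deviation z) * (S.tiltedExp z (min w z) * S.g (min w z)) := by fun_prop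
  have hFg : Continuous fun w => S.tiltedExp z (min w z) * S.g w := by fun_prop
  have hΨm : Measurable (S.tiltBound z) :=
    measurable_const.add (hb.measurable.indicator measurableSet_Ioc)
  have hΨ : Integrable (S.tiltBound z) S.P :=
    (integrable_const _).add (S.integrable_indicator_Ioc hb _ _)
  have hFgP := S.integrable_indicator_Ioc hFg 0 (z + S.δ)
  obtain ⟨B, hB⟩ := exists_abs_indicator_Ioc_le S.continuous_tilt 0 z
  calc ∫ p, (Set.Ioc 0 z).indicator (S.tilt z) p.2 ∂S.plan
      ≤ ∫ w, S.κ w * S.tiltBound z w ∂S.P := by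
        exact S.integral_snd_le_integral_fst (S.integrable_snd_of_bounded
          (S.continuous_tilt.measurable.indicator measurableSet_Ioc) hB) hΨm hΨ
          fun w x => S.indicator_tilt_le_tiltBound hz
    _ ≤ ∫ w, (d₀ * coreBound c₁ c₃ + (Set.Ioc 0 (z + S.δ)).indicator
          (fun w => S.tiltedExp z (min w z) * S.g w) w) ∂S.P :=
        integral_mono_ae (S.integrable_κ_mul hΨ) ((integrable_const _).add hFgP)
          (S.κ_mul_tiltBound_le hz)
    _ = _ := by
        rw [integral_add (integrable_const _) hFgP, integral_indicator measurableSet_Ioc]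
        simp

lemma tiltedExp_mul_tailDrift_le (hz : 0 ≤ z) :
    S.tiltedExp z z * S.tailDrift (z + S.δ) ≤ d₀ * coreBound c₁ c₃ + S.tailDrift 0 := by
  have hδ := S.δ_pos
  have hF := S.continuous_tiltedExp (z := z)
  have hFg : IntegrableOn (fun w => S.tiltedExp z (min w z) * S.g w) (Set.Ioi 0) S.P := by
    refine S.integrable_g.integrableOn.bdd_mul (c := S.tiltedExp z z) (by fun_prop)
      (ae_restrict_of_forall_mem measurableSet_Ioi fun w hw => ?_)
    rw [tiltedExp, tiltedExp, norm_of_nonneg (exp_pos _).le]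
    gcongr
    exact S.drift.Gfun_mono (le_min (le_of_lt hw) hz) (min_le_right w z)
  have hidentity : ∫ p, (Set.Ioc 0 z).indicator (S.tilt z) p.2 ∂S.plan =
      (∫ w in Set.Ioi 0, S.tiltedExp z (min w z) * S.g w ∂S.P) - S.tailDrift 0 := by
    rw [S.integral_indicator_Ioc_snd hz S.continuous_tilt fun x => S.hasDerivAt_tiltedExp,
      tailDrift, ← integral_sub hFg S.integrable_g.integrableOn]
    refine setIntegral_congr_fun measurableSet_Ioi fun w _ => ?_
    simp only [tiltedExp, Gfun_zero, mul_zero, exp_zero]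
    ring
  have hsplit : ∫ w in Set.Ioi 0, S.tiltedExp z (min w z) * S.g w ∂S.P =
      (∫ w in Set.Ioc 0 (z + S.δ), S.tiltedExp z (min w z) * S.g w ∂S.P) +
        S.tiltedExp z z * S.tailDrift (z + S.δ) := by
    rw [← Set.Ioc_union_Ioi_eq_Ioi (by linarith : 0 ≤ z + S.δ),
      setIntegral_union (Set.Ioc_disjoint_Ioi le_rfl) measurableSet_Ioi
        (hFg.mono_set Set.Ioc_subset_Ioi_self) (hFg.mono_set (Set.Ioi_subset_Ioi (by linarith))),
      tailDrift, ← integral_const_mul]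
    congr 1
    refine setIntegral_congr_fun measurableSet_Ioi fun w hw => ?_
    rw [min_eq_right (by linarith [Set.mem_Ioi.1 hw])]
  linarith [S.integral_tilt_snd_le hz]

lemma Regime.loss_mul_Gfun_le (h : S.Regime A z) :
    S.loss z * Gfun S.g z ≤ (c₃ * (1 + threshold c₁) + 1 + 2 * exp (c₃ * 2) ^ τ) * A := by
  have hz := h.nonneg
  have hg := S.drift.nonneg hz
  have hc₃ := S.drift.c₃_nonneg
  have hz₀ := threshold_pos S.drift.c₁_pos
  have hδ := S.δ_pos
  have := S.δ₁_pos
  have hG : Gfun S.g z ≤ (1 + z) * (1 + S.g z) := (S.drift.Gfun_le z).trans (by nlinarith)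
  have hpow : (exp (c₃ * 2) * (1 + S.g z)) ^ τ * (1 + S.g z) =
      exp (c₃ * 2) ^ τ * (1 + S.g z) ^ (τ + 1) := by
    rw [mul_rpow (exp_pos _).le (by linarith), rpow_add_one (by linarith), mul_assoc]
  calc S.loss z * Gfun S.g z ≤ S.loss z * ((1 + z) * (1 + S.g z)) :=
        mul_le_mul_of_nonneg_left hG (S.loss_nonneg hz)
    _ = c₃ * (1 + threshold c₁) * (S.δ * ((1 + z) * (1 + S.g z))) +
          S.δ * ((1 + z) * (1 + S.g z) ^ 2) +
          2 * S.δ₁ * (1 + z) * ((exp (c₃ * 2) * (1 + S.g z)) ^ τ * (1 + S.g z)) := by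
        unfold loss deviation
        ring
    _ = c₃ * (1 + threshold c₁) * (S.δ * ((1 + z) * (1 + S.g z))) +
          S.δ * ((1 + z) * (1 + S.g z) ^ 2) +
          2 * exp (c₃ * 2) ^ τ * (S.δ₁ * ((1 + z) * (1 + S.g z) ^ (τ + 1))) := by
        rw [hpow]
        ring
    _ ≤ c₃ * (1 + threshold c₁) * A + A + 2 * exp (c₃ * 2) ^ τ * A := by
        gcongr
        · refine le_trans ?_ h.δ_mul_le
          gcongr
          exact le_self_pow₀ h.one_le two_ne_zero
        · exact h.δ_mul_le
        · exact h.δ₁_mul_le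
    _ = _ := by ring

lemma Regime.tailDrift_add_le (h : S.Regime A z) :
    S.tailDrift (z + S.δ) ≤ (d₀ * coreBound c₁ c₃ + (exp c₃ + d₀)) *
      exp ((c₃ * (1 + threshold c₁) + 1 + 2 * exp (c₃ * 2) ^ τ) * A) * exp (-Gfun S.g z) := by
  have hG := S.drift.Gfun_nonneg z
  have hd₀ := S.d₀_nonneg
  have hcore := coreBound_nonneg c₁ c₃
  have := S.tailDrift_nonneg (z + S.δ)
  have hF : Gfun S.g z - S.loss z * Gfun S.g z ≤ exp (-S.loss z) * Gfun S.g z := by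
    linarith [mul_le_mul_of_nonneg_right (add_one_le_exp (-S.loss z)) hG]
  rw [mul_assoc, ← exp_add]
  calc S.tailDrift (z + S.δ)
      = S.tiltedExp z z * S.tailDrift (z + S.δ) * exp (-(exp (-S.loss z) * Gfun S.g z)) := by
        rw [tiltedExp, mul_right_comm, ← exp_add, add_neg_cancel, exp_zero, one_mul]
    _ ≤ _ := by
        gcongr
        · linarith [S.tiltedExp_mul_tailDrift_le h.nonneg, S.tailDrift_zero_le]
        · linarith [h.loss_mul_Gfun_le]

lemma exists_tailDrift_le (c₁ c₃ d₀ τ A : ℝ) :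
    ∃ C, 0 < C ∧ ∀ S : SteinTransport c₁ c₃ d₀ τ, ∀ z, S.Regime A z → ∀ x, z - 2 * S.δ ≤ x →
      S.tailDrift x ≤ C * exp (-Gfun S.g z) := by
  obtain ⟨M, hM⟩ : ∃ M, M = (c₃ * (1 + threshold c₁) + 1 + 2 * exp (c₃ * 2) ^ τ) * A := ⟨_, rfl⟩
  have hcore := coreBound_nonneg c₁ c₃
  refine ⟨(|d₀| * coreBound c₁ c₃ + (exp c₃ + |d₀|)) * exp |M| * exp (3 * A), by positivity,
    fun S z h x hx => ?_⟩
  have hd₀ := S.d₀_nonneg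
  have hδ := S.δ_pos
  have hz := h.nonneg
  have hg := S.drift.nonneg hz
  have hδg := h.δ_mul_g_le
  have hGz := S.drift.Gfun_le z
  rw [mul_assoc, ← exp_add, abs_of_nonneg hd₀]
  rcases le_or_gt (3 * S.δ) z with hzδ | hzδ
  · have h' := h.mono (x := z - 3 * S.δ) (by linarith) (by linarith)
    have hshift := mul_sub_le_Gfun_sub S.drift.monotone z (z - 3 * S.δ)
    calc S.tailDrift x ≤ S.tailDrift (z - 3 * S.δ + S.δ) :=
          S.tailDrift_anti (by linarith) (by linarith)
      _ ≤ (d₀ * coreBound c₁ c₃ + (exp c₃ + d₀)) * exp M * exp (-Gfun S.g (z - 3 * S.δ)) :=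
          hM ▸ h'.tailDrift_add_le
      _ ≤ _ := by
          gcongr
          exacts [le_abs_self M, by linarith]
  · have hzg : z * S.g z ≤ 3 * S.δ * S.g z := by gcongr
    calc S.tailDrift x ≤ (0 + (exp c₃ + d₀)) * 1 * 1 := by
          linarith [S.tailDrift_le_zero x, S.tailDrift_zero_le]
      _ ≤ _ := by
          gcongr
          exacts [by positivity, one_le_exp (abs_nonneg M), one_le_exp (by linarith)]

end APriori

section LocalBounds

lemma Regime.setIntegral_Ioc_le {S : SteinTransport c₁ c₃ d₀ τ} {A z a b M : ℝ} {φ ψ : ℝ → ℝ}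
    (h : S.Regime A z) (ha : -2 ≤ a) (hab : a ≤ b) (hb : b ≤ z + 2) (hφ : Continuous φ)
    (hφ0 : ∀ w, 0 ≤ φ w) (hψ : Continuous ψ) (hψ0 : ∀ x, 0 ≤ ψ x)
    (hφψ : ∀ w ∈ Set.Ioc a b, ∀ x, |x - w| ≤ S.δ → φ w ≤ ψ x)
    (hM : ∀ x ∈ Set.Ioc (a - S.δ) (b + S.δ), ψ x * S.tailDrift x ≤ M) :
    ∫ w in Set.Ioc a b, φ w ∂S.P ≤ 2 * (b - a + 2 * S.δ) * M := by
  have hδ := S.δ_pos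
  obtain ⟨B, hB⟩ := exists_abs_indicator_Ioc_le hψ (a - S.δ) (b + S.δ)
  have hψi : Integrable ((Set.Ioc (a - S.δ) (b + S.δ)).indicator ψ) :=
    hψ.integrableOn_Ioc.integrable_indicator measurableSet_Ioc
  have hone : Integrable ((Set.Ioc (a - S.δ) (b + S.δ)).indicator (1 : ℝ → ℝ)) :=
    (integrableOn_const (by simp)).integrable_indicator measurableSet_Ioc
  calc ∫ w in Set.Ioc a b, φ w ∂S.P = ∫ w, (Set.Ioc a b).indicator φ w ∂S.P :=
        (integral_indicator measurableSet_Ioc).symm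
    _ ≤ 2 * ∫ x, (Set.Ioc (a - S.δ) (b + S.δ)).indicator ψ x * S.tailDrift x := by
        refine S.integral_le_two_mul_integral_snd (hφ.measurable.indicator measurableSet_Ioc)
          (S.integrable_indicator_Ioc hφ a b) ?_ (hψ.measurable.indicator measurableSet_Ioc) hB
          fun w x hxw => ?_
        · filter_upwards [h.half_le_κ] with w hκ
          by_cases hw : w ∈ Set.Ioc a b
          · rw [Set.indicator_of_mem hw, ← mul_assoc]
            exact le_mul_of_one_le_left (hφ0 w) (hκ (by linarith [hw.1]) (by linarith [hw.2]))
          · simp [hw]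
        · by_cases hw : w ∈ Set.Ioc a b
          · have := abs_le.1 hxw
            have hx : x ∈ Set.Ioc (a - S.δ) (b + S.δ) := ⟨by linarith [hw.1], by linarith [hw.2]⟩
            rw [Set.indicator_of_mem hw, Set.indicator_of_mem hx]
            exact hφψ w hw x hxw
          · rw [Set.indicator_of_notMem hw]
            exact Set.indicator_nonneg (fun _ _ => hψ0 _) x
    _ ≤ 2 * ∫ x, (Set.Ioc (a - S.δ) (b + S.δ)).indicator 1 x * M := by
        gcongr 2 * ?_
        refine integral_mono (S.integrable_mul_tailDrift hψi) (hone.mul_const _) fun x => ?_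
        by_cases hx : x ∈ Set.Ioc (a - S.δ) (b + S.δ)
        · simpa [hx] using hM x hx
        · simp [hx]
    _ = 2 * (b - a + 2 * S.δ) * M := by
        rw [integral_mul_const, integral_indicator_one measurableSet_Ioc,
          volume_real_Ioc_of_le (by linarith)]
        ring

lemma exists_measureReal_Ioc_le (c₁ c₃ d₀ τ A : ℝ) :
    ∃ C, 0 < C ∧ ∀ S : SteinTransport c₁ c₃ d₀ τ, ∀ z, S.Regime A z →
      S.P.real (Set.Ioc (z - S.δ) (z + S.δ)) ≤ C * S.δ * exp (-Gfun S.g z) := by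
  obtain ⟨C, hC, hr⟩ := exists_tailDrift_le c₁ c₃ d₀ τ A
  refine ⟨8 * C, by positivity, fun S z h => ?_⟩
  have hz := h.nonneg
  have hδ := S.δ_pos
  have hδ' := S.δ_le
  rw [← setIntegral_one_eq_measureReal]
  refine (h.setIntegral_Ioc_le (ψ := fun _ => 1) (M := C * exp (-Gfun S.g z)) (by linarith)
    (by linarith) (by linarith) continuous_const (fun _ => zero_le_one) continuous_const
    (fun _ => zero_le_one) (fun _ _ _ _ => le_rfl) fun x hx => ?_).trans_eq (by ring)
  rw [one_mul]
  exact hr S z h x (by linarith [hx.1])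

lemma exists_integral_exp_Gfun_le (c₁ c₃ d₀ τ A : ℝ) :
    ∃ C, 0 < C ∧ ∀ S : SteinTransport c₁ c₃ d₀ τ, ∀ z, S.Regime A z →
      ∫ w in Set.Ioc 0 z, exp (Gfun S.g w) ∂S.P ≤ C * (1 + z) := by
  obtain ⟨C, hC, hr⟩ := exists_tailDrift_le c₁ c₃ d₀ τ A
  refine ⟨2 * (exp A * C), by positivity, fun S z h => ?_⟩
  have hz := h.nonneg
  have hδ := S.δ_pos
  have hδ' := S.δ_le
  have hG := continuous_Gfun S.drift.continuous
  have hclamp : ∀ x, 0 ≤ max 0 (min x z) ∧ max 0 (min x z) ≤ z := fun x =>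
    ⟨le_max_left _ _, max_le hz (min_le_right _ _)⟩
  calc ∫ w in Set.Ioc 0 z, exp (Gfun S.g w) ∂S.P ≤ 2 * (z - 0 + 2 * S.δ) * (exp A * C) := by
        refine h.setIntegral_Ioc_le (ψ := fun x => exp (A + Gfun S.g (max 0 (min x z))))
          (by linarith) hz (by linarith) hG.rexp (fun _ => (exp_pos _).le) (by fun_prop)
          (fun _ => (exp_pos _).le) (fun w hw x hxw => ?_) fun x hx => ?_
        · have hwx : w ≤ max 0 (min x z) + S.δ := by
            have := abs_le.1 hxw
            rcases min_choice x z with hm | hm <;>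
              linarith [hw.2, le_max_right 0 (min x z)]
          refine exp_le_exp.2 ?_
          linarith [S.drift.Gfun_le_add hw.1.le hwx hw.2 hδ.le, h.δ_mul_g_le]
        · have hxc : max 0 (min x z) - 2 * S.δ ≤ x := by
            rcases max_choice 0 (min x z) with hm | hm <;> rw [hm]
            · linarith [hx.1]
            · linarith [min_le_left x z]
          calc exp (A + Gfun S.g (max 0 (min x z))) * S.tailDrift x
              ≤ exp (A + Gfun S.g (max 0 (min x z))) *
                  (C * exp (-Gfun S.g (max 0 (min x z)))) := by
                gcongr
                exact hr S _ (h.mono (hclamp x).1 (hclamp x).2) x hxc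
            _ = exp A * C := by
                rw [mul_left_comm, ← exp_add, add_neg_cancel_right, mul_comm]
    _ ≤ 2 * (exp A * C) * (1 + z) := by
        have : 0 < exp A * C := by positivity
        nlinarith

end LocalBounds

section TailMoments

lemma exists_setIntegral_Ioi_le_tailDrift (c₁ c₃ d₀ τ : ℝ) {m : ℝ} (hm : 0 ≤ m) :
    ∃ C, 0 < C ∧ ∀ S : SteinTransport c₁ c₃ d₀ τ, ∀ z, threshold c₁ ≤ z →
      IntegrableOn (fun w => (1 + S.g w) ^ m) (Set.Ioi z) S.P ∧
        ∫ w in Set.Ioi z, (1 + S.g w) ^ m ∂S.P ≤ C * (1 + S.g z) ^ m * S.tailDrift z := by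
  rcases isEmpty_or_nonempty (SteinTransport c₁ c₃ d₀ τ) with hS | ⟨⟨S₀⟩⟩
  · exact ⟨1, one_pos, fun S => (hS.false S).elim⟩
  have hz₀ := threshold_pos S₀.drift.c₁_pos
  have hc₃ := S₀.drift.c₃_nonneg
  have hL := S₀.decayLength_pos
  obtain ⟨K, hK, hpow⟩ := exists_one_add_rpow_le_mul_exp (c₃ * m) (l := 2 * decayLength c₁ d₀)
    (by positivity) (by positivity)
  refine ⟨K * threshold c₁ * (1 + exp 1), by positivity, fun S z hz => ?_⟩
  have hz0 := hz₀.le.trans hz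
  have hgz := S.drift.nonneg hz0
  obtain ⟨hint, hle⟩ := S.integrableOn_exp_mul_g hz
  have hbound : ∀ w ∈ Set.Ioi z, (1 + S.g w) ^ m ≤ K * threshold c₁ * (1 + S.g z) ^ m *
      (exp ((w - z) / (2 * decayLength c₁ d₀)) * S.g w) := fun w hw => by
    have hzw : 0 ≤ w - z := sub_nonneg.2 (le_of_lt hw)
    have hgw := S.drift.nonneg (hz0.trans (le_of_lt hw))
    calc (1 + S.g w) ^ m ≤ ((1 + (w - z)) ^ c₃ * (1 + S.g z)) ^ m := by
          gcongr
          simpa using S.drift.one_add_le_rpow_mul hz0 hzw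
      _ = (1 + (w - z)) ^ (c₃ * m) * (1 + S.g z) ^ m * 1 := by
          rw [mul_rpow (by positivity) (by positivity), ← rpow_mul (by positivity), mul_one]
      _ ≤ K * exp ((w - z) / (2 * decayLength c₁ d₀)) * (1 + S.g z) ^ m *
            (threshold c₁ * S.g w) := by
          gcongr
          exacts [hpow _ hzw, S.drift.one_le_threshold_mul (hz.trans (le_of_lt hw))]
      _ = _ := by ring
  have hmeas : Measurable fun w => (1 + S.g w) ^ m :=
    (measurable_const.add S.measurable_g).pow_const m
  have hintm : IntegrableOn (fun w => (1 + S.g w) ^ m) (Set.Ioi z) S.P := by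
    refine (hint.const_mul (K * threshold c₁ * (1 + S.g z) ^ m)).mono' hmeas.aestronglyMeasurable
      (ae_restrict_of_forall_mem measurableSet_Ioi fun w hw => ?_)
    rw [norm_of_nonneg
      (rpow_nonneg (by linarith [S.drift.nonneg (hz0.trans (le_of_lt hw))]) _)]
    exact hbound w hw
  refine ⟨hintm, (setIntegral_mono_on hintm (hint.const_mul _) measurableSet_Ioi hbound).trans ?_⟩
  rw [integral_const_mul]
  calc _ ≤ K * threshold c₁ * (1 + S.g z) ^ m * ((1 + exp 1) * S.tailDrift z) := by gcongr
    _ = _ := by ring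

lemma setIntegral_Ioc_one_add_rpow_le (S : SteinTransport c₁ c₃ d₀ τ) {m z b : ℝ} (hm : 0 ≤ m)
    (hz : 0 ≤ z) (hb : 0 ≤ b) :
    IntegrableOn (fun w => (1 + S.g w) ^ m) (Set.Ioc z b) S.P ∧
      ∫ w in Set.Ioc z b, (1 + S.g w) ^ m ∂S.P ≤ exp (c₃ * b) ^ m := by
  have hmeas : Measurable fun w => (1 + S.g w) ^ m :=
    (measurable_const.add S.measurable_g).pow_const m
  have hbound : ∀ w ∈ Set.Ioc z b, ‖(1 + S.g w) ^ m‖ ≤ exp (c₃ * b) ^ m := fun w hw => by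
    have hgw := S.drift.nonneg (hz.trans hw.1.le)
    rw [norm_of_nonneg (by positivity)]
    gcongr
    exact (add_le_add_right (S.drift.monotone hw.2) 1).trans (S.drift.one_add_le_exp hb)
  refine ⟨.of_bound (measure_lt_top _ _) hmeas.aestronglyMeasurable _
    (ae_restrict_of_forall_mem measurableSet_Ioc hbound), ?_⟩
  refine (le_norm_self _).trans ((norm_setIntegral_le_of_norm_le_const (measure_lt_top _ _)
    hbound).trans (mul_le_of_le_one_right (by positivity) measureReal_le_one))

lemma exists_setIntegral_Ioi_le_of_le_threshold (c₁ c₃ d₀ τ : ℝ) {m : ℝ} (hm : 0 ≤ m) :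
    ∃ C, 0 < C ∧ ∀ S : SteinTransport c₁ c₃ d₀ τ, ∀ z, 0 ≤ z → z ≤ threshold c₁ →
      IntegrableOn (fun w => (1 + S.g w) ^ m) (Set.Ioi z) S.P ∧
        ∫ w in Set.Ioi z, (1 + S.g w) ^ m ∂S.P ≤ C := by
  obtain ⟨C, hC, htail⟩ := exists_setIntegral_Ioi_le_tailDrift c₁ c₃ d₀ τ hm
  obtain ⟨z₀, hz₀⟩ : ∃ z₀, z₀ = threshold c₁ := ⟨_, rfl⟩
  refine ⟨exp (c₃ * z₀) ^ m * (1 + C * (exp c₃ + |d₀|)), by positivity, fun S z hz hzz => ?_⟩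
  rw [← hz₀] at hzz
  have hz₀0 : 0 < z₀ := hz₀ ▸ threshold_pos S.drift.c₁_pos
  obtain ⟨hint₁, hle₁⟩ := S.setIntegral_Ioc_one_add_rpow_le hm hz hz₀0.le
  obtain ⟨hint₂, hle₂⟩ := htail S z₀ hz₀.ge
  have hunion := Set.Ioc_union_Ioi_eq_Ioi hzz
  refine ⟨hunion ▸ hint₁.union hint₂, ?_⟩
  rw [← hunion, setIntegral_union (Set.Ioc_disjoint_Ioi le_rfl) measurableSet_Ioi hint₁ hint₂]
  have hr₀ : S.tailDrift z₀ ≤ exp c₃ + |d₀| := by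
    linarith [S.tailDrift_le_zero z₀, S.tailDrift_zero_le, le_abs_self d₀]
  have := S.drift.nonneg hz₀0.le
  have := S.tailDrift_nonneg z₀
  calc _ ≤ exp (c₃ * z₀) ^ m + C * exp (c₃ * z₀) ^ m * (exp c₃ + |d₀|) := by
        refine add_le_add hle₁ (hle₂.trans ?_)
        gcongr
        exact S.drift.one_add_le_exp hz₀0.le
    _ = _ := by ring

lemma exists_setIntegral_Ioi_le (c₁ c₃ d₀ τ A : ℝ) {m : ℝ} (hm : 0 ≤ m) :
    ∃ C, 0 < C ∧ ∀ S : SteinTransport c₁ c₃ d₀ τ, ∀ z, S.Regime A z →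
      IntegrableOn (fun w => (1 + S.g w) ^ m) (Set.Ioi z) S.P ∧
        ∫ w in Set.Ioi z, (1 + S.g w) ^ m ∂S.P ≤ C * (1 + S.g z) ^ m * exp (-Gfun S.g z) := by
  obtain ⟨C, hC, htail⟩ := exists_setIntegral_Ioi_le_tailDrift c₁ c₃ d₀ τ hm
  obtain ⟨D, hD, hcore⟩ := exists_setIntegral_Ioi_le_of_le_threshold c₁ c₃ d₀ τ hm
  obtain ⟨R, hR, hr⟩ := exists_tailDrift_le c₁ c₃ d₀ τ A
  obtain ⟨M, hM⟩ : ∃ M, M = exp (threshold c₁ * exp (c₃ * threshold c₁)) := ⟨_, rfl⟩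
  have hM0 : 0 < M := hM ▸ exp_pos _
  refine ⟨C * R + D * M, by positivity, fun S z h => ?_⟩
  have hδ := S.δ_pos
  have hgz := S.drift.nonneg h.nonneg
  rw [add_mul, add_mul]
  rcases le_total (threshold c₁) z with hzz | hzz
  · refine ⟨(htail S z hzz).1, (htail S z hzz).2.trans ?_⟩
    calc C * (1 + S.g z) ^ m * S.tailDrift z
        ≤ C * (1 + S.g z) ^ m * (R * exp (-Gfun S.g z)) := by
          gcongr
          exact hr S z h z (by linarith)
      _ = C * R * (1 + S.g z) ^ m * exp (-Gfun S.g z) := by ring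
      _ ≤ _ := le_add_of_nonneg_right (by positivity)
  · refine ⟨(hcore S z h.nonneg hzz).1, (hcore S z h.nonneg hzz).2.trans ?_⟩
    have hone : 1 ≤ (1 + S.g z) ^ m := one_le_rpow h.one_le hm
    calc D = D * exp (Gfun S.g z) * 1 * exp (-Gfun S.g z) := by
          rw [mul_one, mul_assoc, ← exp_add, add_neg_cancel, exp_zero, mul_one]
      _ ≤ D * M * (1 + S.g z) ^ m * exp (-Gfun S.g z) := by
          rw [hM]
          gcongr
          exact S.drift.Gfun_le_mul_exp h.nonneg hzz
      _ ≤ _ := le_add_of_nonneg_left (by positivity)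

end TailMoments

section TailDriftAsymptotics

variable {A z : ℝ}

/-- The error term of the moderate deviation expansion. -/
noncomputable def error (S : SteinTransport c₁ c₃ d₀ τ) (z : ℝ) : ℝ :=
  (1 + z) * (S.δ * (1 + S.g z) ^ 2 + S.δ₁ * (1 + S.g z) ^ (τ + 1))

lemma mul_δ_mul_sq_le_error (S : SteinTransport c₁ c₃ d₀ τ) (hz : 0 ≤ z) :
    (1 + z) * (S.δ * (1 + S.g z) ^ 2) ≤ S.error z := by
  have hδ₁ := S.δ₁_pos
  have hgz := S.drift.nonneg hz
  rw [error, mul_add]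
  exact le_add_of_nonneg_right (by positivity)

lemma mul_δ₁_mul_rpow_le_error (S : SteinTransport c₁ c₃ d₀ τ) (hz : 0 ≤ z) :
    (1 + z) * (S.δ₁ * (1 + S.g z) ^ (τ + 1)) ≤ S.error z := by
  have hδ := S.δ_pos
  rw [error, mul_add]
  exact le_add_of_nonneg_left (by positivity)

lemma δ_mul_g_le_error (S : SteinTransport c₁ c₃ d₀ τ) (hz : 0 ≤ z) :
    S.δ * S.g z ≤ S.error z := by
  have hδ := S.δ_pos
  have hgz := S.drift.nonneg hz
  refine le_trans ?_ (S.mul_δ_mul_sq_le_error hz)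
  nlinarith [mul_nonneg hz (mul_nonneg hδ.le (sq_nonneg (1 + S.g z))), mul_nonneg hδ.le hgz,
    mul_nonneg hδ.le (sq_nonneg (S.g z))]

lemma mul_δ₁_mul_rpow_mul_g_le_error (S : SteinTransport c₁ c₃ d₀ τ) (hz : 0 ≤ z) :
    (1 + z) * (S.δ₁ * ((1 + S.g z) ^ τ * S.g z)) ≤ S.error z := by
  have hδ₁ := S.δ₁_pos
  have hgz := S.drift.nonneg hz
  refine le_trans ?_ (S.mul_δ₁_mul_rpow_le_error hz)
  rw [rpow_add_one (by linarith)]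
  gcongr
  linarith

lemma add_mul_one_add_g_le_mul_error (S : SteinTransport c₁ c₃ d₀ τ) (hz : 0 ≤ z) {a b : ℝ}
    (ha : 0 ≤ a) (hb : 0 ≤ b) :
    (a * (S.δ₁ * (1 + S.g z) ^ τ) + b * (S.δ * (1 + S.g z))) * (1 + S.g z) ≤
      (a + b) * S.error z := by
  have hδ := S.δ_pos
  have hδ₁ := S.δ₁_pos
  have hgz := S.drift.nonneg hz
  have hz1 : 1 ≤ 1 + z := by linarith
  have hsq := (le_mul_of_one_le_left (by positivity) hz1).trans (S.mul_δ_mul_sq_le_error hz)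
  have hpow := (le_mul_of_one_le_left (by positivity) hz1).trans (S.mul_δ₁_mul_rpow_le_error hz)
  rw [rpow_add_one (by linarith)] at hpow
  calc _ = a * (S.δ₁ * ((1 + S.g z) ^ τ * (1 + S.g z))) + b * (S.δ * (1 + S.g z) ^ 2) := by ring
    _ ≤ a * S.error z + b * S.error z := by gcongr
    _ = _ := by ring

lemma Regime.abs_g_mul_exp_sub_le {S : SteinTransport c₁ c₃ d₀ τ} (h : S.Regime A z) {w x : ℝ}
    (hw : w ∈ Set.Icc 0 z) (hx : x ∈ Set.Icc 0 z) (hxw : |x - w| ≤ S.δ) :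
    |S.g x * exp (Gfun S.g x) - S.g w * exp (Gfun S.g w)| ≤
      (c₃ + 1) * exp A * S.δ * (1 + S.g z) ^ 2 * exp (Gfun S.g w) := by
  have hδ := S.δ_pos
  have hc₃ := S.drift.c₃_nonneg
  have hgz := S.drift.nonneg h.nonneg
  have hderiv : ∀ y, HasDerivAt (fun y => S.g y * exp (Gfun S.g y))
      ((deriv S.g y + S.g y ^ 2) * exp (Gfun S.g y)) y := fun y =>
    ((S.drift.differentiable y).hasDerivAt.mul
      (hasDerivAt_Gfun S.drift.continuous y).exp).congr_deriv (by ring)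
  have hbound : ∀ y ∈ Set.uIcc w x, ‖(deriv S.g y + S.g y ^ 2) * exp (Gfun S.g y)‖ ≤
      (c₃ + 1) * (1 + S.g z) ^ 2 * exp (A + Gfun S.g w) := fun y hy => by
    have hy0 : 0 ≤ y := (le_min hw.1 hx.1).trans hy.1
    have hyz : y ≤ z := hy.2.trans (max_le hw.2 hx.2)
    have hyw : y ≤ w + S.δ := hy.2.trans (max_le (by linarith) (by linarith [(abs_le.1 hxw).2]))
    have hgy := S.drift.nonneg hy0
    have hgyz := S.drift.monotone hyz
    rw [norm_mul, norm_of_nonneg (exp_pos _).le]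
    gcongr
    · calc ‖deriv S.g y + S.g y ^ 2‖ ≤ |deriv S.g y| + S.g y ^ 2 :=
            (norm_add_le _ _).trans_eq <| by
              rw [norm_eq_abs, norm_eq_abs, abs_of_nonneg (sq_nonneg (S.g y))]
        _ ≤ c₃ * (1 + S.g z) + (1 + S.g z) ^ 2 := by
            gcongr
            · exact (S.drift.abs_deriv_le_mul hy0).trans (by gcongr)
            · linarith
        _ ≤ c₃ * (1 + S.g z) ^ 2 + (1 + S.g z) ^ 2 := by
            gcongr
            exact le_self_pow₀ h.one_le two_ne_zero
        _ = (c₃ + 1) * (1 + S.g z) ^ 2 := by ring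
    · linarith [S.drift.Gfun_le_add hy0 hyw hyz hδ.le, h.δ_mul_g_le]
  calc _ ≤ (c₃ + 1) * (1 + S.g z) ^ 2 * exp (A + Gfun S.g w) * |x - w| :=
        (convex_uIcc w x).norm_image_sub_le_of_norm_hasDerivWithin_le
          (fun y _ => (hderiv y).hasDerivWithinAt) hbound Set.left_mem_uIcc Set.right_mem_uIcc
    _ ≤ (c₃ + 1) * (1 + S.g z) ^ 2 * exp (A + Gfun S.g w) * S.δ := by gcongr
    _ = _ := by
        rw [exp_add]
        ring

lemma indicator_Ioc_g_mul_exp_eq (z w : ℝ) :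
    (Set.Ioc 0 z).indicator (fun x => S.g x * exp (Gfun S.g x)) w =
      (Set.Iic z).indicator (fun x => S.g (max x 0) * exp (Gfun S.g (max x 0))) w := by
  rcases le_or_gt w 0 with hw | hw
  · rw [Set.indicator_of_notMem fun h => absurd h.1 hw.not_gt]
    simp [Set.indicator_apply, max_eq_right hw, S.drift.map_zero]
  · by_cases hz : w ≤ z
    · rw [Set.indicator_of_mem (Set.mem_Ioc.2 ⟨hw, hz⟩), Set.indicator_of_mem (Set.mem_Iic.2 hz),
        max_eq_left hw.le]
    · rw [Set.indicator_of_notMem fun h => hz h.2,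
        Set.indicator_of_notMem (mt Set.mem_Iic.1 hz)]

/-- The oscillation bound for `g e^G` on `(0, z]`: a Lipschitz term, and the jump at `z`. -/
noncomputable def weightOscillation (S : SteinTransport c₁ c₃ d₀ τ) (A z w : ℝ) : ℝ :=
  (Set.Iic z).indicator (fun w => (c₃ + 1) * exp A * S.δ * (1 + S.g z) ^ 2 *
    exp (Gfun S.g (max w 0))) w +
  (Set.Ioc (z - S.δ) (z + S.δ)).indicator (fun _ => S.g z * exp (Gfun S.g z)) w

lemma Regime.abs_indicator_g_mul_exp_sub_le {S : SteinTransport c₁ c₃ d₀ τ} (h : S.Regime A z)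
    {w x : ℝ} (hxw : |x - w| ≤ S.δ) :
    |(Set.Ioc 0 z).indicator (fun x => S.g x * exp (Gfun S.g x)) x -
      (Set.Ioc 0 z).indicator (fun x => S.g x * exp (Gfun S.g x)) w| ≤
      S.weightOscillation A z w := by
  have hgz := S.drift.nonneg h.nonneg
  have hc₃ := S.drift.c₃_nonneg
  have hδ := S.δ_pos
  have hxw' := abs_le.1 hxw
  have hclamp : ∀ y ≤ z, max y 0 ∈ Set.Icc 0 z := fun y hy =>
    ⟨le_max_right _ _, max_le hy h.nonneg⟩
  have hjump : ∀ y ≤ z, |S.g (max y 0) * exp (Gfun S.g (max y 0))| ≤ S.g z * exp (Gfun S.g z) :=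
    fun y hy => by
      have hgy := S.drift.nonneg (hclamp y hy).1
      rw [abs_of_nonneg (by positivity)]
      exact mul_le_mul (S.drift.monotone (hclamp y hy).2)
        (exp_le_exp.2 (S.drift.Gfun_mono (hclamp y hy).1 (hclamp y hy).2)) (exp_pos _).le hgz
  have hlip : 0 ≤ (c₃ + 1) * exp A * S.δ * (1 + S.g z) ^ 2 * exp (Gfun S.g (max w 0)) := by
    positivity
  have hjump0 : 0 ≤ S.g z * exp (Gfun S.g z) := by positivity
  have hwindow : 0 ≤ (Set.Ioc (z - S.δ) (z + S.δ)).indicator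
      (fun _ => S.g z * exp (Gfun S.g z)) w := Set.indicator_nonneg (fun _ _ => hjump0) w
  rw [S.indicator_Ioc_g_mul_exp_eq, S.indicator_Ioc_g_mul_exp_eq, weightOscillation]
  by_cases hw : w ≤ z <;> by_cases hx : x ≤ z
  · simp only [Set.indicator_of_mem (Set.mem_Iic.2 hw), Set.indicator_of_mem (Set.mem_Iic.2 hx)]
    exact (h.abs_g_mul_exp_sub_le (hclamp w hw) (hclamp x hx)
      ((abs_max_sub_max_le_abs x w 0).trans hxw)).trans (le_add_of_nonneg_right hwindow)
  · have hmem : w ∈ Set.Ioc (z - S.δ) (z + S.δ) := ⟨by linarith, by linarith⟩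
    simp only [Set.indicator_of_mem (Set.mem_Iic.2 hw), Set.indicator_of_mem hmem,
      Set.indicator_of_notMem (mt Set.mem_Iic.1 hx), zero_sub, abs_neg]
    exact (hjump w hw).trans (le_add_of_nonneg_left hlip)
  · have hmem : w ∈ Set.Ioc (z - S.δ) (z + S.δ) := ⟨by linarith, by linarith⟩
    simp only [Set.indicator_of_mem (Set.mem_Iic.2 hx), Set.indicator_of_mem hmem,
      Set.indicator_of_notMem (mt Set.mem_Iic.1 hw), sub_zero, zero_add]
    exact hjump x hx
  · simpa only [Set.indicator_of_notMem (mt Set.mem_Iic.1 hx),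
      Set.indicator_of_notMem (mt Set.mem_Iic.1 hw), sub_zero, abs_zero, zero_add] using hwindow

lemma continuous_g_mul_exp_Gfun : Continuous fun x => S.g x * exp (Gfun S.g x) :=
  S.drift.continuous.mul (continuous_exp.comp (continuous_Gfun S.drift.continuous))

lemma exp_Gfun_mul_tailDrift_sub_eq (hz : 0 ≤ z) :
    exp (Gfun S.g z) * S.tailDrift z - S.tailDrift 0 =
      (∫ p, (Set.Ioc 0 z).indicator (fun x => S.g x * exp (Gfun S.g x)) p.2 ∂S.plan) -
        ∫ w, (Set.Ioc 0 z).indicator (fun x => S.g x * exp (Gfun S.g x)) w ∂S.P := by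
  have hg := S.drift.continuous
  have hG := continuous_Gfun hg
  have hweight : IntegrableOn (fun w => S.g w * exp (Gfun S.g w)) (Set.Ioc 0 z) S.P :=
    (integrable_indicator_iff measurableSet_Ioc).1 <|
      S.integrable_indicator_Ioc S.continuous_g_mul_exp_Gfun 0 z
  have hinner : ∫ w in Set.Ioc 0 z, (exp (Gfun S.g (min w z)) - exp (Gfun S.g 0)) * S.g w ∂S.P =
      (∫ w in Set.Ioc 0 z, S.g w * exp (Gfun S.g w) ∂S.P) - ∫ w in Set.Ioc 0 z, S.g w ∂S.P := by
    rw [← integral_sub hweight S.integrable_g.integrableOn]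
    refine setIntegral_congr_fun measurableSet_Ioc fun w hw => ?_
    simp only [min_eq_left hw.2, Gfun_zero, exp_zero]
    ring
  have houter : ∫ w in Set.Ioi z, (exp (Gfun S.g (min w z)) - exp (Gfun S.g 0)) * S.g w ∂S.P =
      (exp (Gfun S.g z) - 1) * S.tailDrift z := by
    rw [tailDrift, ← integral_const_mul]
    refine setIntegral_congr_fun measurableSet_Ioi fun w hw => ?_
    simp only [min_eq_right (le_of_lt (Set.mem_Ioi.1 hw)), Gfun_zero, exp_zero]
  have hint : Integrable (fun w => (exp (Gfun S.g (min w z)) - exp (Gfun S.g 0)) * S.g w)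
      (S.P.restrict (Set.Ioi 0)) := by
    refine S.integrable_g.integrableOn.bdd_mul (c := exp (Gfun S.g z))
      (by fun_prop) (ae_restrict_of_forall_mem measurableSet_Ioi fun w hw => ?_)
    have hw' : 0 ≤ min w z := le_min (le_of_lt hw) hz
    have hmono := exp_le_exp.2 (S.drift.Gfun_mono hw' (min_le_right w z))
    have hone := exp_le_exp.2 (S.drift.Gfun_nonneg (min w z))
    rw [Gfun_zero, norm_of_nonneg (by linarith)]
    linarith [exp_zero]
  rw [S.integral_indicator_Ioc_snd hz S.continuous_g_mul_exp_Gfun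
      fun x => (hasDerivAt_Gfun hg x).exp.congr_deriv (mul_comm _ _),
    integral_indicator measurableSet_Ioc, ← Set.Ioc_union_Ioi_eq_Ioi hz,
    setIntegral_union (Set.Ioc_disjoint_Ioi le_rfl) measurableSet_Ioi
      (hint.mono_measure (Measure.restrict_mono Set.Ioc_subset_Ioi_self le_rfl))
      (hint.mono_measure (Measure.restrict_mono (Set.Ioi_subset_Ioi hz) le_rfl)), hinner, houter,
    ← S.setIntegral_add_tailDrift hz]
  ring

lemma measurable_weightOscillation : Measurable (S.weightOscillation A z) := by
  have hG := continuous_Gfun S.drift.continuous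
  unfold weightOscillation
  exact (Measurable.indicator (by fun_prop) measurableSet_Iic).add
    (measurable_const.indicator measurableSet_Ioc)

lemma integrable_weightOscillation_and_integral_le (hz : 0 ≤ z) :
    Integrable (S.weightOscillation A z) S.P ∧
      ∫ w, S.weightOscillation A z w ∂S.P ≤
        (c₃ + 1) * exp A * S.δ * (1 + S.g z) ^ 2 *
          (1 + ∫ w in Set.Ioc 0 z, exp (Gfun S.g w) ∂S.P) +
        S.g z * exp (Gfun S.g z) * S.P.real (Set.Ioc (z - S.δ) (z + S.δ)) := by
  have hG := continuous_Gfun S.drift.continuous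
  have hc₃ := S.drift.c₃_nonneg
  have hδ := S.δ_pos
  have hIic : IntegrableOn (fun w => exp (Gfun S.g (max w 0))) (Set.Iic z) S.P :=
    .of_bound (measure_lt_top _ _) (by fun_prop) (exp (Gfun S.g z)) <|
      ae_restrict_of_forall_mem measurableSet_Iic fun w hw => by
        rw [norm_of_nonneg (exp_pos _).le]
        exact exp_le_exp.2 (S.drift.Gfun_mono (le_max_right _ _) (max_le hw hz))
  have hlip := (integrable_indicator_iff measurableSet_Iic).2 <|
    hIic.const_mul ((c₃ + 1) * exp A * S.δ * (1 + S.g z) ^ 2)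
  have hwindow : Integrable ((Set.Ioc (z - S.δ) (z + S.δ)).indicator
      fun _ => S.g z * exp (Gfun S.g z)) S.P := (integrable_const _).indicator measurableSet_Ioc
  have hsplit : ∫ w in Set.Iic z, exp (Gfun S.g (max w 0)) ∂S.P ≤
      1 + ∫ w in Set.Ioc 0 z, exp (Gfun S.g w) ∂S.P := by
    rw [← Set.Iic_union_Ioc_eq_Iic hz, setIntegral_union (Set.Iic_disjoint_Ioc le_rfl)
      measurableSet_Ioc (hIic.mono_set (Set.Iic_subset_Iic.2 hz))
      (hIic.mono_set Set.Ioc_subset_Iic_self),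
      setIntegral_congr_fun (g := fun _ => 1) measurableSet_Iic fun w hw => by
        simp only [max_eq_right (Set.mem_Iic.1 hw), Gfun_zero, exp_zero],
      setIntegral_congr_fun (g := fun w => exp (Gfun S.g w)) measurableSet_Ioc fun w hw => by
        simp only [max_eq_left hw.1.le], setIntegral_one_eq_measureReal]
    gcongr
    exact measureReal_le_one
  refine ⟨hlip.add hwindow, ?_⟩
  rw [show S.weightOscillation A z = _ from rfl, funext fun w => weightOscillation.eq_1 S A z w,
    integral_add hlip hwindow, integral_indicator measurableSet_Iic, integral_const_mul,
    integral_indicator_const _ measurableSet_Ioc, smul_eq_mul, mul_comm (S.P.real _)]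
  gcongr

lemma Regime.integral_abs_κ_sub_one_mul_le {S : SteinTransport c₁ c₃ d₀ τ} (h : S.Regime A z) :
    ∫ w, |S.κ w - 1| * |(Set.Ioc 0 z).indicator (fun x => S.g x * exp (Gfun S.g x)) w| ∂S.P ≤
      S.deviation z * S.g z * ∫ w in Set.Ioc 0 z, exp (Gfun S.g w) ∂S.P := by
  have hdev := S.deviation_nonneg h.nonneg
  have := S.drift.nonneg h.nonneg
  have hexp := S.integrable_indicator_Ioc
    (continuous_exp.comp (continuous_Gfun S.drift.continuous)) 0 z
  rw [← integral_indicator measurableSet_Ioc, ← integral_const_mul]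
  refine integral_mono_of_nonneg (.of_forall fun w => by positivity) (hexp.const_mul _) ?_
  filter_upwards [S.abs_κ_sub_one_le_deviation h.nonneg] with w hκ
  by_cases hw : w ∈ Set.Ioc 0 z
  · have hgw := S.drift.nonneg hw.1.le
    simp only [Set.indicator_of_mem hw, abs_mul, abs_of_nonneg hgw, abs_exp, ← mul_assoc]
    gcongr
    · exact hκ (by linarith [hw.1]) (by linarith [hw.2])
    · exact S.drift.monotone hw.2
  · simp [hw]

lemma Regime.abs_exp_Gfun_mul_tailDrift_sub_le {S : SteinTransport c₁ c₃ d₀ τ}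
    (h : S.Regime A z) :
    |exp (Gfun S.g z) * S.tailDrift z - S.tailDrift 0| ≤
      S.deviation z * S.g z * (∫ w in Set.Ioc 0 z, exp (Gfun S.g w) ∂S.P) +
        d₀ * ((c₃ + 1) * exp A * S.δ * (1 + S.g z) ^ 2 *
          (1 + ∫ w in Set.Ioc 0 z, exp (Gfun S.g w) ∂S.P) +
        S.g z * exp (Gfun S.g z) * S.P.real (Set.Ioc (z - S.δ) (z + S.δ))) := by
  have hd₀ := S.d₀_nonneg
  obtain ⟨B, hB⟩ := exists_abs_indicator_Ioc_le S.continuous_g_mul_exp_Gfun 0 z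
  obtain ⟨hosc, hosc_le⟩ := S.integrable_weightOscillation_and_integral_le (A := A) h.nonneg
  have hosc0 : ∀ w, 0 ≤ S.weightOscillation A z w := fun w =>
    (abs_nonneg _).trans <|
      h.abs_indicator_g_mul_exp_sub_le (w := w) (x := w) (by simpa using S.δ_pos.le)
  rw [S.exp_Gfun_mul_tailDrift_sub_eq h.nonneg]
  refine (S.abs_integral_snd_sub_integral_le
    (S.continuous_g_mul_exp_Gfun.measurable.indicator measurableSet_Ioc) hB
    S.measurable_weightOscillation hosc hosc0
    fun w x hxw => h.abs_indicator_g_mul_exp_sub_le hxw).trans ?_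
  gcongr
  exact h.integral_abs_κ_sub_one_mul_le

lemma exists_abs_exp_Gfun_mul_tailDrift_sub_le (c₁ c₃ d₀ τ A : ℝ) :
    ∃ C, 0 < C ∧ ∀ S : SteinTransport c₁ c₃ d₀ τ, ∀ z, S.Regime A z →
      |exp (Gfun S.g z) * S.tailDrift z - S.tailDrift 0| ≤ C * S.error z := by
  obtain ⟨X, hX, hexp⟩ := exists_integral_exp_Gfun_le c₁ c₃ d₀ τ A
  obtain ⟨Y, hY, hwindow⟩ := exists_measureReal_Ioc_le c₁ c₃ d₀ τ A
  refine ⟨2 * exp (c₃ * 2) ^ τ * X + |d₀| * ((|c₃| + 1) * exp A * (1 + X) + Y), by positivity,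
    fun S z h => ?_⟩
  have hz := h.nonneg
  have hd₀ := S.d₀_nonneg
  have hδ := S.δ_pos
  have hgz := S.drift.nonneg hz
  have hc₃ := S.drift.c₃_nonneg
  have hdev := S.deviation_nonneg hz
  have hκ_err := S.mul_δ₁_mul_rpow_mul_g_le_error hz
  have hlip_err : (1 + X * (1 + z)) * (S.δ * (1 + S.g z) ^ 2) ≤ (1 + X) * S.error z := by
    refine le_trans ?_ (mul_le_mul_of_nonneg_left (S.mul_δ_mul_sq_le_error hz) (by positivity))
    rw [← mul_assoc (1 + X)]
    gcongr
    linarith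
  have hjump_err := S.δ_mul_g_le_error hz
  calc _ ≤ S.deviation z * S.g z * (X * (1 + z)) + d₀ * ((c₃ + 1) * exp A * S.δ *
        (1 + S.g z) ^ 2 * (1 + X * (1 + z)) +
        S.g z * exp (Gfun S.g z) * (Y * S.δ * exp (-Gfun S.g z))) := by
        refine h.abs_exp_Gfun_mul_tailDrift_sub_le.trans ?_
        gcongr
        exacts [hexp S z h, hexp S z h, hwindow S z h]
    _ = 2 * exp (c₃ * 2) ^ τ * X * ((1 + z) * (S.δ₁ * ((1 + S.g z) ^ τ * S.g z))) +
        d₀ * ((c₃ + 1) * exp A * ((1 + X * (1 + z)) * (S.δ * (1 + S.g z) ^ 2)) +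
        Y * (S.δ * S.g z)) := by
        rw [deviation, mul_rpow (exp_pos _).le (by linarith), exp_neg]
        field_simp
    _ ≤ 2 * exp (c₃ * 2) ^ τ * X * S.error z + |d₀| * ((|c₃| + 1) * exp A *
        ((1 + X) * S.error z) + Y * S.error z) := by
        rw [abs_of_nonneg hc₃, abs_of_nonneg hd₀]
        gcongr
    _ = _ := by ring

end TailDriftAsymptotics

section MillsComparison

variable {A z : ℝ}

lemma measurable_indicator_one_sub_mul_mills (z : ℝ) :
    Measurable ((Set.Ioi z).indicator fun w => 1 - S.g w * mills S.g w) :=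
  S.drift.continuous_one_sub_mul_mills.measurable.indicator measurableSet_Ioi

lemma abs_indicator_one_sub_mul_mills_le_one (hz : 0 ≤ z) (w : ℝ) :
    |(Set.Ioi z).indicator (fun w => 1 - S.g w * mills S.g w) w| ≤ 1 := by
  by_cases hw : w ∈ Set.Ioi z
  · rw [Set.indicator_of_mem hw]
    exact S.drift.abs_one_sub_mul_mills_le_one (hz.trans (le_of_lt hw))
  · simp [hw]

lemma measureReal_Ioi_sub_mills_mul_tailDrift_eq (hz : 0 ≤ z) :
    S.P.real (Set.Ioi z) - mills S.g z * S.tailDrift z =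
      (∫ w, (Set.Ioi z).indicator (fun w => 1 - S.g w * mills S.g w) w ∂S.P) -
        ∫ p, (Set.Ioi z).indicator (fun w => 1 - S.g w * mills S.g w) p.2 ∂S.plan := by
  have hone : IntegrableOn (fun w => 1 - S.g w * mills S.g w) (Set.Ioi z) S.P :=
    .of_bound (measure_lt_top _ _) S.drift.continuous_one_sub_mul_mills.aestronglyMeasurable 1 <|
      ae_restrict_of_forall_mem measurableSet_Ioi fun w hw =>
        S.drift.abs_one_sub_mul_mills_le_one (hz.trans (le_of_lt hw))
  have hconst : IntegrableOn (fun _ => (1 : ℝ)) (Set.Ioi z) S.P := integrable_const 1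
  have hprod : IntegrableOn (fun w => S.g w * mills S.g w) (Set.Ioi z) S.P :=
    (hconst.sub hone).congr (.of_forall fun w => sub_sub_cancel _ _)
  have hplan : ∫ w in Set.Ioi z, (mills S.g z - mills S.g w) * S.g w ∂S.P =
      mills S.g z * S.tailDrift z - ∫ w in Set.Ioi z, S.g w * mills S.g w ∂S.P := by
    rw [tailDrift, ← integral_const_mul,
      ← integral_sub (S.integrable_g.integrableOn.const_mul _) hprod]
    exact integral_congr_ae (.of_forall fun w => by ring)
  rw [S.integral_indicator_Ioi_snd S.drift.continuous_one_sub_mul_mills.measurable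
    (S.drift.integrableOn_one_sub_mul_mills hz)]
  simp only [S.drift.intervalIntegral_one_sub_mul_mills]
  rw [hplan, integral_indicator measurableSet_Ioi, integral_sub hconst hprod,
    setIntegral_one_eq_measureReal]
  ring

lemma abs_indicator_one_sub_mul_mills_sub_le (hz : 0 ≤ z) {C : ℝ} (hC : 0 ≤ C)
    (hlip : ∀ w x, 0 ≤ w → 0 ≤ x → |x - w| ≤ 1 →
      |S.g x * mills S.g x - S.g w * mills S.g w| ≤ C * (1 + S.g w) * |x - w|)
    {w x : ℝ} (hxw : |x - w| ≤ S.δ) :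
    |(Set.Ioi z).indicator (fun w => 1 - S.g w * mills S.g w) x -
      (Set.Ioi z).indicator (fun w => 1 - S.g w * mills S.g w) w| ≤
      (Set.Ioi z).indicator (fun w => C * S.δ * (1 + S.g w)) w +
        (Set.Ioc (z - S.δ) (z + S.δ)).indicator 1 w := by
  have hδ := S.δ_pos
  have hxw' := abs_le.1 hxw
  have hwindow : 0 ≤ (Set.Ioc (z - S.δ) (z + S.δ)).indicator (1 : ℝ → ℝ) w :=
    Set.indicator_nonneg (fun _ _ => zero_le_one) w
  rcases lt_or_ge z w with hw | hw <;> rcases lt_or_ge z x with hx | hx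
  · have hgw := S.drift.nonneg (hz.trans hw.le)
    simp only [Set.indicator_of_mem (Set.mem_Ioi.2 hw), Set.indicator_of_mem (Set.mem_Ioi.2 hx),
      sub_sub_sub_cancel_left]
    rw [abs_sub_comm]
    refine le_add_of_le_of_nonneg ((hlip w x (hz.trans hw.le) (hz.trans hx.le)
      (hxw.trans (by linarith [S.δ_le]))).trans ?_) hwindow
    rw [mul_right_comm]
    gcongr
  · have hmem : w ∈ Set.Ioc (z - S.δ) (z + S.δ) := ⟨by linarith, by linarith⟩
    have hgw := S.drift.nonneg (hz.trans hw.le)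
    simp only [Set.indicator_of_mem (Set.mem_Ioi.2 hw), Set.indicator_of_mem hmem, Pi.one_apply,
      Set.indicator_of_notMem (mt Set.mem_Ioi.1 hx.not_gt), zero_sub, abs_neg]
    exact le_add_of_nonneg_of_le (by positivity)
      (S.drift.abs_one_sub_mul_mills_le_one (hz.trans hw.le))
  · have hmem : w ∈ Set.Ioc (z - S.δ) (z + S.δ) := ⟨by linarith, by linarith⟩
    simp only [Set.indicator_of_mem (Set.mem_Ioi.2 hx), Set.indicator_of_mem hmem, Pi.one_apply,
      Set.indicator_of_notMem (mt Set.mem_Ioi.1 hw.not_gt), sub_zero, zero_add]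
    exact S.drift.abs_one_sub_mul_mills_le_one (hz.trans hx.le)
  · simpa only [Set.indicator_of_notMem (mt Set.mem_Ioi.1 hx.not_gt),
      Set.indicator_of_notMem (mt Set.mem_Ioi.1 hw.not_gt), sub_zero, abs_zero, zero_add]
      using hwindow

lemma integral_abs_κ_sub_one_mul_indicator_Ioi_le (hz : 0 ≤ z)
    (hint : IntegrableOn (fun w => (1 + S.g w) ^ τ) (Set.Ioi z) S.P) :
    ∫ w, |S.κ w - 1| * |(Set.Ioi z).indicator (fun w => 1 - S.g w * mills S.g w) w| ∂S.P ≤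
      2 * S.δ₁ * ∫ w in Set.Ioi z, (1 + S.g w) ^ τ ∂S.P := by
  have hτ := S.τ_nonneg
  have hδ₁ := S.δ₁_pos
  rw [← integral_indicator measurableSet_Ioi, ← integral_const_mul]
  refine integral_mono_of_nonneg (.of_forall fun w => by positivity)
    ((hint.integrable_indicator measurableSet_Ioi).const_mul _) ?_
  filter_upwards [S.abs_κ_sub_one_le] with w hκ
  by_cases hw : w ∈ Set.Ioi z
  · have hw0 : 0 ≤ w := hz.trans (le_of_lt hw)
    have hgw := S.drift.nonneg hw0
    simp only [Set.indicator_of_mem hw]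
    calc |S.κ w - 1| * |1 - S.g w * mills S.g w| ≤ S.δ₁ * (S.g w ^ τ + 1) * 1 := by
          gcongr
          · simpa only [abs_of_nonneg hgw] using hκ
          · exact S.drift.abs_one_sub_mul_mills_le_one hw0
      _ ≤ S.δ₁ * ((1 + S.g w) ^ τ + (1 + S.g w) ^ τ) * 1 := by
          gcongr
          exacts [by linarith, one_le_rpow (by linarith) hτ]
      _ = 2 * S.δ₁ * (1 + S.g w) ^ τ := by ring
  · simp [hw]

lemma abs_measureReal_Ioi_sub_mills_mul_tailDrift_le (hz : 0 ≤ z) {C : ℝ} (hC : 0 ≤ C)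
    (hlip : ∀ w x, 0 ≤ w → 0 ≤ x → |x - w| ≤ 1 →
      |S.g x * mills S.g x - S.g w * mills S.g w| ≤ C * (1 + S.g w) * |x - w|)
    (hint : IntegrableOn (fun w => (1 + S.g w) ^ τ) (Set.Ioi z) S.P) :
    |S.P.real (Set.Ioi z) - mills S.g z * S.tailDrift z| ≤
      2 * S.δ₁ * (∫ w in Set.Ioi z, (1 + S.g w) ^ τ ∂S.P) +
        d₀ * (C * S.δ * (∫ w in Set.Ioi z, (1 + S.g w) ∂S.P) +
          S.P.real (Set.Ioc (z - S.δ) (z + S.δ))) := by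
  have hδ := S.δ_pos
  have hone : Integrable ((Set.Ioi z).indicator fun w => C * S.δ * (1 + S.g w)) S.P :=
    (((integrable_const 1).add S.integrable_g).const_mul _).indicator measurableSet_Ioi
  have hwindow : Integrable ((Set.Ioc (z - S.δ) (z + S.δ)).indicator (1 : ℝ → ℝ)) S.P :=
    (integrable_const 1).indicator measurableSet_Ioc
  rw [S.measureReal_Ioi_sub_mills_mul_tailDrift_eq hz, abs_sub_comm]
  refine (S.abs_integral_snd_sub_integral_le (S.measurable_indicator_one_sub_mul_mills z)
    (S.abs_indicator_one_sub_mul_mills_le_one hz)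
    (((measurable_const.add S.measurable_g).const_mul _).indicator measurableSet_Ioi |>.add
      (measurable_one.indicator measurableSet_Ioc)) (hone.add hwindow)
    (fun w => add_nonneg (Set.indicator_nonneg (fun w hw => ?_) w)
      (Set.indicator_nonneg (fun _ _ => zero_le_one) w))
    fun w x hxw => S.abs_indicator_one_sub_mul_mills_sub_le hz hC hlip hxw).trans ?_
  · have hgw := S.drift.nonneg (hz.trans (le_of_lt (Set.mem_Ioi.1 hw)))
    exact mul_nonneg (by positivity) (add_nonneg zero_le_one hgw)
  · gcongr
    · exact S.integral_abs_κ_sub_one_mul_indicator_Ioi_le hz hint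
    · exact S.d₀_nonneg
    · simp only [Pi.add_apply]
      rw [integral_add hone hwindow, integral_indicator measurableSet_Ioi, integral_const_mul,
        integral_indicator_one measurableSet_Ioc]

lemma exists_abs_measureReal_Ioi_sub_mills_mul_tailDrift_le (c₁ c₃ d₀ A : ℝ) (hτ : 0 ≤ τ) :
    ∃ C, 0 < C ∧ ∀ S : SteinTransport c₁ c₃ d₀ τ, ∀ z, S.Regime A z →
      |S.P.real (Set.Ioi z) - mills S.g z * S.tailDrift z| ≤
        C * S.error z * (exp (-Gfun S.g z) * mills S.g z) := by
  obtain ⟨L, hL, hlip⟩ := IsNormalizedDrift.exists_abs_mul_mills_sub_le c₁ c₃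
  obtain ⟨X, hX, hmoment⟩ := exists_setIntegral_Ioi_le c₁ c₃ d₀ τ A hτ
  obtain ⟨Y, hY, hfirst⟩ := exists_setIntegral_Ioi_le c₁ c₃ d₀ τ A zero_le_one
  obtain ⟨Z, hZ, hwindow⟩ := exists_measureReal_Ioc_le c₁ c₃ d₀ τ A
  refine ⟨(2 * X + |d₀| * (L * Y + Z)) * exp (exp c₃), by positivity, fun S z h => ?_⟩
  have hz := h.nonneg
  have hd₀ := S.d₀_nonneg
  have hδ := S.δ_pos
  have hδ₁ := S.δ₁_pos
  have hgz := S.drift.nonneg hz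
  have hM := mills_nonneg S.g z
  have hmills : 1 ≤ exp (exp c₃) * ((1 + S.g z) * mills S.g z) := by
    have := S.drift.exp_neg_exp_le_one_add_mul_mills hz
    rwa [exp_neg, inv_le_iff_one_le_mul₀' (exp_pos _)] at this
  have herr := S.add_mul_one_add_g_le_mul_error hz (by positivity : 0 ≤ 2 * X)
    (by positivity : 0 ≤ d₀ * (L * Y + Z))
  simp only [rpow_one] at hfirst
  calc _ ≤ 2 * S.δ₁ * (X * (1 + S.g z) ^ τ * exp (-Gfun S.g z)) +
        d₀ * (L * S.δ * (Y * (1 + S.g z) * exp (-Gfun S.g z)) +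
          Z * S.δ * exp (-Gfun S.g z)) := by
        refine (S.abs_measureReal_Ioi_sub_mills_mul_tailDrift_le hz hL.le (hlip S.g S.drift)
          (hmoment S z h).1).trans ?_
        gcongr
        exacts [(hmoment S z h).2, (hfirst S z h).2, hwindow S z h]
    _ ≤ (2 * X * (S.δ₁ * (1 + S.g z) ^ τ) + d₀ * (L * Y + Z) * (S.δ * (1 + S.g z))) *
        exp (-Gfun S.g z) := by
        have : S.δ ≤ S.δ * (1 + S.g z) := le_mul_of_one_le_right hδ.le h.one_le
        have := mul_le_mul_of_nonneg_left this (by positivity : 0 ≤ d₀ * Z * exp (-Gfun S.g z))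
        linarith
    _ ≤ (2 * X * (S.δ₁ * (1 + S.g z) ^ τ) + d₀ * (L * Y + Z) * (S.δ * (1 + S.g z))) *
        exp (-Gfun S.g z) * (exp (exp c₃) * ((1 + S.g z) * mills S.g z)) :=
        le_mul_of_one_le_right (by positivity) hmills
    _ = (2 * X * (S.δ₁ * (1 + S.g z) ^ τ) + d₀ * (L * Y + Z) * (S.δ * (1 + S.g z))) *
        (1 + S.g z) * (exp (exp c₃) * (exp (-Gfun S.g z) * mills S.g z)) := by ring
    _ ≤ (2 * X + d₀ * (L * Y + Z)) * S.error z *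
        (exp (exp c₃) * (exp (-Gfun S.g z) * mills S.g z)) := by gcongr
    _ = _ := by
        rw [abs_of_nonneg hd₀]
        ring

end MillsComparison

section Reflection

variable {A : ℝ}

lemma setIntegral_Ioi_neg_comp_neg (x : ℝ) :
    ∫ w in Set.Ioi x, -S.g (-w) ∂(S.P.map Neg.neg) =
      S.tailDrift (-x) + ∫ w in {-x}, S.g w ∂S.P := by
  have hsplit : (∫ w in Set.Iio (-x), S.g w ∂S.P) + (∫ w in {-x}, S.g w ∂S.P) =
      ∫ w in Set.Iic (-x), S.g w ∂S.P := by
    rw [← Set.Iio_union_right, setIntegral_union (by simp) (measurableSet_singleton _)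
      S.integrable_g.integrableOn S.integrable_g.integrableOn]
  calc ∫ w in Set.Ioi x, -S.g (-w) ∂(S.P.map Neg.neg) =
        ∫ w in Neg.neg ⁻¹' Set.Ioi x, -S.g (- -w) ∂S.P :=
        (MeasurableEquiv.neg ℝ).measurableEmbedding.setIntegral_map _ _
    _ = -∫ w in Set.Iio (-x), S.g w ∂S.P := by
        simp only [neg_neg, integral_neg, Set.neg_preimage, Set.neg_Ioi]
    _ = _ := by
        rw [S.tailDrift_eq_neg, ← hsplit]
        ring

lemma ae_setIntegral_Ioi_neg_comp_neg :
    ∀ᵐ x, ∫ w in Set.Ioi x, -S.g (-w) ∂(S.P.map Neg.neg) = S.tailDrift (-x) := by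
  have hatoms : Set.Countable {x | 0 < S.P {w | -w = x}} :=
    Measure.countable_meas_level_set_pos measurable_neg
  filter_upwards [hatoms.ae_notMem volume] with x hx
  have hnull : S.P {-x} = 0 := by
    simpa [neg_eq_iff_eq_neg] using hx
  rw [S.setIntegral_Ioi_neg_comp_neg, setIntegral_measure_zero _ hnull, add_zero]

lemma map_snd_map_neg_plan :
    (S.plan.map (Prod.map Neg.neg Neg.neg)).map Prod.snd = volume.withDensity fun x =>
      ENNReal.ofReal (∫ w in Set.Ioi x, -S.g (-w) ∂(S.P.map Neg.neg)) := by
  rw [Measure.map_map measurable_snd (measurable_neg.prodMap measurable_neg), Prod.map_snd',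
    ← Measure.map_map measurable_neg measurable_snd, S.map_snd_plan,
    map_neg_withDensity (measurable_setIntegral_Ioi S.measurable_g).ennreal_ofReal,
    Measure.map_neg_eq_self]
  refine withDensity_congr_ae ?_
  filter_upwards [S.ae_setIntegral_Ioi_neg_comp_neg] with x hx
  rw [hx, tailDrift]

/-- The transport problem of `(-W, -W', -G)`, whose drift is `y ↦ -g (-y)`. -/
noncomputable def reflect : SteinTransport c₁ c₃ d₀ τ where
  g y := -S.g (-y)
  P := S.P.map Neg.neg
  κ w := S.κ (-w)
  plan := S.plan.map (Prod.map Neg.neg Neg.neg)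
  δ := S.δ
  δ₁ := S.δ₁
  drift := S.drift.neg_comp_neg
  τ_nonneg := S.τ_nonneg
  isProbabilityMeasure_P := Measure.isProbabilityMeasure_map measurable_neg.aemeasurable
  integrable_g := by
    refine (integrable_map_equiv (MeasurableEquiv.neg ℝ) _).2 ?_
    simpa [Function.comp_def] using S.integrable_g
  integral_g := by
    refine (integral_map_equiv (MeasurableEquiv.neg ℝ) _).trans ?_
    simp [integral_neg, S.integral_g]
  measurable_κ := S.measurable_κ.comp measurable_neg
  κ_nonneg := ae_map_neg S.κ_nonneg
  κ_le := ae_map_neg S.κ_le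
  abs_κ_sub_one_le := by simpa only [abs_neg] using ae_map_neg S.abs_κ_sub_one_le
  δ_pos := S.δ_pos
  δ_le := S.δ_le
  δ₁_pos := S.δ₁_pos
  map_fst_plan := by
    rw [Measure.map_map measurable_fst (measurable_neg.prodMap measurable_neg), Prod.map_fst',
      ← Measure.map_map measurable_neg measurable_fst, S.map_fst_plan,
      map_neg_withDensity S.measurable_κ.ennreal_ofReal]
  map_snd_plan := S.map_snd_map_neg_plan
  abs_snd_sub_fst_le := by
    refine ((MeasurableEquiv.neg ℝ).measurableEmbedding.prodMap
      (MeasurableEquiv.neg ℝ).measurableEmbedding).ae_map_iff.2 ?_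
    filter_upwards [S.abs_snd_sub_fst_le] with p hp
    simpa [neg_add_eq_sub, abs_sub_comm] using hp

lemma tailDrift_reflect_zero : S.reflect.tailDrift 0 = S.tailDrift 0 := by
  refine (S.setIntegral_Ioi_neg_comp_neg 0).trans ?_
  simp [S.drift.map_zero]

end Reflection

section TailRatio

variable {A z : ℝ}

lemma Regime.reflect_zero {S : SteinTransport c₁ c₃ d₀ τ} (h : S.Regime A 0) :
    S.reflect.Regime A 0 := by
  have hg : S.reflect.g 0 = S.g 0 := by simp [reflect, S.drift.map_zero]
  refine ⟨le_rfl, ?_, ?_, ?_⟩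
  · rw [hg]
    exact h.δ_mul_le
  · rw [hg]
    exact h.δ₁_mul_le
  · rw [deviation, hg]
    exact h.deviation_le

lemma error_reflect_zero (S : SteinTransport c₁ c₃ d₀ τ) : S.reflect.error 0 = S.error 0 := by
  simp [error, reflect, S.drift.map_zero]

lemma measureReal_Ioi_zero_add_reflect_add_singleton (S : SteinTransport c₁ c₃ d₀ τ) :
    S.P.real (Set.Ioi 0) + S.reflect.P.real (Set.Ioi 0) + S.P.real {0} = 1 := by
  have hreflect : S.reflect.P.real (Set.Ioi 0) = S.P.real (Set.Iio 0) := by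
    rw [reflect, map_measureReal_apply measurable_neg measurableSet_Ioi]
    simp
  have hIic : S.P.real (Set.Iio 0) + S.P.real {0} = S.P.real (Set.Iic 0) := by
    rw [← Set.Iio_union_right, measureReal_union (by simp) (measurableSet_singleton _)]
  rw [hreflect, add_assoc, hIic, ← Set.compl_Iic, add_comm,
    probReal_add_probReal_compl measurableSet_Iic]

lemma error_zero_le (S : SteinTransport c₁ c₃ d₀ τ) (hz : 0 ≤ z) : S.error 0 ≤ S.error z := by
  have hδ := S.δ_pos
  have hδ₁ := S.δ₁_pos
  have hτ := S.τ_nonneg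
  have hg := S.drift.monotone hz
  have hg₀ := S.drift.map_zero
  unfold error
  gcongr

lemma exists_abs_tailDrift_zero_sub_le (c₁ c₃ d₀ A : ℝ) (hτ : 0 ≤ τ) :
    ∃ C, 0 < C ∧ ∀ S : SteinTransport c₁ c₃ d₀ τ, S.Regime A 0 →
      |S.tailDrift 0 - c₁| ≤ C * S.error 0 := by
  obtain ⟨C, hC, htail⟩ :=
    exists_abs_measureReal_Ioi_sub_mills_mul_tailDrift_le c₁ c₃ d₀ A hτ
  obtain ⟨Y, hY, hwindow⟩ := exists_measureReal_Ioc_le c₁ c₃ d₀ τ A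
  refine ⟨C + |c₁| * Y, by positivity, fun S h => ?_⟩
  have hc₁ := S.drift.c₁_pos
  have hpos := htail S 0 h
  have hneg := htail S.reflect 0 h.reflect_zero
  have hatom : S.P.real {0} ≤ Y * S.error 0 := calc
    S.P.real {0} ≤ S.P.real (Set.Ioc (0 - S.δ) (0 + S.δ)) :=
        measureReal_mono (by simp [S.δ_pos, S.δ_pos.le])
    _ ≤ Y * S.δ * exp (-Gfun S.g 0) := hwindow S 0 h
    _ = Y * ((1 + 0) * (S.δ * (1 + S.g 0) ^ 2)) := by simp [Gfun_zero, S.drift.map_zero]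
    _ ≤ Y * S.error 0 := by gcongr; exact S.mul_δ_mul_sq_le_error le_rfl
  rw [Gfun_zero, neg_zero, exp_zero, one_mul] at hpos hneg
  rw [error_reflect_zero, tailDrift_reflect_zero] at hneg
  have hmills : mills S.g 0 + mills S.reflect.g 0 = 1 / c₁ :=
    S.drift.mills_zero_add_mills_neg_comp_neg
  have htotal := S.measureReal_Ioi_zero_add_reflect_add_singleton
  have hscaled : |S.tailDrift 0 / c₁ - 1| ≤ C * S.error 0 / c₁ + Y * S.error 0 := by
    have hr : S.tailDrift 0 / c₁ = (mills S.g 0 + mills S.reflect.g 0) * S.tailDrift 0 := by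
      rw [hmills]; ring
    have he : C * S.error 0 / c₁ = C * S.error 0 * (mills S.g 0 + mills S.reflect.g 0) := by
      rw [hmills]; ring
    have hatom_nonneg : 0 ≤ S.P.real {0} := measureReal_nonneg
    rw [hr, he]
    rw [abs_le] at hpos hneg ⊢
    constructor <;> linarith
  calc |S.tailDrift 0 - c₁| = c₁ * |S.tailDrift 0 / c₁ - 1| := by
        rw [div_sub_one hc₁.ne', abs_div, abs_of_pos hc₁, mul_div_cancel₀ _ hc₁.ne']
    _ ≤ c₁ * (C * S.error 0 / c₁ + Y * S.error 0) := by gcongr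
    _ = (C + |c₁| * Y) * S.error 0 := by
        rw [abs_of_pos hc₁]
        field_simp

/-- The ratio of the tail of `P` to the tail of the target density. -/
noncomputable def tailRatio (S : SteinTransport c₁ c₃ d₀ τ) (z : ℝ) : ℝ :=
  S.P.real (Set.Ioi z) / ∫ y in Set.Ioi z, pfun S.g c₁ y

theorem exists_abs_tailRatio_sub_one_le_error (c₁ c₃ d₀ A : ℝ) (hτ : 0 ≤ τ) :
    ∃ C, 0 < C ∧ ∀ S : SteinTransport c₁ c₃ d₀ τ, ∀ z, S.Regime A z →
      |S.tailRatio z - 1| ≤ C * S.error z := by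
  obtain ⟨X, hX, htail⟩ := exists_abs_measureReal_Ioi_sub_mills_mul_tailDrift_le c₁ c₃ d₀ A hτ
  obtain ⟨Y, hY, hdrift⟩ := exists_abs_exp_Gfun_mul_tailDrift_sub_le c₁ c₃ d₀ τ A
  obtain ⟨Z, hZ, hzero⟩ := exists_abs_tailDrift_zero_sub_le c₁ c₃ d₀ A hτ
  rcases le_or_gt c₁ 0 with hc₁ | hc₁
  · exact ⟨1, one_pos, fun S => (hc₁.not_gt S.drift.c₁_pos).elim⟩
  refine ⟨(X + Y + Z) / c₁, by positivity, fun S z h => ?_⟩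
  have hz := h.nonneg
  obtain ⟨q, hq⟩ : ∃ q, q = exp (-Gfun S.g z) * mills S.g z := ⟨_, rfl⟩
  have hq_pos : 0 < q := hq ▸ mul_pos (exp_pos _) (S.drift.mills_pos hz)
  have hdrift_c₁ : |exp (Gfun S.g z) * S.tailDrift z - c₁| ≤ (Y + Z) * S.error z := by
    have hzero' := (hzero S (h.mono le_rfl hz)).trans
      (mul_le_mul_of_nonneg_left (S.error_zero_le hz) hZ.le)
    calc _ ≤ _ := abs_sub_le _ (S.tailDrift 0) _
      _ ≤ Y * S.error z + Z * S.error z := add_le_add (hdrift S z h) hzero'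
      _ = _ := by ring
  have hsplit : S.P.real (Set.Ioi z) - c₁ * q =
      (S.P.real (Set.Ioi z) - mills S.g z * S.tailDrift z) +
        (exp (Gfun S.g z) * S.tailDrift z - c₁) * q := by
    rw [hq, exp_neg]
    field_simp
    ring
  rw [tailRatio, setIntegral_pfun_Ioi, mul_assoc, ← hq, div_sub_one (by positivity), abs_div,
    abs_of_pos (by positivity : 0 < c₁ * q), div_le_iff₀ (by positivity), hsplit]
  calc _ ≤ _ := abs_add_le _ _
    _ ≤ X * S.error z * q + (Y + Z) * S.error z * q := by
        rw [abs_mul, abs_of_pos hq_pos, hq]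
        gcongr
        · exact htail S z h
        · exact mul_nonneg (exp_pos _).le (mills_nonneg _ _)
    _ = (X + Y + Z) / c₁ * S.error z * (c₁ * q) := by
        field_simp
        ring

end TailRatio

lemma exists_deviation_le (c₁ c₃ d₀ τ b : ℝ) :
    ∃ ε, 0 < ε ∧ ∀ S : SteinTransport c₁ c₃ d₀ τ, ∀ z, 0 ≤ z → S.δ₁ ≤ ε →
      S.δ₁ * ((1 + z) * (1 + S.g z) ^ (τ + 1)) ≤ b → S.deviation z ≤ 1 / 2 := by
  obtain ⟨E, hE⟩ : ∃ E, E = exp (c₃ * 2) ^ τ := ⟨_, rfl⟩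
  have hE0 : 0 < E := hE ▸ by positivity
  obtain ⟨F, hF⟩ : ∃ F, F = exp (c₃ * (4 * E * b)) ^ τ := ⟨_, rfl⟩
  have hF0 : 0 < F := hF ▸ by positivity
  refine ⟨1 / (4 * E * F), by positivity, fun S z hz hε hsmall => ?_⟩
  have hδ₁ := S.δ₁_pos
  have hgz := S.drift.nonneg hz
  rw [deviation, mul_rpow (exp_pos _).le (by linarith), ← hE]
  rcases le_total z (4 * E * b) with hle | hge
  · have hFz : (1 + S.g z) ^ τ ≤ F := by
      have := S.drift.c₃_nonneg
      rw [hF]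
      exact rpow_le_rpow (by linarith) ((S.drift.one_add_le_exp hz).trans (by gcongr)) S.τ_nonneg
    calc 2 * S.δ₁ * (E * (1 + S.g z) ^ τ) ≤ 2 * (1 / (4 * E * F)) * (E * F) := by gcongr
      _ = 1 / 2 := by field_simp; norm_num
  · refine le_of_mul_le_mul_right ?_ (by linarith : 0 < 1 + z)
    calc 2 * S.δ₁ * (E * (1 + S.g z) ^ τ) * (1 + z)
        = 2 * E * (S.δ₁ * ((1 + z) * (1 + S.g z) ^ τ)) := by ring
      _ ≤ 2 * E * (S.δ₁ * ((1 + z) * (1 + S.g z) ^ (τ + 1))) := by gcongr <;> linarith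
      _ ≤ 2 * E * b := by gcongr
      _ ≤ 1 / 2 * (1 + z) := by linarith

lemma exists_regime (c₁ c₃ d₀ : ℝ) {τ : ℝ} (hτ : 0 ≤ τ) :
    ∃ A ε, 0 < ε ∧ ∀ S : SteinTransport c₁ c₃ d₀ τ, ∀ z, 0 ≤ z → S.δ₁ ≤ ε →
      S.δ * z * S.g z ^ 2 + S.δ₁ * z * S.g z ^ (τ + 1) ≤ 1 → S.Regime A z := by
  obtain ⟨X, hX, hsq⟩ :=
    IsNormalizedDrift.exists_one_add_mul_one_add_rpow_le c₁ c₃ (s := (2 : ℕ)) (by norm_num)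
  obtain ⟨Y, hY, hpow⟩ :=
    IsNormalizedDrift.exists_one_add_mul_one_add_rpow_le c₁ c₃ (by linarith : 0 ≤ τ + 1)
  obtain ⟨ε, hε, hdeviation⟩ := exists_deviation_le c₁ c₃ d₀ τ (Y * 2)
  simp only [rpow_natCast] at hsq
  refine ⟨X * 2 + Y * 2, min 1 ε, by positivity, fun S z hz hδ₁_le hsmall => ?_⟩
  have hδ := S.δ_pos
  have hδ' := S.δ_le
  have hδ₁ := S.δ₁_pos
  have hδ₁' := hδ₁_le.trans (min_le_left _ _)
  have hgz := S.drift.nonneg hz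
  have hδ_term : 0 ≤ S.δ * z * S.g z ^ 2 := by positivity
  have hδ₁_term : 0 ≤ S.δ₁ * z * S.g z ^ (τ + 1) := by positivity
  have hδ_error : S.δ * ((1 + z) * (1 + S.g z) ^ 2) ≤ X * 2 := calc
    _ ≤ S.δ * (X * (1 + z * S.g z ^ 2)) :=
        mul_le_mul_of_nonneg_left (hsq S.g S.drift z hz) hδ.le
    _ = X * (S.δ + S.δ * z * S.g z ^ 2) := by ring
    _ ≤ X * 2 := by gcongr; linarith
  have hδ₁_error : S.δ₁ * ((1 + z) * (1 + S.g z) ^ (τ + 1)) ≤ Y * 2 := calc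
    _ ≤ S.δ₁ * (Y * (1 + z * S.g z ^ (τ + 1))) :=
        mul_le_mul_of_nonneg_left (hpow S.g S.drift z hz) hδ₁.le
    _ = Y * (S.δ₁ + S.δ₁ * z * S.g z ^ (τ + 1)) := by ring
    _ ≤ Y * 2 := by gcongr; linarith
  exact ⟨hz, by linarith, by linarith,
    hdeviation S z hz (hδ₁_le.trans (min_le_right _ _)) hδ₁_error⟩

lemma exists_error_le (c₁ c₃ d₀ : ℝ) {τ : ℝ} (hτ : 0 ≤ τ) :
    ∃ C, 0 < C ∧ ∀ S : SteinTransport c₁ c₃ d₀ τ, ∀ z, 0 ≤ z →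
      S.error z ≤ C * (S.δ * (1 + z * S.g z ^ 2) + S.δ₁ * (1 + z * S.g z ^ (τ + 1))) := by
  obtain ⟨X, hX, hsq⟩ :=
    IsNormalizedDrift.exists_one_add_mul_one_add_rpow_le c₁ c₃ (s := (2 : ℕ)) (by norm_num)
  obtain ⟨Y, hY, hpow⟩ :=
    IsNormalizedDrift.exists_one_add_mul_one_add_rpow_le c₁ c₃ (by linarith : 0 ≤ τ + 1)
  simp only [rpow_natCast] at hsq
  refine ⟨X + Y, by positivity, fun S z hz => ?_⟩
  have hδ := S.δ_pos
  have hδ₁ := S.δ₁_pos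
  have hgz := S.drift.nonneg hz
  calc S.error z =
        S.δ * ((1 + z) * (1 + S.g z) ^ 2) + S.δ₁ * ((1 + z) * (1 + S.g z) ^ (τ + 1)) := by
        rw [error]; ring
    _ ≤ S.δ * ((X + Y) * (1 + z * S.g z ^ 2)) +
          S.δ₁ * ((X + Y) * (1 + z * S.g z ^ (τ + 1))) := by
        refine add_le_add
          (mul_le_mul_of_nonneg_left ((hsq S.g S.drift z hz).trans ?_) hδ.le)
          (mul_le_mul_of_nonneg_left ((hpow S.g S.drift z hz).trans ?_) hδ₁.le)
        all_goals gcongr; linarith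
    _ = _ := by ring

theorem exists_abs_tailRatio_sub_one_le (c₁ c₃ d₀ : ℝ) {τ : ℝ} (hτ : 0 ≤ τ) :
    ∃ C, 0 < C ∧ ∀ S : SteinTransport c₁ c₃ d₀ τ, ∀ z, 0 ≤ z →
      S.δ * z * S.g z ^ 2 + S.δ₁ * z * S.g z ^ (τ + 1) ≤ 1 →
      |S.tailRatio z - 1| ≤
        C * (S.δ * (1 + z * S.g z ^ 2) + S.δ₁ * (1 + z * S.g z ^ (τ + 1))) := by
  obtain ⟨A, ε, hε, hregime⟩ := exists_regime c₁ c₃ d₀ hτ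
  obtain ⟨X, hX, hratio⟩ := exists_abs_tailRatio_sub_one_le_error c₁ c₃ d₀ A hτ
  obtain ⟨Y, hY, herror⟩ := exists_error_le c₁ c₃ d₀ hτ
  obtain ⟨Z, hZ, htrivial⟩ := IsNormalizedDrift.exists_abs_div_setIntegral_pfun_sub_one_le c₁ c₃
    (by linarith : 0 ≤ τ + 1) hε
  refine ⟨X * Y + Z, by positivity, fun S z hz hsmall => ?_⟩
  have hδ := S.δ_pos
  have hδ₁ := S.δ₁_pos
  have hgz := S.drift.nonneg hz
  rcases le_total S.δ₁ ε with hle | hge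
  · calc |S.tailRatio z - 1| ≤ X * S.error z := hratio S z (hregime S z hz hle hsmall)
      _ ≤ X * (Y * (S.δ * (1 + z * S.g z ^ 2) + S.δ₁ * (1 + z * S.g z ^ (τ + 1)))) := by
          gcongr
          exact herror S z hz
      _ ≤ (X * Y + Z) * (S.δ * (1 + z * S.g z ^ 2) + S.δ₁ * (1 + z * S.g z ^ (τ + 1))) := by
          rw [← mul_assoc]
          gcongr
          linarith
  · have hδ_term : 0 ≤ S.δ * z * S.g z ^ 2 := by positivity
    calc |S.tailRatio z - 1| ≤ Z * S.δ₁ :=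
          htrivial S.g S.drift z S.δ₁ _ hz hge (by linarith) measureReal_nonneg measureReal_le_one
      _ ≤ (X * Y + Z) * (S.δ * (1 + z * S.g z ^ 2) + S.δ₁ * (1 + z * S.g z ^ (τ + 1))) := by
          gcongr
          · linarith [mul_pos hX hY]
          · have : 0 ≤ z * S.g z ^ (τ + 1) := by positivity
            nlinarith [mul_nonneg hδ₁.le this]

end SteinTransport

/-- The law of `(W, W + U (W' - W))` weighted by `K`, with `U` uniform on `(0, 1]`. -/
noncomputable def interpolationPlan {Ω : Type*} [MeasurableSpace Ω] (μ : Measure Ω)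
    (K W W' : Ω → ℝ) : Measure (ℝ × ℝ) :=
  ((μ.withDensity fun ω => ENNReal.ofReal (K ω)).prod (volume.restrict (Set.Ioc 0 1))).map
    fun p => (W p.1, W p.1 + (W' p.1 - W p.1) * p.2)

section InterpolationPlan

variable {Ω : Type*} [MeasurableSpace Ω] {μ : Measure Ω} {K W W' : Ω → ℝ}

lemma map_fst_interpolationPlan (hW : Measurable W) (hW' : Measurable W') :
    (interpolationPlan μ K W W').map Prod.fst =
      (μ.withDensity fun ω => ENNReal.ofReal (K ω)).map W := by
  rw [interpolationPlan, Measure.map_map measurable_fst (by fun_prop)]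
  change Measure.map (W ∘ Prod.fst) _ = _
  rw [← Measure.map_map hW measurable_fst, Measure.map_fst_prod, Measure.restrict_apply_univ,
    Real.volume_Ioc, sub_zero, ENNReal.ofReal_one, one_smul]

lemma ae_interpolationPlan_abs_snd_sub_fst_le {δ : ℝ} (hW : Measurable W)
    (hW' : Measurable W') (hδ : ∀ ω, |W' ω - W ω| ≤ δ) :
    ∀ᵐ p ∂interpolationPlan μ K W W', |p.2 - p.1| ≤ δ := by
  rw [interpolationPlan, ae_map_iff (by fun_prop) (measurableSet_le (by fun_prop) (by fun_prop))]
  filter_upwards [Measure.quasiMeasurePreserving_snd.ae (ae_restrict_mem measurableSet_Ioc)]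
    with p hp
  rw [add_sub_cancel_left, abs_mul, abs_of_pos hp.1]
  exact (mul_le_of_le_one_right (abs_nonneg _) hp.2).trans (hδ p.1)

lemma integral_snd_interpolationPlan (hW : Measurable W) (hW' : Measurable W')
    (hK : Measurable K) (hKint : Integrable K μ) (hK0 : 0 ≤ᵐ[μ] K) {φ : ℝ → ℝ} {B : ℝ}
    (hφ : Measurable φ) (hφB : ∀ x, ‖φ x‖ ≤ B) :
    ∫ p, φ p.2 ∂interpolationPlan μ K W W' =
      ∫ ω, K ω * (∫ u in (0 : ℝ)..1, φ (W ω + (W' ω - W ω) * u)) ∂μ := by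
  have : IsFiniteMeasure (μ.withDensity fun ω => ENNReal.ofReal (K ω)) :=
    isFiniteMeasure_withDensity_ofReal hKint.2
  have hmeas : Measurable fun p : Ω × ℝ => φ (W p.1 + (W' p.1 - W p.1) * p.2) := by fun_prop
  have hsnd : Measurable fun p : ℝ × ℝ => φ p.2 := by fun_prop
  rw [interpolationPlan, integral_map (by fun_prop) hsnd.aestronglyMeasurable,
    integral_prod _ (.of_bound hmeas.aestronglyMeasurable B (.of_forall fun _ => hφB _)),
    integral_withDensity_eq_integral_toReal_smul hK.ennreal_ofReal
      (.of_forall fun _ => ENNReal.ofReal_lt_top)]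
  refine integral_congr_ae (hK0.mono fun ω hω => ?_)
  simp only [ENNReal.toReal_ofReal hω, smul_eq_mul, intervalIntegral.integral_of_le zero_le_one]

end InterpolationPlan

lemma map_withDensity_ofReal_eq_of_condExp_eq_comp {Ω : Type*} {mΩ : MeasurableSpace Ω}
    {μ : Measure Ω} [IsFiniteMeasure μ] {K W : Ω → ℝ} {κ : ℝ → ℝ} (hW : Measurable W)
    (hK : Integrable K μ) (hK0 : 0 ≤ᵐ[μ] K) (hκ : Measurable κ)
    (hκK : μ[K | MeasurableSpace.comap W Real.measurableSpace] = κ ∘ W) :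
    (μ.withDensity fun ω => ENNReal.ofReal (K ω)).map W =
      (μ.map W).withDensity fun w => ENNReal.ofReal (κ w) := by
  have hκint : Integrable (κ ∘ W) μ := hκK ▸ integrable_condExp
  have hκ0 : 0 ≤ᵐ[μ] κ ∘ W := hκK ▸ condExp_nonneg hK0
  ext s hs
  have hWs : MeasurableSet (W ⁻¹' s) := hW hs
  rw [Measure.map_apply hW hs, withDensity_apply _ hWs, withDensity_apply _ hs,
    setLIntegral_map hs hκ.ennreal_ofReal hW,
    ← ofReal_integral_eq_lintegral_ofReal hK.integrableOn (ae_restrict_of_ae hK0),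
    ← setIntegral_condExp hW.comap_le hK ⟨s, hs, rfl⟩, hκK,
    ofReal_integral_eq_lintegral_ofReal hκint.integrableOn (ae_restrict_of_ae hκ0)]
  rfl

lemma eq_withDensity_ofReal_of_integral_eq {ν μ : Measure ℝ} [IsFiniteMeasure ν]
    [IsLocallyFiniteMeasure μ] {r : ℝ → ℝ} {B : ℝ} (hr : Measurable r) (hr0 : ∀ x, 0 ≤ r x)
    (hrB : ∀ x, r x ≤ B)
    (hν : ∀ φ : CompactlySupportedContinuousMap ℝ ℝ, ∫ x, φ x ∂ν = ∫ x, φ x * r x ∂μ) :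
    ν = μ.withDensity fun x => ENNReal.ofReal (r x) := by
  have : IsLocallyFiniteMeasure (μ.withDensity fun x => ENNReal.ofReal (r x)) := by
    have := IsLocallyFiniteMeasure.withDensity_ofReal (μ := μ) (continuous_const (y := B))
    exact Measure.isLocallyFiniteMeasure_of_le
      (withDensity_mono (.of_forall fun x => ENNReal.ofReal_le_ofReal (hrB x)))
  refine Measure.ext_of_integral_eq_on_compactlySupported fun φ => ?_
  rw [hν, integral_withDensity_eq_integral_toReal_smul hr.ennreal_ofReal
    (.of_forall fun _ => ENNReal.ofReal_lt_top)]
  simp only [ENNReal.toReal_ofReal (hr0 _), smul_eq_mul, mul_comm]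

lemma hasDerivAt_setIntegral_Iic {φ : ℝ → ℝ} (hφ : Continuous φ) (hint : Integrable φ) (x : ℝ) :
    HasDerivAt (fun x => ∫ t in Set.Iic x, φ t) (φ x) x := by
  have hsplit (x : ℝ) : ∫ t in Set.Iic x, φ t = (∫ t in (0 : ℝ)..x, φ t) + ∫ t in Set.Iic 0, φ t :=
    sub_eq_iff_eq_add.1
      (intervalIntegral.integral_Iic_sub_Iic hint.integrableOn hint.integrableOn)
  rw [funext hsplit]
  exact (intervalIntegral.integral_hasDerivAt_right (hφ.intervalIntegrable _ _)
    (hφ.stronglyMeasurableAtFilter _ _) hφ.continuousAt).add_const _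

lemma khatOneSC_eq {Ω : Type} (W W' Gv : Ω → ℝ) {δ : ℝ} {ω : Ω} (hω : |W' ω - W ω| ≤ δ) :
    KhatOneSC W W' Gv δ ω = Gv ω * (W' ω - W ω) := by
  obtain ⟨hlow, hupp⟩ := abs_le.1 hω
  have hδ : -δ ≤ δ := neg_le_self ((abs_nonneg _).trans hω)
  rw [KhatOneSC, intervalIntegral.integral_const_mul, intervalIntegral.integral_of_le hδ,
    ← integral_Icc_eq_integral_Ioc]
  congr 1
  rcases le_or_gt 0 (W' ω - W ω) with hD | hD
  · have hind (t : ℝ) : ((if 0 ≤ t ∧ t ≤ W' ω - W ω then (1 : ℝ) else 0) -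
        if W' ω - W ω ≤ t ∧ t < 0 then (1 : ℝ) else 0) =
          (Set.Icc 0 (W' ω - W ω)).indicator (fun _ => 1) t := by
      have hneg : ¬(W' ω - W ω ≤ t ∧ t < 0) := fun h => (h.1.trans_lt h.2).not_ge hD
      simp only [if_neg hneg, sub_zero, Set.indicator_apply, Set.mem_Icc]
    have hsub : Set.Icc 0 (W' ω - W ω) ⊆ Set.Icc (-δ) δ := Set.Icc_subset_Icc (by linarith) hupp
    simp only [hind]
    rw [setIntegral_indicator measurableSet_Icc, Set.inter_eq_self_of_subset_right hsub,
      setIntegral_const, Real.volume_real_Icc_of_le hD, smul_eq_mul, mul_one, sub_zero]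
  · have hind (t : ℝ) : ((if 0 ≤ t ∧ t ≤ W' ω - W ω then (1 : ℝ) else 0) -
        if W' ω - W ω ≤ t ∧ t < 0 then (1 : ℝ) else 0) =
          (Set.Ico (W' ω - W ω) 0).indicator (fun _ => -1) t := by
      have hpos : ¬(0 ≤ t ∧ t ≤ W' ω - W ω) := fun h => (h.1.trans h.2).not_gt hD
      simp only [if_neg hpos, zero_sub, Set.indicator_apply, Set.mem_Ico, neg_ite, neg_zero]
    have hsub : Set.Ico (W' ω - W ω) 0 ⊆ Set.Icc (-δ) δ := fun t ht =>
      ⟨hlow.trans ht.1, by linarith [ht.2]⟩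
    simp only [hind]
    rw [setIntegral_indicator measurableSet_Ico, Set.inter_eq_self_of_subset_right hsub,
      setIntegral_const, Real.volume_real_Ico_of_le hD.le, smul_eq_mul, mul_neg_one, zero_sub,
      neg_neg]

/-- A `g`-Stein coupling `(W, W', Gv)` with `|W' - W| ≤ δ` whose kernel `K̂₁` is nonnegative and
has conditional mean given `W` at most `d₀` and within `δ₁ (|g(W)|^τ + 1)` of `1`, the target
density `pfun g c₁` being normalized. -/
structure BoundedSteinCoupling {Ω : Type} [MeasurableSpace Ω] (μ : Measure Ω) (W W' Gv : Ω → ℝ)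
    (g : ℝ → ℝ) (c₁ c₃ d₀ τ δ δ₁ : ℝ) : Prop where
  measurable_W : Measurable W
  measurable_W' : Measurable W'
  measurable_Gv : Measurable Gv
  drift : IsNormalizedDrift g c₁ c₃
  δ_pos : 0 < δ
  δ₁_pos : 0 < δ₁
  integrable_g : Integrable (fun ω => g (W ω)) μ
  steinCoupling : SteinCoupling μ W W' Gv g
  abs_sub_le : ∀ ω, |W' ω - W ω| ≤ δ
  khat_nonneg : ∀ᵐ ω ∂μ, 0 ≤ KhatOneSC W W' Gv δ ω
  abs_condExp_sub_one_le : ∀ᵐ ω ∂μ,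
    |(μ[KhatOneSC W W' Gv δ | MeasurableSpace.comap W Real.measurableSpace]) ω - 1|
      ≤ δ₁ * (|g (W ω)| ^ τ + 1)
  condExp_le : ∀ᵐ ω ∂μ,
    (μ[KhatOneSC W W' Gv δ | MeasurableSpace.comap W Real.measurableSpace]) ω ≤ d₀

namespace BoundedSteinCoupling

variable {Ω : Type} [MeasurableSpace Ω] {μ : Measure Ω} {W W' Gv : Ω → ℝ} {g : ℝ → ℝ}
  {c₁ c₃ d₀ τ δ δ₁ : ℝ}

lemma khat_eq (h : BoundedSteinCoupling μ W W' Gv g c₁ c₃ d₀ τ δ δ₁) :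
    KhatOneSC W W' Gv δ = fun ω => Gv ω * (W' ω - W ω) :=
  funext fun ω => khatOneSC_eq W W' Gv (h.abs_sub_le ω)

lemma measurable_khat (h : BoundedSteinCoupling μ W W' Gv g c₁ c₃ d₀ τ δ δ₁) :
    Measurable (KhatOneSC W W' Gv δ) :=
  h.khat_eq ▸ h.measurable_Gv.mul (h.measurable_W'.sub h.measurable_W)

lemma integral_g (h : BoundedSteinCoupling μ W W' Gv g c₁ c₃ d₀ τ δ δ₁) :
    ∫ ω, g (W ω) ∂μ = 0 := by
  simpa using (h.steinCoupling (fun _ => 1) (differentiable_const 1) (by simp)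
    (by simpa using h.integrable_g)).symm

lemma integral_abs_g_eq_zero (h : BoundedSteinCoupling μ W W' Gv g c₁ c₃ d₀ τ δ δ₁) (hδ : δ ≤ 1)
    (hW : ∀ᵐ ω ∂μ, 2 ≤ |W ω|) : ∫ ω, |g (W ω)| ∂μ = 0 := by
  obtain ⟨f, hf⟩ : ∃ f : ℝ → ℝ, f = fun x => 2 * smoothTransition x - 1 := ⟨_, rfl⟩
  have hone {x : ℝ} (hx : 1 ≤ x) : f x = 1 := by
    simp only [hf, smoothTransition.one_of_one_le hx]; norm_num
  have hneg {x : ℝ} (hx : x ≤ 0) : f x = -1 := by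
    simp only [hf, smoothTransition.zero_of_nonpos hx]; norm_num
  have hconst : (fun ω => Gv ω * f (W' ω) - Gv ω * f (W ω)) =ᵐ[μ] 0 := by
    filter_upwards [hW] with ω hω
    obtain ⟨hlow, hupp⟩ := abs_le.1 (h.abs_sub_le ω)
    rcases le_abs.1 hω with hω | hω
    · simp [hone (show 1 ≤ W ω by linarith), hone (show 1 ≤ W' ω by linarith)]
    · simp [hneg (show W ω ≤ 0 by linarith), hneg (show W' ω ≤ 0 by linarith)]
  have habs : (fun ω => f (W ω) * g (W ω)) =ᵐ[μ] fun ω => |g (W ω)| := by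
    filter_upwards [hW] with ω hω
    rcases le_abs.1 hω with hω | hω
    · rw [hone (by linarith), one_mul, abs_of_nonneg (h.drift.nonneg (by linarith))]
    · rw [hneg (by linarith), neg_one_mul, abs_of_nonpos (h.drift.nonpos (by linarith))]
  have hdiff : Differentiable ℝ f := hf ▸
    ((smoothTransition.contDiff.differentiable one_ne_zero).const_mul 2).sub_const 1
  rw [← integral_congr_ae habs, ← h.steinCoupling f hdiff
    ((integrable_zero _ _ _).congr hconst.symm) (h.integrable_g.abs.congr habs.symm),
    integral_congr_ae hconst, integral_zero']

-- If `K̂₁` were not integrable, its conditional expectation would be `0` by convention, and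
-- `abs_condExp_sub_one_le` would keep `|W|` away from `0`; the Stein identity for a smoothed sign
-- function then contradicts this.
lemma integrable_khat [IsProbabilityMeasure μ]
    (h : BoundedSteinCoupling μ W W' Gv g c₁ c₃ d₀ τ δ δ₁) (hτ : 0 ≤ τ) (hδ : δ ≤ 1)
    (hδ₁ : δ₁ * (exp (c₃ * 2) ^ τ + 1) < 1) : Integrable (KhatOneSC W W' Gv δ) μ := by
  by_contra hK
  have hlarge : ∀ᵐ ω ∂μ, exp (c₃ * 2) < |g (W ω)| := by
    filter_upwards [h.abs_condExp_sub_one_le] with ω hω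
    by_contra! hle
    rw [condExp_of_not_integrable hK, Pi.zero_apply, zero_sub, abs_neg, abs_one] at hω
    have hδ₁0 := h.δ₁_pos
    have : δ₁ * (|g (W ω)| ^ τ + 1) ≤ δ₁ * (exp (c₃ * 2) ^ τ + 1) := by gcongr
    linarith
  have hW : ∀ᵐ ω ∂μ, 2 ≤ |W ω| := by
    filter_upwards [hlarge] with ω hω
    by_contra! hlt
    have hc₃ := h.drift.c₃_nonneg
    have : exp (c₃ * |W ω|) ≤ exp (c₃ * 2) := by gcongr
    linarith [h.drift.one_add_abs_le_exp (W ω)]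
  have hzero : ∀ᵐ ω ∂μ, |g (W ω)| = 0 :=
    (integral_eq_zero_iff_of_nonneg (fun _ => abs_nonneg _) h.integrable_g.abs).1
      (h.integral_abs_g_eq_zero hδ hW)
  obtain ⟨ω, hω, hω0⟩ := (hlarge.and hzero).exists
  exact (exp_pos _).not_gt (hω0 ▸ hω)

lemma integrable_g_map (h : BoundedSteinCoupling μ W W' Gv g c₁ c₃ d₀ τ δ δ₁) :
    Integrable g (μ.map W) :=
  (integrable_map_measure h.drift.continuous.aestronglyMeasurable h.measurable_W.aemeasurable).2
    h.integrable_g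

lemma integral_g_map (h : BoundedSteinCoupling μ W W' Gv g c₁ c₃ d₀ τ δ δ₁) :
    ∫ w, g w ∂μ.map W = 0 := by
  rw [integral_map h.measurable_W.aemeasurable h.drift.continuous.aestronglyMeasurable,
    h.integral_g]

lemma integral_snd_interpolationPlan (h : BoundedSteinCoupling μ W W' Gv g c₁ c₃ d₀ τ δ δ₁)
    (hK : Integrable (KhatOneSC W W' Gv δ) μ) {φ : ℝ → ℝ} {B : ℝ} (hφ : Continuous φ)
    (hφint : Integrable φ) (hφB : ∀ x, ‖φ x‖ ≤ B) :
    ∫ p, φ p.2 ∂interpolationPlan μ (KhatOneSC W W' Gv δ) W W' =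
      ∫ ω, (∫ t in Set.Iic (W ω), φ t) * g (W ω) ∂μ := by
  obtain ⟨F, hF⟩ : ∃ F : ℝ → ℝ, F = fun x => ∫ t in Set.Iic x, φ t := ⟨_, rfl⟩
  have hderiv (x : ℝ) : HasDerivAt F (φ x) x := hF ▸ hasDerivAt_setIntegral_Iic hφ hφint x
  have hdiff : Differentiable ℝ F := fun x => (hderiv x).differentiableAt
  have hFbound (x : ℝ) : ‖F x‖ ≤ ∫ t, ‖φ t‖ := hF ▸
    (norm_integral_le_integral_norm _).trans
      (setIntegral_le_integral hφint.norm (.of_forall fun _ => norm_nonneg _))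
  have hlip (x y : ℝ) : ‖F y - F x‖ ≤ B * ‖y - x‖ :=
    convex_univ.norm_image_sub_le_of_norm_hasDerivWithin_le (fun t _ => (hderiv t).hasDerivWithinAt)
      (fun t _ => hφB t) (Set.mem_univ x) (Set.mem_univ y)
  have hincr (ω : Ω) : KhatOneSC W W' Gv δ ω * ∫ u in (0 : ℝ)..1, φ (W ω + (W' ω - W ω) * u) =
      Gv ω * F (W' ω) - Gv ω * F (W ω) := by
    rw [khatOneSC_eq W W' Gv (h.abs_sub_le ω), mul_assoc,
      intervalIntegral.mul_integral_comp_add_mul, ← mul_sub, hF,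
      intervalIntegral.integral_Iic_sub_Iic hφint.integrableOn hφint.integrableOn]
    simp only [mul_zero, add_zero, mul_one, add_sub_cancel]
  have hintL : Integrable (fun ω => Gv ω * F (W' ω) - Gv ω * F (W ω)) μ := by
    refine (hK.norm.const_mul B).mono' ?_ (.of_forall fun ω => ?_)
    · exact ((h.measurable_Gv.mul (hdiff.continuous.measurable.comp h.measurable_W')).sub
        (h.measurable_Gv.mul (hdiff.continuous.measurable.comp
          h.measurable_W))).aestronglyMeasurable
    · rw [← mul_sub, khatOneSC_eq W W' Gv (h.abs_sub_le ω), norm_mul, norm_mul]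
      linarith [mul_le_mul_of_nonneg_left (hlip (W ω) (W' ω)) (norm_nonneg (Gv ω))]
  have hintR : Integrable (fun ω => F (W ω) * g (W ω)) μ :=
    h.integrable_g.bdd_mul (hdiff.continuous.measurable.comp h.measurable_W).aestronglyMeasurable
      (.of_forall fun ω => hFbound (W ω))
  rw [_root_.integral_snd_interpolationPlan h.measurable_W h.measurable_W' h.measurable_khat hK
    h.khat_nonneg hφ.measurable hφB, integral_congr_ae (.of_forall hincr),
    h.steinCoupling F hdiff hintL hintR, hF]

lemma integral_mul_setIntegral_Ioi_map [IsFiniteMeasure μ]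
    (h : BoundedSteinCoupling μ W W' Gv g c₁ c₃ d₀ τ δ δ₁) {φ : ℝ → ℝ} (hφ : Continuous φ)
    (hφint : Integrable φ) :
    ∫ x, φ x * ∫ w in Set.Ioi x, g w ∂μ.map W = ∫ ω, (∫ t in Set.Iic (W ω), φ t) * g (W ω) ∂μ := by
  have hF : Continuous fun w => ∫ t in Set.Iic w, φ t :=
    continuous_iff_continuousAt.2 fun w => (hasDerivAt_setIntegral_Iic hφ hφint w).continuousAt
  rw [integral_mul_setIntegral_Ioi hφint h.integrable_g_map]
  simp only [← integral_Iic_eq_integral_Iio]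
  exact integral_map h.measurable_W.aemeasurable
    (hF.mul h.drift.continuous).aestronglyMeasurable

lemma map_snd_interpolationPlan [IsProbabilityMeasure μ]
    (h : BoundedSteinCoupling μ W W' Gv g c₁ c₃ d₀ τ δ δ₁)
    (hK : Integrable (KhatOneSC W W' Gv δ) μ) :
    (interpolationPlan μ (KhatOneSC W W' Gv δ) W W').map Prod.snd =
      volume.withDensity fun x => ENNReal.ofReal (∫ w in Set.Ioi x, g w ∂μ.map W) := by
  have : IsFiniteMeasure (interpolationPlan μ (KhatOneSC W W' Gv δ) W W') :=
    have := isFiniteMeasure_withDensity_ofReal hK.2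
    Measure.isFiniteMeasure_map _ _
  have hbound (x : ℝ) : ∫ w in Set.Ioi x, g w ∂μ.map W ≤ ∫ w, ‖g w‖ ∂μ.map W :=
    (le_abs_self _).trans ((norm_integral_le_integral_norm _).trans
      (setIntegral_le_integral h.integrable_g_map.norm (.of_forall fun _ => norm_nonneg _)))
  refine eq_withDensity_ofReal_of_integral_eq
    (measurable_setIntegral_Ioi h.drift.continuous.measurable)
    (h.drift.setIntegral_Ioi_nonneg h.integrable_g_map h.integral_g_map) hbound fun φ => ?_
  have hφ : Continuous φ := φ.continuous
  have hφint : Integrable φ := hφ.integrable_of_hasCompactSupport φ.hasCompactSupport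
  obtain ⟨B, hB⟩ := φ.hasCompactSupport.exists_bound_of_continuous hφ
  rw [integral_map measurable_snd.aemeasurable hφ.aestronglyMeasurable,
    h.integral_snd_interpolationPlan hK hφ hφint hB, h.integral_mul_setIntegral_Ioi_map hφ hφint]

lemma exists_steinTransport [IsProbabilityMeasure μ]
    (h : BoundedSteinCoupling μ W W' Gv g c₁ c₃ d₀ τ δ δ₁) (hτ : 0 ≤ τ) (hδ : δ ≤ 1 / 4)
    (hδ₁ : δ₁ * (exp (c₃ * 2) ^ τ + 1) < 1) :
    ∃ S : SteinTransport c₁ c₃ d₀ τ, S.g = g ∧ S.P = μ.map W ∧ S.δ = δ ∧ S.δ₁ = δ₁ := by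
  have hK := h.integrable_khat hτ (by linarith) hδ₁
  have hW := h.measurable_W
  have hg := h.drift.continuous.measurable
  obtain ⟨κ, hκ, hκK⟩ := (stronglyMeasurable_condExp (μ := μ) (f := KhatOneSC W W' Gv δ)
    (m := MeasurableSpace.comap W Real.measurableSpace)).exists_eq_measurable_comp
  have hκm := hκ.measurable
  have hκ0 : ∀ᵐ ω ∂μ, 0 ≤ κ (W ω) := by
    have := condExp_nonneg (m := MeasurableSpace.comap W Real.measurableSpace) h.khat_nonneg
    rwa [hκK] at this
  have hκ1 := h.abs_condExp_sub_one_le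
  have hκd := h.condExp_le
  rw [hκK] at hκ1 hκd
  exact ⟨{
    g := g
    P := μ.map W
    κ := κ
    plan := interpolationPlan μ (KhatOneSC W W' Gv δ) W W'
    δ := δ
    δ₁ := δ₁
    drift := h.drift
    τ_nonneg := hτ
    isProbabilityMeasure_P := Measure.isProbabilityMeasure_map hW.aemeasurable
    integrable_g := h.integrable_g_map
    integral_g := h.integral_g_map
    measurable_κ := hκm
    κ_nonneg := (ae_map_iff hW.aemeasurable (measurableSet_le measurable_const hκm)).2 hκ0
    κ_le := (ae_map_iff hW.aemeasurable (measurableSet_le hκm measurable_const)).2 hκd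
    abs_κ_sub_one_le := (ae_map_iff hW.aemeasurable
      (measurableSet_le (by fun_prop) (by fun_prop))).2 hκ1
    δ_pos := h.δ_pos
    δ_le := hδ
    δ₁_pos := h.δ₁_pos
    map_fst_plan := (map_fst_interpolationPlan hW h.measurable_W').trans
      (map_withDensity_ofReal_eq_of_condExp_eq_comp hW hK h.khat_nonneg hκm hκK)
    map_snd_plan := h.map_snd_interpolationPlan hK
    abs_snd_sub_fst_le := ae_interpolationPlan_abs_snd_sub_fst_le hW h.measurable_W' h.abs_sub_le
    }, rfl, rfl, rfl, rfl⟩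

lemma exists_abs_tail_div_sub_one_le (c₁ c₃ d₀ : ℝ) (hτ : 0 ≤ τ) :
    ∃ C, 0 < C ∧ ∀ (Ω : Type) [MeasurableSpace Ω] (μ : Measure Ω) [IsProbabilityMeasure μ]
      (W W' Gv : Ω → ℝ) (g : ℝ → ℝ) (δ δ₁ : ℝ),
      BoundedSteinCoupling μ W W' Gv g c₁ c₃ d₀ τ δ δ₁ →
      δ ≤ 1 / 4 → δ₁ * (exp (c₃ * 2) ^ τ + 1) < 1 →
      ∀ z, 0 ≤ z → δ * z * g z ^ 2 + δ₁ * z * g z ^ (τ + 1) ≤ 1 →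
        |μ.real {ω | z < W ω} / (∫ y in Set.Ioi z, pfun g c₁ y) - 1|
          ≤ C * (δ * (1 + z * g z ^ 2) + δ₁ * (1 + z * g z ^ (τ + 1))) := by
  obtain ⟨C, hC, hratio⟩ := SteinTransport.exists_abs_tailRatio_sub_one_le c₁ c₃ d₀ hτ
  refine ⟨C, hC, fun Ω _ μ _ W W' Gv g δ δ₁ h hδ hδ₁ z hz hη => ?_⟩
  obtain ⟨S, rfl, hP, rfl, rfl⟩ := h.exists_steinTransport hτ hδ hδ₁
  have htail : S.P.real (Set.Ioi z) = μ.real {ω | z < W ω} := by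
    rw [hP, map_measureReal_apply h.measurable_W measurableSet_Ioi]
    rfl
  exact htail ▸ hratio S z hz hη

end BoundedSteinCoupling

theorem stmt_2_general (c₁ c₃ d₀ : ℝ) {τ : ℝ} (hτ : 0 ≤ τ) :
    ∃ C, 0 < C ∧ ∀ (Ω : Type) [MeasurableSpace Ω] (μ : Measure Ω) [IsProbabilityMeasure μ]
      (W W' Gv : Ω → ℝ) (g : ℝ → ℝ) (δ δ₁ : ℝ),
      BoundedSteinCoupling μ W W' Gv g c₁ c₃ d₀ τ δ δ₁ →
      ∀ z, 0 ≤ z → δ * z * g z ^ 2 + δ₁ * z * g z ^ (τ + 1) ≤ 1 →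
        |μ.real {ω | z < W ω} / (∫ y in Set.Ioi z, pfun g c₁ y) - 1|
          ≤ C * (δ * (1 + z * g z ^ 2) + δ₁ * (1 + z * g z ^ (τ + 1))) := by
  obtain ⟨ε, hε⟩ : ∃ ε, ε = (exp (c₃ * 2) ^ τ + 1)⁻¹ := ⟨_, rfl⟩
  have hpos : 0 < exp (c₃ * 2) ^ τ := rpow_pos_of_pos (exp_pos _) _
  have hε0 : 0 < ε := hε ▸ inv_pos.2 (by linarith)
  obtain ⟨C₀, hC₀, hsmall⟩ :=
    BoundedSteinCoupling.exists_abs_tail_div_sub_one_le c₁ c₃ d₀ hτ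
  obtain ⟨C₁, hC₁, hδ_large⟩ := IsNormalizedDrift.exists_abs_div_setIntegral_pfun_sub_one_le c₁ c₃
    (zero_le_two (α := ℝ)) (one_div_pos.2 (zero_lt_four (α := ℝ)))
  obtain ⟨C₂, hC₂, hδ₁_large⟩ := IsNormalizedDrift.exists_abs_div_setIntegral_pfun_sub_one_le c₁ c₃
    (add_nonneg hτ zero_le_one) hε0
  refine ⟨C₀ + C₁ + C₂, by positivity, fun Ω _ μ _ W W' Gv g δ δ₁ h z hz hη => ?_⟩
  have hδ := h.δ_pos
  have hδ₁ := h.δ₁_pos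
  have hgz := h.drift.nonneg hz
  have hη₁ : 0 ≤ δ * z * g z ^ 2 := by positivity
  have hη₂ : 0 ≤ δ₁ * z * g z ^ (τ + 1) := by positivity
  have hprob := measureReal_nonneg (μ := μ) (s := {ω | z < W ω})
  have hprob1 := measureReal_le_one (μ := μ) (s := {ω | z < W ω})
  obtain ⟨η, hη_def⟩ : ∃ η, η = δ * (1 + z * g z ^ 2) + δ₁ * (1 + z * g z ^ (τ + 1)) := ⟨_, rfl⟩
  have hδη : δ ≤ η := by linarith
  have hδ₁η : δ₁ ≤ η := by linarith
  have hη0 : 0 < η := hδ.trans_le hδη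
  rw [← hη_def]
  rcases le_or_gt (1 / 4) δ with hδ4 | hδ4
  · calc _ ≤ C₁ * δ := hδ_large g h.drift z δ _ hz hδ4 (by rw [rpow_two]; linarith) hprob hprob1
      _ ≤ (C₀ + C₁ + C₂) * η := by gcongr; linarith
  rcases le_or_gt ε δ₁ with hδ₁ε | hδ₁ε
  · calc _ ≤ C₂ * δ₁ := hδ₁_large g h.drift z δ₁ _ hz hδ₁ε (by linarith) hprob hprob1
      _ ≤ (C₀ + C₁ + C₂) * η := by gcongr; linarith
  have hδ₁_small : δ₁ * (exp (c₃ * 2) ^ τ + 1) < 1 := calc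
    δ₁ * (exp (c₃ * 2) ^ τ + 1) < ε * (exp (c₃ * 2) ^ τ + 1) := by gcongr
    _ = 1 := by rw [hε, inv_mul_cancel₀ (by linarith)]
  calc _ ≤ C₀ * η := hη_def ▸ hsmall Ω μ W W' Gv g δ δ₁ h hδ4.le hδ₁_small z hz hη
    _ ≤ (C₀ + C₁ + C₂) * η := by gcongr; linarith

theorem stmt_2 (c₁ c₂ c₃ d₀ d₁ τ₁ μ₁ : ℝ)
    (hd₀ : 1 ≤ d₀) (hd₁ : 0 < d₁) (hτ₁ : 0 < τ₁) :
    ∃ C : ℝ, 0 < C ∧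
      ∀ (Ω : Type) [MeasurableSpace Ω] (μ : Measure Ω),
        IsProbabilityMeasure μ →
        ∀ (W W' Gv : Ω → ℝ) (g : ℝ → ℝ) (δ δ₁ : ℝ),
        Measurable W → Measurable W' → Measurable Gv →
        GCond g c₂ c₃ →
        0 < c₁ → (∫ y : ℝ, pfun g c₁ y) = 1 →
        max (g 1) |g (-1)| = μ₁ →
        0 < δ → 0 < δ₁ →
        SteinCoupling μ W W' Gv g →
        (∀ ω, |W' ω - W ω| ≤ δ) →
        -- `K̂₁ ≥ 0`
        (∀ᵐ ω ∂μ, 0 ≤ KhatOneSC W W' Gv δ ω) →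
        -- condition (2.6)
        (∀ᵐ ω ∂μ,
          |(μ[KhatOneSC W W' Gv δ | MeasurableSpace.comap W Real.measurableSpace]) ω - 1|
            ≤ δ₁ * (|g (W ω)| ^ τ₁ + 1)) →
        -- condition (2.8)
        (∀ᵐ ω ∂μ,
          (μ[KhatOneSC W W' Gv δ | MeasurableSpace.comap W Real.measurableSpace]) ω ≤ d₀) →
        -- condition (2.9)
        (∀ᵐ ω ∂μ, δ * |g (W ω)| ≤ d₁) →
        ∀ z : ℝ, 0 ≤ z →
          δ * z * g z ^ 2 + δ₁ * z * g z ^ (τ₁ + 1) ≤ 1 →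
          |(μ {ω | z < W ω}).toReal / (∫ y in Set.Ioi z, pfun g c₁ y) - 1|
            ≤ C * (δ * (1 + z * g z ^ 2) + δ₁ * (1 + z * g z ^ (τ₁ + 1))) := by
  obtain ⟨C, hC, hbound⟩ := stmt_2_general c₁ c₃ d₀ hτ₁.le
  refine ⟨C, hC, fun Ω _ μ _ W W' Gv g δ δ₁ hW hW' hGv hg hc₁ hp _ hδ hδ₁ hstein hsub hK hK1 hKd
    hgd => ?_⟩
  have hint : Integrable (fun ω => g (W ω)) μ :=
    .of_bound (hg.mono.measurable.comp hW).aestronglyMeasurable (d₁ / δ) <| hgd.mono fun ω hω =>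
      (le_div_iff₀' hδ).2 hω
  exact hbound Ω μ W W' Gv g δ δ₁
    ⟨hW, hW', hGv, ⟨⟨hg.diff, hg.mono, hg.zero, hg.derivBound⟩, hc₁, hp⟩, hδ, hδ₁, hint, hstein,
      hsub, hK, hK1, hKd⟩
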